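/- arXiv:2506.04187 — 6 statements merged into one kernel-verified Lean document; each statement's English description precedes it below -/
import Mathlib

section
/- Let γ=(γ_q)_{q≥1} be a sequence of real numbers and ψ:ℕ→[0,1/2]. For each q∈ℕ define A_q = {α ∈ [0,1] : ‖qα − γ_q‖ < ψ(q)}. Then for every nonempty open set U ⊆ [0,1] there exists q₀ = q₀(U) > 0 such that meas(A_q ∩ U) ≥ (1/2)·meas(A_q)·meas(U) for all q ≥ q₀. -/
open MeasureTheory ENNReal

/-- Distance from a real number to the nearest integer. -/
noncomputable def distNearestInt (x : ℝ) : ℝ := |x - round x|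

/-!
Split `ℝ` into cells of length `1 / q`. The set of `α` with `‖q * α - g‖ < p` has period `1 / q`, so
it meets every cell in the same measure, and its share of any union of cells is its share of
`[0, 1]`. An open set `W` is filled by the cells it contains up to an arbitrarily small measure once
`q` is large, and how large does not depend on `g` or `p`.
-/

open Filter Function Set Topology

/-- The `k`-th cell of the grid of step `T`, a fundamental domain for sets of period `T > 0`. Cells
are left-open to match `Monotone.biUnion_Ico_Ioc_map_succ`. -/
def gridCell (T : ℝ) (k : ℤ) : Set ℝ := Ioc (k • T) ((k + 1) • T)

/-- The union of the cells of the grid of step `T` whose indices lie in `S`. Sets of period `T` fill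
the same proportion of every such union. -/
def gridUnion (T : ℝ) (S : Set ℤ) : Set ℝ := ⋃ k ∈ S, gridCell T k

/-- The inner approximation of `W` by the cells of the grid of step `T` contained in `W`. -/
def gridInterior (T : ℝ) (W : Set ℝ) : Set ℝ := gridUnion T {k | gridCell T k ⊆ W}

section Grid

variable {T : ℝ}

theorem measurableSet_gridCell (T : ℝ) (k : ℤ) : MeasurableSet (gridCell T k) :=
  measurableSet_Ioc

theorem gridCell_eq_preimage (T : ℝ) (k : ℤ) :
    gridCell T k = (· + -(k • T)) ⁻¹' Ioc 0 T := by
  rw [preimage_add_const_Ioc, sub_neg_eq_add, sub_neg_eq_add, zero_add, add_comm T, gridCell,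
    add_one_zsmul]

theorem dist_lt_of_mem_gridCell {k : ℤ} {x y : ℝ} (hx : x ∈ gridCell T k)
    (hy : y ∈ gridCell T k) : dist x y < T := by
  rw [gridCell, add_one_zsmul, mem_Ioc] at hx hy
  rw [Real.dist_eq, abs_sub_lt_iff]
  constructor <;> linarith

theorem gridUnion_Ico_natCast (hT : 0 ≤ T) (n : ℕ) :
    gridUnion T (Ico 0 n) = Ioc 0 (n • T) := by
  have hmono : Monotone fun k : ℤ => k • T := fun _ _ h => zsmul_le_zsmul_left hT h
  simpa [gridUnion, gridCell] using hmono.biUnion_Ico_Ioc_map_succ 0 (n : ℤ)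

theorem gridInterior_subset (T : ℝ) (W : Set ℝ) : gridInterior T W ⊆ W :=
  iUnion₂_subset fun _ hk => hk

theorem subset_gridInterior_of_thickening_subset {K W : Set ℝ} (hT : 0 < T)
    (hKW : Metric.thickening T K ⊆ W) : K ⊆ gridInterior T W := by
  intro x hxK
  obtain ⟨k, hxk⟩ := mem_iUnion.1 ((iUnion_Ioc_zsmul hT).symm ▸ mem_univ x)
  exact mem_biUnion (fun y hyk =>
    hKW (Metric.mem_thickening_iff.2 ⟨x, hxK, dist_lt_of_mem_gridCell hyk hxk⟩)) hxk

theorem eventually_lt_volume_gridInterior {W : Set ℝ} (hW : IsOpen W) {c : ℝ≥0∞}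
    (hc : c < volume W) : ∀ᶠ T in 𝓝[>] (0 : ℝ), c < volume (gridInterior T W) := by
  obtain ⟨K, hKW, hK, hcK⟩ := hW.exists_lt_isCompact hc
  obtain ⟨δ, hδ, hδW⟩ := hK.exists_thickening_subset_open hW hKW
  filter_upwards [Ioc_mem_nhdsGT hδ] with T ⟨hT, hTδ⟩
  exact hcK.trans_le <| measure_mono <|
    subset_gridInterior_of_thickening_subset hT ((Metric.thickening_mono hTδ K).trans hδW)

end Grid

theorem measure_preimage_add_right_inter_of_periodic {G : Type*} [AddGroup G]
    [MeasurableSpace G] [MeasurableAdd G] (μ : Measure G) [μ.IsAddRightInvariant] {E : Set G}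
    {a : G} (hE : Periodic (· ∈ E) a) (s : Set G) :
    μ ((· + a) ⁻¹' s ∩ E) = μ (s ∩ E) := by
  have hE_preimage : (· + a) ⁻¹' E = E := Set.ext fun x => (hE x).to_iff
  rw [← measure_preimage_add_right μ a (s ∩ E), preimage_inter, hE_preimage]

section Periodic

variable {T : ℝ} {E : Set ℝ}

theorem volume_gridCell_inter (hE : Periodic (· ∈ E) T) (k : ℤ) :
    volume (gridCell T k ∩ E) = volume (Ioc 0 T ∩ E) := by
  rw [gridCell_eq_preimage,
    measure_preimage_add_right_inter_of_periodic volume (hE.zsmul k).neg]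

theorem volume_gridUnion_inter (hE : Periodic (· ∈ E) T) (S : Set ℤ) :
    volume (gridUnion T S ∩ E) = S.encard * volume (Ioc 0 T ∩ E) := by
  have hdisj : S.PairwiseDisjoint (gridCell T) :=
    (pairwise_disjoint_Ioc_zsmul T).set_pairwise S
  have hmeas : ∀ k, MeasurableSet (gridCell T k) := measurableSet_gridCell T
  calc volume (gridUnion T S ∩ E)
      = ∑' k : S, volume (gridCell T k ∩ E) := by
        rw [gridUnion, ← Measure.restrict_apply (.biUnion S.to_countable fun k _ => hmeas k),
          measure_biUnion S.to_countable hdisj fun k _ => hmeas k]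
        simp only [Measure.restrict_apply (hmeas _)]
    _ = S.encard * volume (Ioc 0 T ∩ E) := by
        simp only [volume_gridCell_inter hE, ENNReal.tsum_set_const]

theorem volume_gridUnion (T : ℝ) (S : Set ℤ) :
    volume (gridUnion T S) = S.encard * ENNReal.ofReal T := by
  simpa using volume_gridUnion_inter (E := univ) (T := T) (fun _ => rfl) S

theorem volume_gridUnion_inter_mul (hE : Periodic (· ∈ E) T) (R S : Set ℤ) :
    volume (gridUnion T R ∩ E) * volume (gridUnion T S) =
      volume (gridUnion T S ∩ E) * volume (gridUnion T R) := by
  rw [volume_gridUnion_inter hE, volume_gridUnion_inter hE, volume_gridUnion, volume_gridUnion]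
  ring

theorem volume_Ioc_inter_mul_volume_gridInterior {q : ℕ} (hq : q ≠ 0)
    (hE : Periodic (· ∈ E) (q : ℝ)⁻¹) (W : Set ℝ) :
    volume (Ioc 0 1 ∩ E) * volume (gridInterior (q : ℝ)⁻¹ W) =
      volume (gridInterior (q : ℝ)⁻¹ W ∩ E) := by
  have hunit : gridUnion (q : ℝ)⁻¹ (Ico 0 q) = Ioc 0 1 := by
    rw [gridUnion_Ico_natCast (by positivity), nsmul_eq_mul,
      mul_inv_cancel₀ (Nat.cast_ne_zero.2 hq)]
  simpa [hunit, gridInterior] using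
    volume_gridUnion_inter_mul hE (Ico 0 (q : ℤ)) {k | gridCell (q : ℝ)⁻¹ k ⊆ W}

end Periodic

theorem eventually_forall_periodic_volume_inter_mul_le {W : Set ℝ} (hW : IsOpen W) {c : ℝ≥0∞}
    (hc : c < volume W) :
    ∀ᶠ q : ℕ in atTop, ∀ E : Set ℝ, Periodic (· ∈ E) (q : ℝ)⁻¹ →
      volume (Ioc 0 1 ∩ E) * c ≤ volume (W ∩ E) := by
  have hstep : Tendsto (fun q : ℕ => (q : ℝ)⁻¹) atTop (𝓝[>] 0) :=
    tendsto_inv_atTop_nhdsGT_zero.comp tendsto_natCast_atTop_atTop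
  filter_upwards [hstep.eventually (eventually_lt_volume_gridInterior hW hc),
    eventually_ne_atTop 0] with q hcq hq E hE
  calc volume (Ioc 0 1 ∩ E) * c
      ≤ volume (Ioc 0 1 ∩ E) * volume (gridInterior (q : ℝ)⁻¹ W) := by gcongr
    _ = volume (gridInterior (q : ℝ)⁻¹ W ∩ E) :=
        volume_Ioc_inter_mul_volume_gridInterior hq hE W
    _ ≤ volume (W ∩ E) := by gcongr; exact gridInterior_subset _ _

theorem periodic_distNearestInt : Periodic distNearestInt 1 := by
  intro x
  simp [distNearestInt]

theorem periodic_mem_setOf_distNearestInt_lt (q g p : ℝ) :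
    Periodic (· ∈ {α : ℝ | distNearestInt (q * α - g) < p}) q⁻¹ := by
  simpa using ((periodic_distNearestInt.sub_const g).const_mul q).comp (· < p)

theorem stmt12_general {U : Set ℝ} (hU : ∃ V : Set ℝ, IsOpen V ∧ U = V ∩ Icc 0 1)
    {c : ℝ≥0∞} (hc : c < 1) :
    ∃ q₀ : ℕ, 0 < q₀ ∧ ∀ q ≥ q₀, ∀ E : Set ℝ, Periodic (· ∈ E) (q : ℝ)⁻¹ →
      c * volume (Icc 0 1 ∩ E) * volume U ≤ volume (Icc 0 1 ∩ E ∩ U) := by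
  obtain ⟨V, hV, rfl⟩ := hU
  have hvolume : volume (V ∩ Icc (0 : ℝ) 1) = volume (V ∩ Ioo 0 1) :=
    measure_congr (.inter .rfl Ioo_ae_eq_Icc.symm)
  obtain hzero | hpos := eq_or_ne (volume (V ∩ Icc (0 : ℝ) 1)) 0
  · exact ⟨1, one_pos, fun q _ E _ => by simp [hzero]⟩
  have hfin : volume (V ∩ Icc (0 : ℝ) 1) ≠ ∞ :=
    measure_inter_ne_top_of_right_ne_top (by simp)
  have hlt : c * volume (V ∩ Icc (0 : ℝ) 1) < volume (V ∩ Ioo 0 1) := by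
    rw [← hvolume]
    simpa using ENNReal.mul_lt_mul_left hpos hfin hc
  obtain ⟨q₀, hq₀⟩ := eventually_atTop.1 <|
    eventually_forall_periodic_volume_inter_mul_le (hV.inter isOpen_Ioo) hlt
  refine ⟨q₀ + 1, q₀.succ_pos, fun q hq E hE => ?_⟩
  calc c * volume (Icc 0 1 ∩ E) * volume (V ∩ Icc 0 1)
      = volume (Ioc 0 1 ∩ E) * (c * volume (V ∩ Icc 0 1)) := by
        rw [measure_congr (Ioc_ae_eq_Icc.inter .rfl : (Ioc 0 1 ∩ E : Set ℝ) =ᵐ[volume] _)]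
        ring
    _ ≤ volume (V ∩ Ioo 0 1 ∩ E) := hq₀ q (by omega) E hE
    _ ≤ volume (Icc 0 1 ∩ E ∩ (V ∩ Icc 0 1)) :=
        measure_mono fun x ⟨⟨hxV, hx⟩, hxE⟩ =>
          ⟨⟨Ioo_subset_Icc_self hx, hxE⟩, hxV, Ioo_subset_Icc_self hx⟩

theorem stmt12 (γ : ℕ → ℝ) (ψ : ℕ → ℝ) (hψ : ∀ q, ψ q ∈ Set.Icc (0:ℝ) (1/2))
    (A : ℕ → Set ℝ)
    (hA : ∀ q, A q = {α ∈ Set.Icc (0:ℝ) 1 | distNearestInt (q * α - γ q) < ψ q})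
    (U : Set ℝ) (hUopen : ∃ V : Set ℝ, IsOpen V ∧ U = V ∩ Set.Icc 0 1)
    (hUne : U.Nonempty) :
    ∃ q₀ : ℕ, 0 < q₀ ∧ ∀ q ≥ q₀,
      (1/2 : ℝ≥0∞) * volume (A q) * volume U ≤ volume (A q ∩ U) := by
  obtain ⟨q₀, hq₀, h⟩ := stmt12_general hUopen (ENNReal.half_lt_self one_ne_zero one_ne_top)
  exact ⟨q₀, hq₀, fun q hq => hA q ▸ h q hq _ (periodic_mem_setOf_distNearestInt_lt q (γ q) (ψ q))⟩
end

section
/- Let γ∈ℝ and 0 < δ ≤ 1/4. There is an absolute constant C > 0 with the following property. Let q∈ℕ and let A, B be positive integers with gcd(A,B)=1, 1 ≤ B ≤ q^{1/2}, and |γ − A/B| < 1/(q^{1/2}·B); set S(q) = {a ∈ {0,1,…,q−1} : gcd(aB+A, q) = 1}. For r∈ℕ put N_δ(q,r) = #{(a,b) ∈ S(q) × {0,…,r−1} : |(a+γ)r − (b+γ)q| < gcd(q,r)^δ}. Then for every divisor d of q, ∑_{r<q, gcd(q,r)=d} N_δ(q,r) ≤ C·(q·d^{−1/4} + d). -/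
/-!
Write `q = d * Q` and `r = d * R` with `Q`, `R` coprime, and put `θ = B * γ - A`. Replacing `γ` by
`A / B` and clearing denominators turns a pair `(a, b)` with `|(a + γ) * r - (b + γ) * q| < T` into
the integer `n = (a * B + A) * R - (b * B + A) * Q`. With `k = Q - R` it satisfies `B ∣ n + A * k`
and `|n - k * θ| < B * T / d`, and it is nonzero because `a * B + A` is prime to `Q > 1`. The pair
`(n, k)` determines `a` modulo `Q`, and `a` determines `b`, so each `(n, k)` arises at most `d`
times. For fixed `n`, the admissible `k` lie in a single class modulo `B` and in an interval whose
length is at most `Q` and, if `θ ≠ 0`, at most `2 * (B * T / d) / |θ|`. Averaging these two bounds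
and summing over the nonzero `n` with `|n| ≤ B * T / d + |θ| * Q` gives at most
`6 * Q * T + 2 * B * T + 2 * |θ| * q` triples `(r, a, b)`. For `T = d ^ δ` all three terms are
absorbed into `q * d ^ (δ - 1 / 2)`, because `B ≤ √q`, `|θ| ≤ 1 / √q` and `d ≤ q`.
-/

open Finset

theorem card_le_div_add_one_of_modEq {K : Finset ℕ} {B : ℕ} {L : ℝ} (hL : 0 ≤ L)
    (hmod : ∀ x ∈ K, ∀ y ∈ K, x ≡ y [MOD B]) (hdiff : ∀ x ∈ K, ∀ y ∈ K, (x : ℝ) - y ≤ L) :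
    (#K : ℝ) ≤ L / B + 1 := by
  rcases K.eq_empty_or_nonempty with rfl | hne
  · rw [card_empty, Nat.cast_zero]
    positivity
  set m := K.min' hne
  have hm : m ∈ K := K.min'_mem hne
  have hle : ∀ x ∈ K, m ≤ x := fun x hx ↦ K.min'_le x hx
  have hcard : #(K.erase m) ≤ ⌊L⌋₊ / B := by
    rw [← Nat.Ioc_filter_dvd_card_eq_div]
    refine card_le_card_of_injOn (· - m) (fun x hx ↦ ?_) fun x hx y hy hxy ↦ ?_
    · obtain ⟨hxm, hxK⟩ := mem_erase.1 hx
      have hfloor : x - m ≤ ⌊L⌋₊ := Nat.le_floor <| by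
        rw [Nat.cast_sub (hle x hxK)]
        exact hdiff x hxK m hm
      have hpos : 0 < x - m := Nat.sub_pos_of_lt ((hle x hxK).lt_of_ne' hxm)
      have hdvd : B ∣ x - m := (Nat.modEq_iff_dvd' (hle x hxK)).1 (hmod m hm x hxK)
      exact mem_filter.2 ⟨mem_Ioc.2 ⟨hpos, hfloor⟩, hdvd⟩
    · exact (tsub_left_inj (hle x (mem_of_mem_erase hx)) (hle y (mem_of_mem_erase hy))).1 hxy
  calc (#K : ℝ) = #(K.erase m) + 1 := by exact_mod_cast (card_erase_add_one hm).symm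
    _ ≤ (⌊L⌋₊ / B : ℕ) + 1 := by gcongr
    _ ≤ ⌊L⌋₊ / B + 1 := by gcongr; exact Nat.cast_div_le
    _ ≤ L / B + 1 := by gcongr; exact Nat.floor_le hL

/-- The nonzero integers of absolute value at most `N`, as a `Finset`. -/
noncomputable def nonzeroIntsUpTo (N : ℝ) : Finset ℤ := (Icc (-⌊N⌋) ⌊N⌋).erase 0

theorem mem_nonzeroIntsUpTo {N : ℝ} {n : ℤ} : n ∈ nonzeroIntsUpTo N ↔ n ≠ 0 ∧ |(n : ℝ)| ≤ N := by
  rw [nonzeroIntsUpTo, mem_erase, mem_Icc, ← abs_le, Int.le_floor, Int.cast_abs]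

theorem card_nonzeroIntsUpTo_le {N : ℝ} (hN : 0 ≤ N) : (#(nonzeroIntsUpTo N) : ℝ) ≤ 2 * N := by
  have hfloor : 0 ≤ ⌊N⌋ := Int.floor_nonneg.2 hN
  have hcard : (#(nonzeroIntsUpTo N) : ℤ) = 2 * ⌊N⌋ := by
    rw [nonzeroIntsUpTo, card_erase_of_mem (mem_Icc.2 ⟨by lia, hfloor⟩), Int.card_Icc]
    lia
  calc (#(nonzeroIntsUpTo N) : ℝ) = 2 * (⌊N⌋ : ℝ) := by exact_mod_cast hcard
    _ ≤ 2 * N := by gcongr; exact Int.floor_le N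

/-- The second coordinates `k < Q` of the points `(n, k)` with given first coordinate that lie in
the lattice `B ∣ n + A * k` and in the strip of half-width `T` around the line `n = k * θ`. -/
noncomputable def latticeFiber (Q : ℕ) (A : ℤ) (B : ℕ) (θ T : ℝ) (n : ℤ) : Finset ℕ :=
  {k ∈ range Q | (B : ℤ) ∣ n + A * k ∧ |n - k * θ| < T}

/-- The points `(n, k)` of the lattice `B ∣ n + A * k` with `n ≠ 0` and `0 ≤ k < Q` in the strip of
half-width `T` around the line `n = k * θ`. The range of `n` is implied by the other conditions and
serves to make this a `Finset`. -/
noncomputable def latticePoints (Q : ℕ) (A : ℤ) (B : ℕ) (θ T : ℝ) : Finset (Σ _ : ℤ, ℕ) :=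
  (nonzeroIntsUpTo (T + |θ| * Q)).sigma (latticeFiber Q A B θ T)

section LatticePoints

variable {Q : ℕ} {A : ℤ} {B : ℕ} {θ T : ℝ}

theorem mem_latticeFiber {n : ℤ} {k : ℕ} :
    k ∈ latticeFiber Q A B θ T n ↔ k < Q ∧ (B : ℤ) ∣ n + A * k ∧ |n - k * θ| < T := by
  rw [latticeFiber, mem_filter, mem_range]

theorem mem_latticePoints {n : ℤ} {k : ℕ} :
    (⟨n, k⟩ : Σ _ : ℤ, ℕ) ∈ latticePoints Q A B θ T ↔
      n ≠ 0 ∧ k < Q ∧ (B : ℤ) ∣ n + A * k ∧ |n - k * θ| < T := by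
  rw [latticePoints, mem_sigma, mem_nonzeroIntsUpTo, mem_latticeFiber]
  refine ⟨fun ⟨⟨hn, _⟩, h⟩ ↦ ⟨hn, h⟩, fun ⟨hn, h⟩ ↦ ⟨⟨hn, ?_⟩, h⟩⟩
  obtain ⟨hk, -, hclose⟩ := h
  calc |(n : ℝ)| = |(n - k * θ) + k * θ| := by rw [sub_add_cancel]
    _ ≤ |n - k * θ| + |k * θ| := abs_add_le _ _
    _ = |n - k * θ| + |θ| * k := by rw [abs_mul, Nat.abs_cast, mul_comm |θ|]
    _ ≤ T + |θ| * Q := by gcongr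

theorem modEq_of_mem_latticeFiber (hAB : IsCoprime A B) {n : ℤ} {x y : ℕ}
    (hx : x ∈ latticeFiber Q A B θ T n) (hy : y ∈ latticeFiber Q A B θ T n) : x ≡ y [MOD B] := by
  have hdvd : (B : ℤ) ∣ A * (y - x) := by
    have h := dvd_sub (mem_latticeFiber.1 hy).2.1 (mem_latticeFiber.1 hx).2.1
    rwa [add_sub_add_left_eq_sub, ← mul_sub] at h
  exact Nat.modEq_iff_dvd.2 (hAB.symm.dvd_of_dvd_mul_left hdvd)

theorem card_latticeFiber_le (hAB : IsCoprime A B) (n : ℤ) :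
    (#(latticeFiber Q A B θ T n) : ℝ) ≤ Q / B + 1 := by
  refine card_le_div_add_one_of_modEq Q.cast_nonneg
    (fun x hx y hy ↦ modEq_of_mem_latticeFiber hAB hx hy) fun x hx y _ ↦ ?_
  have hxQ : (x : ℝ) ≤ Q := by exact_mod_cast (mem_latticeFiber.1 hx).1.le
  linarith [(y.cast_nonneg : (0 : ℝ) ≤ y)]

theorem abs_mul_card_latticeFiber_le (hAB : IsCoprime A B) (hT : 0 ≤ T) (n : ℤ) :
    |θ| * #(latticeFiber Q A B θ T n) ≤ 2 * T / B + |θ| := by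
  rcases eq_or_ne θ 0 with rfl | hθ
  · rw [abs_zero, zero_mul, add_zero]
    positivity
  have hθ' : 0 < |θ| := abs_pos.2 hθ
  have hcard : (#(latticeFiber Q A B θ T n) : ℝ) ≤ 2 * T / |θ| / B + 1 := by
    refine card_le_div_add_one_of_modEq (by positivity)
      (fun x hx y hy ↦ modEq_of_mem_latticeFiber hAB hx hy) fun x hx y hy ↦ ?_
    rw [le_div_iff₀ hθ']
    calc ((x : ℝ) - y) * |θ| ≤ |(x : ℝ) - y| * |θ| := by gcongr; exact le_abs_self _
      _ = |(n - y * θ) - (n - x * θ)| := by rw [← abs_mul]; congr 1; ring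
      _ ≤ |n - y * θ| + |n - x * θ| := abs_sub _ _
      _ ≤ 2 * T := by linarith [(mem_latticeFiber.1 hx).2.2, (mem_latticeFiber.1 hy).2.2]
  calc |θ| * #(latticeFiber Q A B θ T n) ≤ |θ| * (2 * T / |θ| / B + 1) := by gcongr
    _ = 2 * T / B + |θ| := by field_simp

theorem card_latticePoints_le (hAB : IsCoprime A B) (hT : 0 < T) :
    (#(latticePoints Q A B θ T) : ℝ) ≤ 6 * (Q * T / B) + 2 * T + 2 * (|θ| * Q) := by
  set N := T + |θ| * Q with hN
  set M := 3 * (Q * T / B) + T + |θ| * Q with hM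
  have hNpos : 0 < N := by positivity
  have hfiber : ∀ n, (#(latticeFiber Q A B θ T n) : ℝ) ≤ M / N := fun n ↦ by
    rw [le_div_iff₀ hNpos]
    calc (#(latticeFiber Q A B θ T n) : ℝ) * N
        = T * #(latticeFiber Q A B θ T n) + Q * (|θ| * #(latticeFiber Q A B θ T n)) := by
          rw [hN]; ring
      _ ≤ T * (Q / B + 1) + Q * (2 * T / B + |θ|) := by
          gcongr
          exacts [card_latticeFiber_le hAB n, abs_mul_card_latticeFiber_le hAB hT.le n]
      _ = M := by rw [hM]; ring
  rw [latticePoints, card_sigma, Nat.cast_sum]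
  calc ∑ n ∈ nonzeroIntsUpTo N, (#(latticeFiber Q A B θ T n) : ℝ)
      ≤ #(nonzeroIntsUpTo N) • (M / N) := sum_le_card_nsmul _ _ _ fun n _ ↦ hfiber n
    _ = #(nonzeroIntsUpTo N) * (M / N) := nsmul_eq_mul _ _
    _ ≤ 2 * N * (M / N) := by gcongr; exact card_nonzeroIntsUpTo_le hNpos.le
    _ = 6 * (Q * T / B) + 2 * T + 2 * (|θ| * Q) := by
      rw [mul_assoc, mul_div_cancel₀ _ hNpos.ne', hM]; ring

end LatticePoints

/-- The integer obtained from `(a + γ) * R - (b + γ) * Q` by replacing `γ` with its approximation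
`A / B` and multiplying by `B`. -/
def crossDiff (A B Q R a b : ℤ) : ℤ := (a * B + A) * R - (b * B + A) * Q

section CrossDiff

variable {A B Q R a b : ℤ}

theorem crossDiff_sub_eq (γ : ℝ) :
    crossDiff A B Q R a b - ((Q : ℝ) - R) * (B * γ - A) = B * ((a + γ) * R - (b + γ) * Q) := by
  rw [crossDiff]
  push_cast
  ring

theorem dvd_crossDiff_add : B ∣ crossDiff A B Q R a b + A * (Q - R) :=
  ⟨a * R - b * Q, by rw [crossDiff]; ring⟩

theorem crossDiff_ne_zero (hQ : ¬IsUnit Q) (hQR : IsCoprime Q R) (ha : IsCoprime (a * B + A) Q) :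
    crossDiff A B Q R a b ≠ 0 := fun h ↦
  have hdvd : Q ∣ (a * B + A) * R := Dvd.intro_left (b * B + A) (sub_eq_zero.1 h).symm
  hQ (ha.isUnit_of_dvd' (hQR.dvd_of_dvd_mul_right hdvd) dvd_rfl)

theorem eq_and_eq_of_crossDiff_eq (hB : B ≠ 0) (hQ : Q ≠ 0) (hQR : IsCoprime Q R) {a' b' : ℤ}
    (h : crossDiff A B Q R a b = crossDiff A B Q R a' b') (hdiv : a / Q = a' / Q) :
    a = a' ∧ b = b' := by
  have hcross : (a' - a) * R = (b' - b) * Q := by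
    apply mul_left_cancel₀ hB
    rw [crossDiff, crossDiff] at h
    linear_combination -h
  have hdvd : Q ∣ a' - a := hQR.dvd_of_dvd_mul_right (hcross ▸ dvd_mul_left Q _)
  have ha : a = a' := by
    rw [← Int.mul_ediv_add_emod a Q, ← Int.mul_ediv_add_emod a' Q, hdiv,
      (Int.modEq_iff_dvd.2 hdvd).eq]
  refine ⟨ha, (sub_eq_zero.1 ?_).symm⟩
  rw [ha, sub_self, zero_mul] at hcross
  exact (mul_eq_zero.1 hcross.symm).resolve_right hQ

end CrossDiff

/-- The pairs counted by `N_δ(q, r)`, with an arbitrary threshold `T` in place of `gcd(q, r) ^ δ`;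
the coprimality condition says that `a` lies in `S(q)`. -/
noncomputable def nearPairs (γ T : ℝ) (A B q r : ℕ) : Finset (ℕ × ℕ) :=
  {p ∈ range q ×ˢ range r | Nat.Coprime (p.1 * B + A) q ∧
    |((p.1 : ℝ) + γ) * r - ((p.2 : ℝ) + γ) * q| < T}

theorem mem_nearPairs {γ T : ℝ} {A B q r : ℕ} {p : ℕ × ℕ} :
    p ∈ nearPairs γ T A B q r ↔ p.1 < q ∧ Nat.Coprime (p.1 * B + A) q ∧ p.2 < r ∧
      |((p.1 : ℝ) + γ) * r - ((p.2 : ℝ) + γ) * q| < T := by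
  simp only [nearPairs, mem_filter, mem_product, mem_range]
  tauto

theorem ncard_eq_card_nearPairs (γ T : ℝ) (A B q r : ℕ) :
    Set.ncard {p : ℕ × ℕ | p.1 < q ∧ Nat.gcd (p.1 * B + A) q = 1 ∧ p.2 < r ∧
      |((p.1 : ℝ) + γ) * r - ((p.2 : ℝ) + γ) * q| < T} = #(nearPairs γ T A B q r) := by
  rw [← Set.ncard_coe_finset]
  congr 1
  ext p
  exact mem_nearPairs.symm

theorem filter_gcd_mul_eq_image {d : ℕ} (hd : 0 < d) (Q : ℕ) :
    {r ∈ Ico 1 (d * Q) | Nat.gcd (d * Q) r = d} = image (d * ·) {R ∈ Ico 1 Q | Q.Coprime R} := by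
  ext r
  simp only [mem_filter, mem_Ico, mem_image]
  constructor
  · rintro ⟨⟨hr1, hrQ⟩, hgcd⟩
    obtain ⟨R, rfl⟩ : d ∣ r := hgcd ▸ Nat.gcd_dvd_right _ r
    rw [Nat.gcd_mul_left] at hgcd
    exact ⟨R, ⟨⟨Nat.pos_of_mul_pos_left hr1, lt_of_mul_lt_mul_left' hrQ⟩,
      Nat.eq_of_mul_eq_mul_left hd (hgcd.trans (mul_one d).symm)⟩, rfl⟩
  · rintro ⟨R, ⟨⟨hR1, hRQ⟩, hcop⟩, rfl⟩
    exact ⟨⟨Nat.mul_pos hd hR1, Nat.mul_lt_mul_of_pos_left hRQ hd⟩,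
      by rw [Nat.gcd_mul_left, hcop.gcd_eq_one, mul_one]⟩

section NearPairs

variable {γ T : ℝ} {A B d Q : ℕ}

theorem crossDiff_mem_latticePoints {R : ℕ} {p : ℕ × ℕ} (hB : 0 < B) (hd : 0 < d) (hR : 0 < R)
    (hRQ : R < Q) (hQR : Q.Coprime R) (hp : p ∈ nearPairs γ T A B (d * Q) (d * R)) :
    (⟨crossDiff A B Q R p.1 p.2, Q - R⟩ : Σ _ : ℤ, ℕ) ∈
      latticePoints Q A B (B * γ - A) (B * T / d) := by
  obtain ⟨-, hcop, -, hlt⟩ := mem_nearPairs.1 hp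
  have hcopQ : IsCoprime ((p.1 : ℤ) * B + A) Q := by
    exact_mod_cast Nat.isCoprime_iff_coprime.2
      (Nat.Coprime.coprime_dvd_right (Nat.dvd_mul_left Q d) hcop)
  have hdvd := dvd_crossDiff_add (A := A) (B := B) (Q := Q) (R := R) (a := p.1) (b := p.2)
  have hcast := crossDiff_sub_eq (A := A) (B := B) (Q := Q) (R := R) (a := p.1) (b := p.2) γ
  push_cast at hcast
  refine mem_latticePoints.2 ⟨?_, by lia, by rwa [Nat.cast_sub hRQ.le], ?_⟩
  · exact crossDiff_ne_zero (by rw [Int.ofNat_isUnit, Nat.isUnit_iff]; lia)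
      (Nat.isCoprime_iff_coprime.2 hQR) hcopQ
  · have hscale : ((p.1 : ℝ) + γ) * (d * R : ℕ) - ((p.2 : ℝ) + γ) * (d * Q : ℕ)
        = d * (((p.1 : ℝ) + γ) * R - ((p.2 : ℝ) + γ) * Q) := by push_cast; ring
    rw [hscale, abs_mul, Nat.abs_cast] at hlt
    rw [Nat.cast_sub hRQ.le, hcast, abs_mul, Nat.abs_cast, lt_div_iff₀ (by positivity), mul_assoc,
      mul_comm _ (d : ℝ)]
    gcongr

theorem card_sigma_nearPairs_le (γ T : ℝ) (A Q : ℕ) (hB : 0 < B) (hd : 0 < d) :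
    #({R ∈ Ico 1 Q | Q.Coprime R}.sigma fun R ↦ nearPairs γ T A B (d * Q) (d * R)) ≤
      #(latticePoints Q A B (B * γ - A) (B * T / d)) * d := by
  rw [← card_range d, ← card_product, card_range]
  refine card_le_card_of_injOn
    (fun z ↦ (⟨crossDiff A B Q z.1 z.2.1 z.2.2, Q - z.1⟩, z.2.1 / Q)) ?_ ?_
  · rintro ⟨R, p⟩ hz
    simp only [coe_sigma, Set.mem_sigma_iff, mem_coe, mem_filter, mem_Ico] at hz
    obtain ⟨⟨⟨hR, hRQ⟩, hQR⟩, hp⟩ := hz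
    exact mem_product.2 ⟨crossDiff_mem_latticePoints hB hd hR hRQ hQR hp,
      mem_range.2 (Nat.div_lt_of_lt_mul (mul_comm d Q ▸ (mem_nearPairs.1 hp).1))⟩
  · rintro ⟨R, a, b⟩ hz ⟨R', a', b'⟩ hz' heq
    simp only [coe_sigma, Set.mem_sigma_iff, mem_coe, mem_filter, mem_Ico] at hz hz'
    obtain ⟨⟨⟨-, hRQ⟩, hQR⟩, -⟩ := hz
    simp only [Prod.mk.injEq, Sigma.mk.injEq, heq_eq_eq] at heq
    obtain ⟨⟨hcross, hsub⟩, hdiv⟩ := heq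
    obtain rfl : R = R' := by lia
    obtain ⟨ha, hb⟩ := eq_and_eq_of_crossDiff_eq (by lia) (by lia)
      (Nat.isCoprime_iff_coprime.2 hQR) hcross (by exact_mod_cast hdiv)
    rw [Nat.cast_inj.1 ha, Nat.cast_inj.1 hb]

theorem sum_card_nearPairs_le (γ : ℝ) (Q : ℕ) (hT : 0 < T) (hB : 0 < B) (hAB : A.Coprime B)
    (hd : 0 < d) :
    ∑ r ∈ Ico 1 (d * Q) with Nat.gcd (d * Q) r = d, (#(nearPairs γ T A B (d * Q) r) : ℝ) ≤
      6 * (Q * T) + 2 * (B * T) + 2 * (|B * γ - A| * (d * Q)) := by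
  have hcount := card_latticePoints_le (Q := Q) (θ := B * γ - A)
    (Nat.isCoprime_iff_coprime.2 hAB) (show 0 < B * T / d by positivity)
  rw [filter_gcd_mul_eq_image hd, sum_image fun _ _ _ _ h ↦ Nat.eq_of_mul_eq_mul_left hd h]
  calc ∑ R ∈ Ico 1 Q with Q.Coprime R, (#(nearPairs γ T A B (d * Q) (d * R)) : ℝ)
      ≤ #(latticePoints Q A B (B * γ - A) (B * T / d)) * d := by
        exact_mod_cast card_sigma _ _ ▸ card_sigma_nearPairs_le γ T A Q hB hd
    _ ≤ (6 * (Q * (B * T / d) / B) + 2 * (B * T / d) + 2 * (|B * γ - A| * Q)) * d := by gcongr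
    _ = 6 * (Q * T) + 2 * (B * T) + 2 * (|B * γ - A| * (d * Q)) := by field_simp

end NearPairs

theorem sqrt_mul_rpow_le {x y : ℝ} (hx : 0 < x) (hxy : x ≤ y) (δ : ℝ) :
    √y * x ^ δ ≤ y * x ^ (δ - 1 / 2) := by
  calc √y * x ^ δ = √y * √x * x ^ (δ - 1 / 2) := by
        rw [mul_assoc, Real.sqrt_eq_rpow x, ← Real.rpow_add hx, add_sub_cancel]
    _ ≤ √y * √y * x ^ (δ - 1 / 2) := by gcongr
    _ = y * x ^ (δ - 1 / 2) := by rw [Real.mul_self_sqrt (hx.le.trans hxy)]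

theorem abs_mul_sub_mul_le_sqrt {γ A B q : ℝ} (hB : 0 < B) (hq : 0 < q)
    (h : |γ - A / B| ≤ 1 / (√q * B)) : |B * γ - A| * q ≤ √q := by
  have hscale : B * γ - A = B * (γ - A / B) := by field_simp
  calc |B * γ - A| * q = B * |γ - A / B| * q := by rw [hscale, abs_mul, abs_of_pos hB]
    _ ≤ B * (1 / (√q * B)) * q := by gcongr
    _ = q / √q := by field_simp
    _ = √q := Real.div_sqrt

theorem stmt13_general (γ : ℝ) {δ : ℝ} (hδ : 0 ≤ δ) {q A B d : ℕ} (hB : 0 < B)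
    (hAB : A.Coprime B) (hBq : (B : ℝ) ≤ √q) (hγ : |γ - (A : ℝ) / B| ≤ 1 / (√q * B))
    (hdq : d ∣ q) :
    ∑ r ∈ Ico 1 q with Nat.gcd q r = d,
        (Set.ncard {p : ℕ × ℕ | p.1 < q ∧ Nat.gcd (p.1 * B + A) q = 1 ∧ p.2 < r ∧
          |((p.1 : ℝ) + γ) * r - ((p.2 : ℝ) + γ) * q| < (Nat.gcd q r : ℝ) ^ δ} : ℝ) ≤
      10 * (q * (d : ℝ) ^ (δ - 1 / 2)) := by
  have hB' : (0 : ℝ) < B := Nat.cast_pos.2 hB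
  have hq' : (0 : ℝ) < q := Real.sqrt_pos.1 (hB'.trans_le hBq)
  have hq : 0 < q := Nat.cast_pos.1 hq'
  have hd : 0 < d := Nat.pos_of_dvd_of_pos hdq hq
  have hd1 : (1 : ℝ) ≤ d := by exact_mod_cast hd
  have hsqrt : √q * (d : ℝ) ^ δ ≤ q * (d : ℝ) ^ (δ - 1 / 2) :=
    sqrt_mul_rpow_le (by positivity) (by exact_mod_cast Nat.le_of_dvd hq hdq) δ
  have hstrip : |B * γ - A| * q ≤ √q * (d : ℝ) ^ δ :=
    (abs_mul_sub_mul_le_sqrt hB' hq' hγ).trans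
      (le_mul_of_one_le_right (Real.sqrt_nonneg _) (Real.one_le_rpow hd1 hδ))
  have hBT : B * (d : ℝ) ^ δ ≤ √q * (d : ℝ) ^ δ := by gcongr
  obtain ⟨Q, rfl⟩ := hdq
  have hQT : Q * (d : ℝ) ^ δ ≤ (d * Q : ℕ) * (d : ℝ) ^ (δ - 1 / 2) := by
    calc Q * (d : ℝ) ^ δ = (d * Q : ℕ) * (d : ℝ) ^ (δ - 1) := by
          rw [Real.rpow_sub_one (by positivity)]; push_cast; field_simp
      _ ≤ (d * Q : ℕ) * (d : ℝ) ^ (δ - 1 / 2) := by gcongr; linarith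
  have hcount := sum_card_nearPairs_le (T := (d : ℝ) ^ δ) γ Q (by positivity) hB hAB hd
  rw [← Nat.cast_mul] at hcount
  calc _ = ∑ r ∈ Ico 1 (d * Q) with Nat.gcd (d * Q) r = d,
          (#(nearPairs γ ((d : ℝ) ^ δ) A B (d * Q) r) : ℝ) :=
        sum_congr rfl fun r hr ↦ by rw [(mem_filter.1 hr).2, ncard_eq_card_nearPairs]
    _ ≤ 10 * ((d * Q : ℕ) * (d : ℝ) ^ (δ - 1 / 2)) := by linarith

theorem stmt13 (γ : ℝ) (δ : ℝ) (hδ0 : 0 < δ) (hδ4 : δ ≤ 1/4) :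
    ∃ C > (0:ℝ), ∀ q A B : ℕ, 1 ≤ q → 0 < A → 0 < B → Nat.gcd A B = 1 →
      (B : ℝ) ≤ Real.sqrt q → |γ - (A : ℝ) / B| < 1 / (Real.sqrt q * B) →
      ∀ d : ℕ, d ∣ q →
        (∑ r ∈ (Finset.Ico 1 q).filter (fun r => Nat.gcd q r = d),
          (Set.ncard {p : ℕ × ℕ | p.1 < q ∧ Nat.gcd (p.1 * B + A) q = 1 ∧ p.2 < r ∧
            |((p.1 : ℝ) + γ) * r - ((p.2 : ℝ) + γ) * q| < (Nat.gcd q r : ℝ) ^ δ} : ℝ))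
        ≤ C * ((q : ℝ) * (d : ℝ) ^ (-(1/4) : ℝ) + (d : ℝ)) := by
  refine ⟨10, by norm_num, fun q A B hq _ hB hAB hBq hγ d hdq ↦
    (stmt13_general γ hδ0.le hB hAB hBq hγ.le hdq).trans ?_⟩
  have hd1 : (1 : ℝ) ≤ d := by exact_mod_cast Nat.pos_of_dvd_of_pos hdq hq
  have hpow : (d : ℝ) ^ (δ - 1 / 2) ≤ (d : ℝ) ^ (-(1/4) : ℝ) :=
    Real.rpow_le_rpow_of_exponent_le hd1 (by linarith)
  calc 10 * (q * (d : ℝ) ^ (δ - 1 / 2)) ≤ 10 * (q * (d : ℝ) ^ (-(1/4) : ℝ)) := by gcongr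
    _ ≤ 10 * (q * (d : ℝ) ^ (-(1/4) : ℝ) + d) := by linarith
end

section
/- Let γ∈ℝ, and let ψ:ℕ→ℝ≥0 be decreasing with ψ(q) ≤ 1/q for all q and ∑_{q=1}^∞ ψ(q) = ∞. For each q∈ℕ, with S(q) as in the context, define A_q'(ψ,γ) = ⋃_{a∈S(q)} ( (a+γ−ψ(q))/q , (a+γ+ψ(q))/q ) ∩ [0,1]. Then there is a constant C > 0 (depending on γ and the choices A(q),B(q)) such that for all Q, ∑_{q,r=1}^Q meas(A_q'(ψ,γ) ∩ A_r'(ψ,γ)) ≤ C·Ψ(Q)², where Ψ(Q) = ∑_{q=1}^Q ψ(q). -/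
open MeasureTheory

open Finset

/-
Write `q = d * u`, `r = d * v` with `u < v` coprime. The intervals about `(a + γ) / q` and
`(b + γ) / r` can meet only if `v * (a + γ) - u * (b + γ)` is small. Multiplying by `B = B(q)` and
replacing `B * γ` by `A`, one finds that either the integers `v * (a * B + A)` and
`u * (b * B + A)` agree, whence `u` divides both `a * B + A` and `q` and therefore `u = 1`, or
else `v` is resonant: it exceeds a threshold in terms of `A / B`, and `(v - u) * γ` is near an
integer. Because multiples `k * γ` with `k` below that threshold stay away from the integers, a
pigeonhole argument bounds the number of resonant `v` in a dyadic block `[R, 2 * R)` by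
`O(R ^ 2 * ψ q + R / √q)`. For each admissible `v` the overlap has measure at most
`8 * ψ q * ψ r + 4 * ψ r / v`; the first term sums to `O(Ψ ^ 2)`, and the second, by dyadic
summation over `v`, to `O(Ψ ^ 2 + Ψ + 1)`. Finally `Ψ + 1` is `O(Ψ ^ 2)` because `Ψ` is at least
`ψ 1`.
-/

/-! ### Counting by pigeonhole -/

section Floor

variable {𝕜 : Type*} [Field 𝕜] [LinearOrder 𝕜] [IsStrictOrderedRing 𝕜] [FloorRing 𝕜]

lemma card_Icc_floor_le {x y : 𝕜} (h : x ≤ y) : (#(Icc ⌊x⌋ ⌊y⌋) : 𝕜) ≤ y - x + 2 := by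
  have hcard : (#(Icc ⌊x⌋ ⌊y⌋) : ℤ) = ⌊y⌋ + 1 - ⌊x⌋ :=
    Int.card_Icc_of_le _ _ (by have := Int.floor_le_floor h; omega)
  have hcard' : (#(Icc ⌊x⌋ ⌊y⌋) : 𝕜) = ⌊y⌋ + 1 - ⌊x⌋ := by exact_mod_cast hcard
  linarith [Int.floor_le y, Int.lt_floor_add_one x]

lemma abs_sub_lt_of_floor_div_eq {x y K : 𝕜} (hK : 0 < K) (h : ⌊x / K⌋ = ⌊y / K⌋) :
    |x - y| < K := by
  have := Int.abs_sub_lt_one_of_floor_eq_floor h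
  rwa [← sub_div, abs_div, abs_of_pos hK, div_lt_one hK] at this

end Floor

lemma card_le_of_separated {γ K δ : ℝ} (hK : 0 < K) (hδ : 0 < δ)
    (hsep : ∀ k : ℕ, 1 ≤ k → k ≤ K → ∀ n : ℤ, δ ≤ |k * γ - n|)
    {x y ε β : ℝ} (hxy : x ≤ y) (hε : 0 ≤ ε) {T : Finset ℕ} (hT : ∀ t ∈ T, x ≤ t ∧ t ≤ y)
    (hnear : ∀ t ∈ T, ∃ n : ℤ, |t * γ - β - n| < ε) :
    (#T : ℝ) ≤ ((y - x) / K + 2) * (2 * ε / δ + 2) := by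
  let n : ℕ → ℤ := fun t ↦ round (t * γ - β)
  let e : ℕ → ℝ := fun t ↦ t * γ - β - n t
  have he : ∀ t ∈ T, |e t| < ε := fun t ht ↦
    let ⟨m, hm⟩ := hnear t ht
    (round_le _ m).trans_lt hm
  -- Two elements of `T` in the same box would differ by some `k ≤ K` with `‖k γ‖ < δ`.
  have hbox : ∀ t u : ℕ, u < t → ⌊(t : ℝ) / K⌋ = ⌊(u : ℝ) / K⌋ → ⌊e t / δ⌋ ≠ ⌊e u / δ⌋ := by
    intro t u hut hK' hδ'
    have hclose := abs_sub_lt_of_floor_div_eq hK hK'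
    have hsep' := hsep (t - u) (by omega)
      (by rw [Nat.cast_sub hut.le]; exact (le_abs_self _).trans hclose.le) (n t - n u)
    have hdiff : e t - e u = ((t - u : ℕ) : ℝ) * γ - ((n t - n u : ℤ) : ℝ) := by
      simp only [e, Nat.cast_sub hut.le, Int.cast_sub]; ring
    rw [← hdiff] at hsep'
    exact (abs_sub_lt_of_floor_div_eq hδ hδ').not_ge hsep'
  have hcard : #T ≤ #(Icc ⌊x / K⌋ ⌊y / K⌋ ×ˢ Icc ⌊-ε / δ⌋ ⌊ε / δ⌋) := by
    refine card_le_card_of_injOn (fun t : ℕ ↦ (⌊(t : ℝ) / K⌋, ⌊e t / δ⌋)) (fun t ht ↦ ?_)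
      fun t _ u _ htu ↦ ?_
    · obtain ⟨hxt, hty⟩ := hT t ht
      obtain ⟨hl, hu⟩ := abs_lt.1 (he t ht)
      rw [mem_coe, mem_product, mem_Icc, mem_Icc]
      refine ⟨⟨?_, ?_⟩, ?_, ?_⟩ <;> dsimp only <;> gcongr
    · obtain ⟨h₁, h₂⟩ := Prod.mk.inj htu
      rcases lt_trichotomy t u with h | h | h
      · exact absurd h₂.symm (hbox u t h h₁.symm)
      · exact h
      · exact absurd h₂ (hbox t u h h₁)
  have hx := card_Icc_floor_le (x := x / K) (y := y / K) (by gcongr)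
  have hy := card_Icc_floor_le (x := -ε / δ) (y := ε / δ) (by gcongr; linarith)
  calc (#T : ℝ) ≤ #(Icc ⌊x / K⌋ ⌊y / K⌋) * #(Icc ⌊-ε / δ⌋ ⌊ε / δ⌋) := by
        rw [card_product] at hcard; exact_mod_cast hcard
    _ ≤ (y / K - x / K + 2) * (ε / δ - -ε / δ + 2) := by gcongr; exact (Nat.cast_nonneg _).trans hx
    _ = _ := by ring

lemma measureReal_le_card_mul {α ι : Type*} [MeasurableSpace α] {μ : Measure α} {W : Finset ι}
    {I : ι → Set α} {E : Set α} {L : ℝ} (hE : E ⊆ ⋃ i ∈ W, I i) (hfin : ∀ i ∈ W, μ (I i) ≠ ⊤)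
    (hL : ∀ i ∈ W, μ.real (I i) ≤ L) : μ.real E ≤ #W * L :=
  calc μ.real E ≤ μ.real (⋃ i ∈ W, I i) :=
        measureReal_mono hE (measure_biUnion_ne_top W.finite_toSet hfin)
    _ ≤ ∑ i ∈ W, μ.real (I i) := measureReal_biUnion_finset_le W I
    _ ≤ #W * L := by rw [← nsmul_eq_mul]; exact sum_le_card_nsmul W _ L hL

/-! ### Sums over multiples, dyadic blocks and pairs -/

lemma sum_Ico_log_half_pow_le {u : ℕ} (hu : 0 < u) (J : ℕ) :
    ∑ j ∈ Ico (Nat.log 2 u) J, (1 / 2 : ℝ) ^ j ≤ 4 / u := by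
  have hlt : (u : ℝ) < 2 ^ (Nat.log 2 u + 1) := by
    exact_mod_cast Nat.lt_pow_succ_log_self one_lt_two u
  refine (geom_sum_Ico_le_of_lt_one (by norm_num) (by norm_num)).trans ?_
  rw [one_div_pow, div_div, div_le_div_iff₀ (by positivity) (by positivity)]
  rw [pow_succ] at hlt
  linarith

section AntitoneSums

variable {φ : ℕ → ℝ} (hφ0 : ∀ n, 0 ≤ φ n) (hφ : AntitoneOn φ (Set.Ici 1))

include hφ in
lemma mul_sum_Ioc_mul_le (d N : ℕ) :
    d * ∑ n ∈ Ioc 0 N, φ (d * n) ≤ ∑ m ∈ Ioc 0 (d * N), φ m := by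
  induction N with
  | zero => simp
  | succ N ih =>
    have hblock : d * φ (d * (N + 1)) ≤ ∑ m ∈ Ioc (d * N) (d * (N + 1)), φ m := by
      have hcard : #(Ioc (d * N) (d * (N + 1))) = d := by rw [Nat.card_Ioc, Nat.mul_succ]; omega
      nth_rw 1 [← hcard, ← nsmul_eq_mul]
      refine card_nsmul_le_sum _ _ _ fun m hm ↦ ?_
      obtain ⟨hm₁, hm₂⟩ := mem_Ioc.1 hm
      exact hφ (Set.mem_Ici.2 (by omega)) (Set.mem_Ici.2 (by omega)) hm₂
    rw [sum_Ioc_succ_top (Nat.zero_le N), mul_add,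
      ← sum_Ioc_consecutive _ (Nat.zero_le _) (Nat.mul_le_mul_left d N.le_succ)]
    exact add_le_add ih hblock

include hφ0 hφ in
lemma sum_Icc_mul_le {d : ℕ} (hd : 0 < d) (Q : ℕ) :
    ∑ n ∈ Icc 1 (Q / d), φ (d * n) ≤ (∑ m ∈ Icc 1 Q, φ m) / d := by
  rw [le_div_iff₀' (by exact_mod_cast hd)]
  refine (mul_sum_Ioc_mul_le hφ d (Q / d)).trans ?_
  exact sum_le_sum_of_subset_of_nonneg (Ioc_subset_Ioc_right (Nat.mul_div_le Q d))
    fun m _ _ ↦ hφ0 m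

include hφ0 hφ in
lemma sum_two_pow_mul_le {N : ℕ} (hN : N ≠ 0) :
    ∑ j ∈ range (Nat.log 2 N + 1), 2 ^ j * φ (2 ^ j) ≤ 2 * ∑ n ∈ Icc 1 N, φ n := by
  have hcond := sum_condensed_le (f := φ)
    (fun m n hm hmn ↦ hφ (Set.mem_Ici.2 hm.le) (Set.mem_Ici.2 (hm.le.trans hmn)) hmn) (Nat.log 2 N)
  simp only [nsmul_eq_mul, Nat.cast_pow, Nat.cast_ofNat] at hcond
  have htail : ∑ n ∈ Ico 2 (2 ^ Nat.log 2 N + 1), φ n ≤ ∑ n ∈ Ioc 1 N, φ n := by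
    refine sum_le_sum_of_subset_of_nonneg (fun n hn ↦ ?_) fun n _ _ ↦ hφ0 n
    have hpow := Nat.pow_log_le_self 2 hN
    rw [mem_Ico] at hn
    exact mem_Ioc.2 ⟨hn.1, by omega⟩
  rw [← add_sum_Ioc_eq_sum_Icc (Nat.one_le_iff_ne_zero.2 hN)]
  linarith [hφ0 1]

include hφ0 hφ in
lemma sum_div_le_of_card_le {T : Finset ℕ} {R : ℕ} (hR : 0 < R) (hT : ∀ n ∈ T, R ≤ n) {a b : ℝ}
    (hcard : #T ≤ a * R ^ 2 + b * R) : ∑ n ∈ T, φ n / n ≤ (a * R + b) * φ R :=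
  calc ∑ n ∈ T, φ n / n ≤ #T * (φ R / R) := by
        rw [← nsmul_eq_mul]
        refine sum_le_card_nsmul _ _ _ fun n hn ↦ ?_
        have hRn := hT n hn
        exact div_le_div₀ (hφ0 R) (hφ (Set.mem_Ici.2 hR) (Set.mem_Ici.2 (hR.trans_le hRn)) hRn)
          (by exact_mod_cast hR) (by exact_mod_cast hRn)
    _ ≤ (a * R ^ 2 + b * R) * (φ R / R) := by gcongr; exact div_nonneg (hφ0 R) R.cast_nonneg
    _ = (a * R + b) * φ R := by field_simp

include hφ0 hφ in
lemma sum_div_filter_log_eq_le {T : Finset ℕ} (hT : 0 ∉ T) {a b c : ℝ} (hb : 0 ≤ b)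
    (hc : ∀ n : ℕ, 1 ≤ n → φ n ≤ c / n) {j : ℕ}
    (hcard : #{n ∈ T | 2 ^ j ≤ n ∧ n < 2 * 2 ^ j} ≤ a * (2 ^ j) ^ 2 + b * 2 ^ j) :
    ∑ n ∈ T with Nat.log 2 n = j, φ n / n ≤ a * (2 ^ j * φ (2 ^ j)) + b * c * (1 / 2) ^ j := by
  have hfiber : {n ∈ T | Nat.log 2 n = j} ⊆ {n ∈ T | 2 ^ j ≤ n ∧ n < 2 * 2 ^ j} := fun n hn ↦ by
    obtain ⟨hnT, rfl⟩ := mem_filter.1 hn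
    rw [mem_filter, ← pow_succ']
    exact ⟨hnT, Nat.pow_log_le_self 2 (ne_of_mem_of_not_mem hnT hT),
      Nat.lt_pow_succ_log_self one_lt_two n⟩
  have hsum : ∑ n ∈ T with Nat.log 2 n = j, φ n / n ≤ (a * 2 ^ j + b) * φ (2 ^ j) := by
    exact_mod_cast sum_div_le_of_card_le hφ0 hφ (Nat.two_pow_pos j)
      (fun n hn ↦ (mem_filter.1 (hfiber hn)).2.1)
      (a := a) (b := b) (by push_cast; exact (Nat.cast_le.2 (card_le_card hfiber)).trans hcard)
  have hφj : φ (2 ^ j) ≤ c / 2 ^ j := by exact_mod_cast hc (2 ^ j) Nat.one_le_two_pow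
  calc ∑ n ∈ T with Nat.log 2 n = j, φ n / n ≤ (a * 2 ^ j + b) * φ (2 ^ j) := hsum
    _ = a * (2 ^ j * φ (2 ^ j)) + b * φ (2 ^ j) := by ring
    _ ≤ a * (2 ^ j * φ (2 ^ j)) + b * (c / 2 ^ j) := by gcongr
    _ = a * (2 ^ j * φ (2 ^ j)) + b * c * (1 / 2) ^ j := by rw [one_div_pow]; ring

include hφ0 hφ in
lemma sum_div_le_of_dyadic_card_le {u N : ℕ} (hu : 0 < u) (huN : u ≤ N) {T : Finset ℕ}
    (hT : T ⊆ Icc u N) {a b c : ℝ} (ha : 0 ≤ a) (hb : 0 ≤ b) (hc : ∀ n : ℕ, 1 ≤ n → φ n ≤ c / n)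
    (hcard : ∀ R : ℕ, 1 ≤ R → #{n ∈ T | R ≤ n ∧ n < 2 * R} ≤ a * R ^ 2 + b * R) :
    ∑ n ∈ T, φ n / n ≤ 2 * a * ∑ n ∈ Icc 1 N, φ n + 4 * b * c / u := by
  have hc0 : 0 ≤ c := by simpa using (hφ0 1).trans (hc 1 le_rfl)
  have hT0 : 0 ∉ T := fun h ↦ hu.not_ge (mem_Icc.1 (hT h)).1
  have hlog : ∀ n ∈ T, Nat.log 2 n ∈ Ico (Nat.log 2 u) (Nat.log 2 N + 1) := fun n hn ↦ by
    obtain ⟨hun, hnN⟩ := mem_Icc.1 (hT hn)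
    exact mem_Ico.2 ⟨Nat.log_mono_right hun, Nat.lt_succ_of_le (Nat.log_mono_right hnN)⟩
  have hmain : ∑ j ∈ Ico (Nat.log 2 u) (Nat.log 2 N + 1), 2 ^ j * φ (2 ^ j) ≤
      2 * ∑ n ∈ Icc 1 N, φ n := by
    refine le_trans ?_ (sum_two_pow_mul_le hφ0 hφ (hu.trans_le huN).ne')
    rw [range_eq_Ico]
    exact sum_le_sum_of_subset_of_nonneg (Ico_subset_Ico_left (Nat.zero_le _))
      fun j _ _ ↦ mul_nonneg (by positivity) (hφ0 _)
  calc ∑ n ∈ T, φ n / n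
      = ∑ j ∈ Ico (Nat.log 2 u) (Nat.log 2 N + 1), ∑ n ∈ T with Nat.log 2 n = j, φ n / n :=
        (sum_fiberwise_of_maps_to hlog _).symm
    _ ≤ ∑ j ∈ Ico (Nat.log 2 u) (Nat.log 2 N + 1),
          (a * (2 ^ j * φ (2 ^ j)) + b * c * (1 / 2) ^ j) :=
        sum_le_sum fun j _ ↦ sum_div_filter_log_eq_le hφ0 hφ hT0 hb hc
          (by exact_mod_cast hcard (2 ^ j) Nat.one_le_two_pow)
    _ = a * ∑ j ∈ Ico (Nat.log 2 u) (Nat.log 2 N + 1), 2 ^ j * φ (2 ^ j) +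
          b * c * ∑ j ∈ Ico (Nat.log 2 u) (Nat.log 2 N + 1), (1 / 2 : ℝ) ^ j := by
        rw [sum_add_distrib, mul_sum, mul_sum]
    _ ≤ a * (2 * ∑ n ∈ Icc 1 N, φ n) + b * c * (4 / u) := by
        gcongr
        exact sum_Ico_log_half_pow_le hu _
    _ = 2 * a * ∑ n ∈ Icc 1 N, φ n + 4 * b * c / u := by ring

end AntitoneSums

section PairSums

lemma sum_Icc_sum_Icc_div_comm {M : Type*} [AddCommMonoid M] (f : ℕ → ℕ → M) (Q : ℕ) :
    ∑ d ∈ Icc 1 Q, ∑ n ∈ Icc 1 (Q / d), f d n = ∑ n ∈ Icc 1 Q, ∑ d ∈ Icc 1 (Q / n), f d n := by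
  refine sum_comm' fun d n ↦ ?_
  simp only [mem_Icc]
  constructor
  · rintro ⟨⟨hd, -⟩, hn, hnQ⟩
    rw [Nat.le_div_iff_mul_le hd] at hnQ
    exact ⟨⟨hd, (Nat.le_div_iff_mul_le hn).2 (by rwa [mul_comm])⟩, hn, by nlinarith⟩
  · rintro ⟨⟨hd, hdQ⟩, hn, -⟩
    rw [Nat.le_div_iff_mul_le hn] at hdQ
    exact ⟨⟨hd, by nlinarith⟩, hn, (Nat.le_div_iff_mul_le hd).2 (by rwa [mul_comm])⟩

lemma sum_sum_Icc_eq_of_symm {R : Type*} [CommSemiring R] {f : ℕ → ℕ → R}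
    (hf : ∀ q r, f q r = f r q) (Q : ℕ) :
    ∑ q ∈ Icc 1 Q, ∑ r ∈ Icc 1 Q, f q r =
      ∑ q ∈ Icc 1 Q, f q q + 2 * ∑ q ∈ Icc 1 Q, ∑ r ∈ Ioc q Q, f q r := by
  have hsplit : ∀ q ∈ Icc 1 Q,
      ∑ r ∈ Icc 1 Q, f q r = ∑ r ∈ Ico 1 q, f q r + (f q q + ∑ r ∈ Ioc q Q, f q r) := by
    intro q hq
    obtain ⟨hq₁, hqQ⟩ := mem_Icc.1 hq
    rw [add_sum_Ioc_eq_sum_Icc hqQ, ← Ico_add_one_right_eq_Icc, ← Ico_add_one_right_eq_Icc,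
      sum_Ico_consecutive _ hq₁ (by omega)]
  have hswap : ∑ q ∈ Icc 1 Q, ∑ r ∈ Ico 1 q, f q r = ∑ q ∈ Icc 1 Q, ∑ r ∈ Ioc q Q, f q r := by
    refine (sum_comm' fun q r ↦ ?_).trans
      (sum_congr rfl fun r _ ↦ sum_congr rfl fun q _ ↦ hf q r)
    simp only [mem_Icc, mem_Ico, mem_Ioc]
    omega
  rw [sum_congr rfl hsplit, sum_add_distrib, sum_add_distrib, hswap]
  ring

lemma sum_Icc_sum_Ioc_eq_sum_coprime {M : Type*} [AddCommMonoid M] (f : ℕ → ℕ → M) (Q : ℕ) :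
    ∑ q ∈ Icc 1 Q, ∑ r ∈ Ioc q Q, f q r =
      ∑ d ∈ Icc 1 Q, ∑ u ∈ Icc 1 (Q / d), ∑ v ∈ Ioc u (Q / d) with u.Coprime v,
        f (d * u) (d * v) := by
  simp only [sum_sigma']
  refine sum_nbij' (fun x ↦ ⟨x.1.gcd x.2, x.1 / x.1.gcd x.2, x.2 / x.1.gcd x.2⟩)
    (fun x ↦ ⟨x.1 * x.2.1, x.1 * x.2.2⟩) ?_ ?_ ?_ ?_ ?_
  · rintro ⟨q, r⟩ hqr
    simp only [mem_sigma, mem_Icc, mem_Ioc] at hqr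
    have hd := Nat.gcd_pos_of_pos_left r hqr.1.1
    have hdq := Nat.gcd_dvd_left q r
    have hdr := Nat.gcd_dvd_right q r
    simp only [mem_sigma, mem_Icc, mem_filter, mem_Ioc]
    exact ⟨⟨hd, (Nat.le_of_dvd hqr.1.1 hdq).trans hqr.1.2⟩,
      ⟨Nat.div_pos (Nat.le_of_dvd hqr.1.1 hdq) hd, Nat.div_le_div_right hqr.1.2⟩,
      ⟨Nat.div_lt_div_of_lt_of_dvd hdr hqr.2.1, Nat.div_le_div_right hqr.2.2⟩,
      Nat.coprime_div_gcd_div_gcd hd⟩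
  · rintro ⟨d, u, v⟩ h
    simp only [mem_sigma, mem_Icc, mem_filter, mem_Ioc] at h ⊢
    obtain ⟨⟨hd, -⟩, ⟨hu, huQ⟩, ⟨huv, hvQ⟩, -⟩ := h
    exact ⟨⟨Nat.mul_pos hd hu, (Nat.mul_le_mul_left d huQ).trans (Nat.mul_div_le Q d)⟩,
      Nat.mul_lt_mul_of_pos_left huv hd,
      (Nat.mul_le_mul_left d hvQ).trans (Nat.mul_div_le Q d)⟩
  · rintro ⟨q, r⟩ -
    simp only [Nat.mul_div_cancel' (Nat.gcd_dvd_left q r),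
      Nat.mul_div_cancel' (Nat.gcd_dvd_right q r)]
  · rintro ⟨d, u, v⟩ h
    simp only [mem_sigma, mem_Icc, mem_filter, mem_Ioc] at h
    obtain ⟨⟨hd, -⟩, -, -, hcop⟩ := h
    simp only [Nat.gcd_mul_left, hcop.gcd_eq_one, mul_one, Nat.mul_div_cancel_left _ hd]
  · rintro ⟨q, r⟩ -
    simp only [Nat.mul_div_cancel' (Nat.gcd_dvd_left q r),
      Nat.mul_div_cancel' (Nat.gcd_dvd_right q r)]

lemma summable_one_div_mul_sqrt : Summable fun n : ℕ ↦ 1 / (n * √n) := by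
  refine (Real.summable_one_div_nat_rpow.2 (by norm_num : (1 : ℝ) < 1 + 1 / 2)).congr fun n ↦ ?_
  rw [Real.rpow_add_of_nonneg n.cast_nonneg (by norm_num) (by norm_num), Real.rpow_one,
    Real.sqrt_eq_rpow]

lemma sum_sum_Icc_mul_div_left_le {φ : ℕ → ℝ} (hφ0 : ∀ n, 0 ≤ φ n) (hφ : AntitoneOn φ (Set.Ici 1))
    (Q : ℕ) :
    ∑ d ∈ Icc 1 Q, ∑ n ∈ Icc 1 (Q / d), φ (d * n) / d ≤
      (∑' d : ℕ, 1 / (d : ℝ) ^ 2) * ∑ n ∈ Icc 1 Q, φ n := by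
  have hsum0 : 0 ≤ ∑ n ∈ Icc 1 Q, φ n := sum_nonneg fun n _ ↦ hφ0 n
  calc ∑ d ∈ Icc 1 Q, ∑ n ∈ Icc 1 (Q / d), φ (d * n) / d
      ≤ ∑ d ∈ Icc 1 Q, 1 / (d : ℝ) ^ 2 * ∑ n ∈ Icc 1 Q, φ n := by
        refine sum_le_sum fun d hd ↦ ?_
        rw [← sum_div, one_div_mul_eq_div, sq, ← div_div]
        gcongr
        exact sum_Icc_mul_le hφ0 hφ (mem_Icc.1 hd).1 Q
    _ ≤ (∑' d : ℕ, 1 / (d : ℝ) ^ 2) * ∑ n ∈ Icc 1 Q, φ n := by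
        rw [← sum_mul]
        gcongr
        exact (Real.summable_one_div_nat_pow.2 one_lt_two).sum_le_tsum _ fun n _ ↦ by positivity

lemma sum_sum_Icc_mul_div_right_le {φ : ℕ → ℝ} (hφ0 : ∀ n, 0 ≤ φ n)
    (hφ : AntitoneOn φ (Set.Ici 1)) (Q : ℕ) :
    ∑ d ∈ Icc 1 Q, ∑ n ∈ Icc 1 (Q / d), φ (d * n) / n ≤
      (∑' d : ℕ, 1 / (d : ℝ) ^ 2) * ∑ n ∈ Icc 1 Q, φ n := by
  rw [sum_Icc_sum_Icc_div_comm]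
  refine (sum_le_sum fun n _ ↦ sum_le_sum fun d _ ↦ ?_).trans
    (sum_sum_Icc_mul_div_left_le hφ0 hφ Q)
  rw [mul_comm]

lemma sum_sum_Icc_one_div_mul_sqrt_le (Q : ℕ) :
    ∑ d ∈ Icc 1 Q, ∑ u ∈ Icc 1 (Q / d), 1 / (d * √d) * (1 / (u * √u)) ≤
      (∑' n : ℕ, 1 / (n * √n)) ^ 2 := by
  have hle : ∀ N : ℕ, ∑ n ∈ Icc 1 N, 1 / (n * √n) ≤ ∑' n : ℕ, 1 / (n * √n) := fun N ↦
    summable_one_div_mul_sqrt.sum_le_tsum _ fun n _ ↦ by positivity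
  calc ∑ d ∈ Icc 1 Q, ∑ u ∈ Icc 1 (Q / d), 1 / (d * √d) * (1 / (u * √u))
      ≤ ∑ d ∈ Icc 1 Q, 1 / (d * √d) * ∑' n : ℕ, 1 / (n * √n) := by
        refine sum_le_sum fun d _ ↦ ?_
        rw [← mul_sum]
        gcongr
        exact hle _
    _ ≤ (∑' n : ℕ, 1 / (n * √n)) ^ 2 := by
        rw [← sum_mul, sq]
        exact mul_le_mul_of_nonneg_right (hle Q) (tsum_nonneg fun n ↦ by positivity)

end PairSums

lemma add_mul_add_mul_sq_le {a b c s t : ℝ} (ha : 0 ≤ a) (hb : 0 ≤ b) (ht : 0 < t)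
    (hts : t ≤ s) : a + b * s + c * s ^ 2 ≤ (a / t ^ 2 + b / t + c) * s ^ 2 := by
  have hs : 0 < s := ht.trans_le hts
  have h₁ : a ≤ a / t ^ 2 * s ^ 2 := by
    rw [div_mul_eq_mul_div, le_div_iff₀ (by positivity)]
    gcongr
  have h₂ : b * s ≤ b / t * s ^ 2 := by
    rw [div_mul_eq_mul_div, le_div_iff₀ ht, sq, ← mul_assoc]
    gcongr
  linarith

/-! ### Dirichlet approximations -/

/-- `A / B` approximates `γ` as in Dirichlet's theorem for denominators up to `N`. -/
structure IsDirichletApprox (γ N : ℝ) (A : ℤ) (B : ℕ) : Prop where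
  pos : 0 < B
  isCoprime : IsCoprime A B
  le : (B : ℝ) ≤ N
  abs_sub_lt : |γ - A / B| < 1 / (N * B)

lemma one_div_sub_le_abs_mul_sub {A : ℤ} {B k : ℕ} (hB : 0 < B) (hAB : IsCoprime A B)
    (hk : ¬ B ∣ k) (γ : ℝ) (n : ℤ) :
    1 / (B : ℝ) - k * |B * γ - A| / B ≤ |k * γ - n| := by
  have hne : (k : ℤ) * A - n * B ≠ 0 := fun h ↦ hk <| Int.natCast_dvd_natCast.1 <|
    hAB.symm.dvd_of_dvd_mul_right ⟨n, by linarith⟩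
  have hone : (1 : ℝ) ≤ |(k : ℝ) * A - n * B| := by exact_mod_cast Int.one_le_abs hne
  have htri : |(k : ℝ) * A - n * B| ≤ B * |k * γ - n| + k * |B * γ - A| := by
    calc |(k : ℝ) * A - n * B| = |B * (k * γ - n) - k * (B * γ - A)| := by ring_nf
      _ ≤ |B * (k * γ - n)| + |k * (B * γ - A)| := abs_sub _ _
      _ = _ := by simp only [abs_mul, Nat.abs_cast]
  rw [← sub_div, div_le_iff₀ (by positivity)]
  linarith

namespace IsDirichletApprox

variable {γ N : ℝ} {A : ℤ} {B : ℕ}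

lemma one_le (h : IsDirichletApprox γ N A B) : 1 ≤ (B : ℝ) := by exact_mod_cast h.pos

lemma abs_mul_sub_lt (h : IsDirichletApprox γ N A B) : |B * γ - A| < 1 / N := by
  have hB : (0 : ℝ) < B := by exact_mod_cast h.pos
  calc |B * γ - A| = B * |γ - A / B| := by
        rw [← Nat.abs_cast B, ← abs_mul, Nat.abs_cast, mul_sub, mul_div_cancel₀ _ hB.ne']
    _ < B * (1 / (N * B)) := by gcongr; exact h.abs_sub_lt
    _ = 1 / N := by field_simp

lemma abs_mul_sub_lt_one_div (h : IsDirichletApprox γ N A B) : |B * γ - A| < 1 / B :=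
  h.abs_mul_sub_lt.trans_le <|
    one_div_le_one_div_of_le (zero_lt_one.trans_le h.one_le) h.le

lemma one_div_le_abs_mul_sub (h : IsDirichletApprox γ N A B) {k : ℕ} (hk : 1 ≤ k)
    (hkB : k ≤ (B : ℝ) / 2) (n : ℤ) : 1 / (2 * B : ℝ) ≤ |k * γ - n| := by
  have hB := h.one_le
  have hndvd : ¬ B ∣ k := fun hdvd ↦ by
    have : (B : ℝ) ≤ k := by exact_mod_cast Nat.le_of_dvd hk hdvd
    linarith
  have hkη : k * |B * γ - A| ≤ 1 / 2 :=
    calc k * |B * γ - A| ≤ B / 2 * (1 / B) := by gcongr; exact h.abs_mul_sub_lt_one_div.le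
      _ = 1 / 2 := by field_simp
  calc 1 / (2 * B : ℝ) = 1 / B - 1 / 2 / B := by field_simp; norm_num
    _ ≤ 1 / B - k * |B * γ - A| / B := by gcongr
    _ ≤ _ := one_div_sub_le_abs_mul_sub h.pos h.isCoprime hndvd γ n

lemma half_abs_le_abs_mul_sub (h : IsDirichletApprox γ N A B) {k : ℕ} (hk : 1 ≤ k)
    (hkη : k * |B * γ - A| ≤ 1 / 2) (n : ℤ) : |B * γ - A| / 2 ≤ |k * γ - n| := by
  have hB := h.one_le
  have hη := h.abs_mul_sub_lt_one_div
  have hη0 := abs_nonneg (B * γ - A)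
  by_cases hdvd : B ∣ k
  · obtain ⟨i, rfl⟩ := hdvd
    have hi : (1 : ℝ) ≤ i := by exact_mod_cast Nat.pos_of_mul_pos_left hk
    have hiη : i * |B * γ - A| ≤ 1 / 2 := by
      refine le_trans ?_ hkη
      push_cast
      gcongr
      nlinarith
    have hexp : ((B * i : ℕ) : ℝ) * γ - n = i * (B * γ - A) - ((n - i * A : ℤ) : ℝ) := by
      push_cast; ring
    have habs : |i * (B * γ - A)| = i * |B * γ - A| := by rw [abs_mul, Nat.abs_cast]
    rw [hexp]
    rcases eq_or_ne (n - i * A) 0 with hz | hz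
    · rw [hz, Int.cast_zero, sub_zero, habs]
      nlinarith
    · have hone : (1 : ℝ) ≤ |((n - i * A : ℤ) : ℝ)| := by exact_mod_cast Int.one_le_abs hz
      have htri := abs_sub_abs_le_abs_sub ((n - i * A : ℤ) : ℝ) (i * (B * γ - A))
      rw [abs_sub_comm, habs] at htri
      nlinarith
  · calc |B * γ - A| / 2 ≤ 1 / B / 2 := by gcongr
      _ = 1 / B - 1 / 2 / B := by field_simp; norm_num
      _ ≤ 1 / B - k * |B * γ - A| / B := by gcongr
      _ ≤ _ := one_div_sub_le_abs_mul_sub h.pos h.isCoprime hdvd γ n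

end IsDirichletApprox

/-- The condition on `u < v` that remains when fractions `(a + γ) / (d * u)` and
`(b + γ) / (d * v)` with error bound `p` are so close that their intervals may meet, but `A / B`
does not approximate `γ` well enough to force `v * (a * B + A) = u * (b * B + A)`. The integer `n`
stands for `u * b - v * a`, and `p` for `ψ (d * u)`. -/
def IsResonant (γ : ℝ) (A : ℤ) (B : ℕ) (p : ℝ) (u v : ℕ) : Prop :=
  (∃ n : ℤ, |v * γ - u * γ - n| < 2 * v * p) ∧
    (1 < 4 * B * v * p ∨ 1 < 2 * v * |B * γ - A|)

namespace IsDirichletApprox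

variable {γ N : ℝ} {A : ℤ} {B : ℕ} {p R β : ℝ} {T : Finset ℕ}

lemma card_le_of_one_le_mul (h : IsDirichletApprox γ N A B) (hp : 0 ≤ p) (hpN : p * N ^ 2 ≤ 1)
    (hR : 1 ≤ R) (hBR : 1 ≤ 8 * B * R * p) (hT : ∀ t ∈ T, R ≤ t ∧ t ≤ 2 * R)
    (hnear : ∀ t ∈ T, ∃ n : ℤ, |t * γ - β - n| < 4 * R * p) :
    (#T : ℝ) ≤ 576 * R ^ 2 * p := by
  have hB := h.one_le
  have hB8R : (B : ℝ) ≤ 8 * R := by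
    have hpB : p * B ^ 2 ≤ 1 := hpN.trans' (by gcongr; exact h.le)
    have hBp : 0 < B * p := by
      by_contra! hneg
      nlinarith
    refine le_of_mul_le_mul_right ?_ hBp
    linarith
  have hlen : (2 * R - R) / (B / 2) + 2 ≤ 18 * R / B := by
    rw [div_add' _ _ _ (by positivity), div_le_div_iff₀ (by positivity) (by positivity)]
    nlinarith
  have hwidth : 2 * (4 * R * p) / (1 / (2 * B)) + 2 ≤ 32 * R * p * B := by
    rw [div_div_eq_mul_div]
    linarith
  calc (#T : ℝ) ≤ ((2 * R - R) / (B / 2) + 2) * (2 * (4 * R * p) / (1 / (2 * B)) + 2) :=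
        card_le_of_separated (by positivity) (by positivity)
          (fun _ ↦ h.one_div_le_abs_mul_sub) (by linarith) (by positivity) hT hnear
    _ ≤ 18 * R / B * (32 * R * p * B) := by gcongr
    _ = 576 * R ^ 2 * p := by field_simp; ring

lemma card_le_of_one_le_mul_abs (h : IsDirichletApprox γ N A B) (hp : 0 ≤ p) (hR : 1 ≤ R)
    (hηR : 1 ≤ 4 * R * |B * γ - A|) (hT : ∀ t ∈ T, R ≤ t ∧ t ≤ 2 * R)
    (hnear : ∀ t ∈ T, ∃ n : ℤ, |t * γ - β - n| < 4 * R * p) :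
    (#T : ℝ) ≤ 160 * R ^ 2 * p + 20 * R / N := by
  have hηN := h.abs_mul_sub_lt.le
  have hsep : ∀ k : ℕ, 1 ≤ k → k ≤ 1 / (2 * |B * γ - A|) → ∀ n : ℤ,
      |B * γ - A| / 2 ≤ |k * γ - n| := by
    intro k hk hkη n
    refine h.half_abs_le_abs_mul_sub hk ?_ n
    calc k * |B * γ - A| ≤ 1 / (2 * |B * γ - A|) * |B * γ - A| := by gcongr
      _ ≤ 1 / 2 := by field_simp; exact div_self_le_one _
  set η := |B * γ - A|
  have hη : 0 < η := by
    by_contra! hneg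
    nlinarith
  calc (#T : ℝ) ≤ ((2 * R - R) / (1 / (2 * η)) + 2) * (2 * (4 * R * p) / (η / 2) + 2) :=
        card_le_of_separated (by positivity) (by positivity) hsep (by linarith) (by positivity)
          hT hnear
    _ = (2 * R * η + 2) * (16 * R * p / η + 2) := by field_simp; ring
    _ ≤ (10 * R * η) * (16 * R * p / η + 2) := by gcongr; linarith
    _ = 160 * R ^ 2 * p + 20 * R * η := by field_simp; ring
    _ ≤ 160 * R ^ 2 * p + 20 * R * (1 / N) := by gcongr
    _ = _ := by ring

lemma card_resonant_le (h : IsDirichletApprox γ N A B) (hp : 0 ≤ p) (hpN : p * N ^ 2 ≤ 1)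
    (hR : 1 ≤ R) {u : ℕ} (hT : ∀ t ∈ T, R ≤ t ∧ t ≤ 2 * R)
    (hres : ∀ t ∈ T, IsResonant γ A B p u t) :
    (#T : ℝ) ≤ 736 * R ^ 2 * p + 20 * R / N := by
  classical
  have hN : 0 < N := zero_lt_one.trans_le (h.one_le.trans h.le)
  have hnear : ∀ t ∈ T, ∃ n : ℤ, |t * γ - u * γ - n| < 4 * R * p := fun t ht ↦ by
    obtain ⟨⟨n, hn⟩, -⟩ := hres t ht
    exact ⟨n, hn.trans_le (by nlinarith [hT t ht])⟩
  let T₁ : Finset ℕ := {t ∈ T | 1 < 4 * B * (t : ℝ) * p}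
  let T₂ : Finset ℕ := {t ∈ T | 1 < 2 * (t : ℝ) * |B * γ - A|}
  have hT₁ : (#T₁ : ℝ) ≤ 576 * R ^ 2 * p := by
    rcases T₁.eq_empty_or_nonempty with hempty | ⟨t, ht⟩
    · rw [hempty, card_empty, Nat.cast_zero]; positivity
    obtain ⟨htT, ht⟩ := mem_filter.1 ht
    have hBp : 4 * B * t * p ≤ 4 * B * (2 * R) * p := by gcongr; exact (hT t htT).2
    exact h.card_le_of_one_le_mul hp hpN hR (by linarith)
      (fun t ht ↦ hT t (mem_of_mem_filter t ht)) fun t ht ↦ hnear t (mem_of_mem_filter t ht)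
  have hT₂ : (#T₂ : ℝ) ≤ 160 * R ^ 2 * p + 20 * R / N := by
    rcases T₂.eq_empty_or_nonempty with hempty | ⟨t, ht⟩
    · rw [hempty, card_empty, Nat.cast_zero]; positivity
    obtain ⟨htT, ht⟩ := mem_filter.1 ht
    have hη : 2 * t * |B * γ - A| ≤ 2 * (2 * R) * |B * γ - A| := by gcongr; exact (hT t htT).2
    exact h.card_le_of_one_le_mul_abs hp hR (by linarith)
      (fun t ht ↦ hT t (mem_of_mem_filter t ht)) fun t ht ↦ hnear t (mem_of_mem_filter t ht)
  have hcover : T ⊆ T₁ ∪ T₂ := fun t ht ↦ by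
    rw [← filter_or]
    exact mem_filter.2 ⟨ht, (hres t ht).2⟩
  have hcard : (#T : ℝ) ≤ #T₁ + #T₂ := by
    exact_mod_cast (card_le_card hcover).trans (card_union_le _ _)
  linarith

end IsDirichletApprox

/-! ### Overlaps -/

/-- The set `S(q)` of residues `a < q` with `a * B + A` coprime to `q`. -/
def shiftedCoprimes (A : ℤ) (B q : ℕ) : Set ℕ := {a | a < q ∧ IsCoprime (a * B + A) (q : ℤ)}

/-- The interval of radius `δ / q` about `(a + γ) / q`. -/
def approxInterval (γ δ : ℝ) (q a : ℕ) : Set ℝ := Set.Ioo ((a + γ - δ) / q) ((a + γ + δ) / q)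

/-- The set `A_q'(ψ, γ)` with `δ = ψ q`, before it is intersected with `[0, 1]`. -/
def approxSet (γ δ : ℝ) (A : ℤ) (B q : ℕ) : Set ℝ :=
  ⋃ a ∈ shiftedCoprimes A B q, approxInterval γ δ q a

section Overlap

variable {γ δ δ' : ℝ} {A A' : ℤ} {B B' d u v : ℕ}

lemma mem_approxInterval_iff {q : ℕ} (hq : 0 < q) (a : ℕ) (x : ℝ) :
    x ∈ approxInterval γ δ q a ↔ |q * x - (a + γ)| < δ := by
  have hq' : (0 : ℝ) < q := by exact_mod_cast hq
  rw [approxInterval, Set.mem_Ioo, div_lt_iff₀' hq', lt_div_iff₀' hq', abs_sub_lt_iff]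
  constructor <;> rintro ⟨h₁, h₂⟩ <;> constructor <;> linarith

lemma volume_approxInterval_ne_top (q a : ℕ) : volume (approxInterval γ δ q a) ≠ ⊤ :=
  measure_Ioo_lt_top.ne

lemma volume_real_approxInterval (hδ : 0 ≤ δ) (q a : ℕ) :
    volume.real (approxInterval γ δ q a) = 2 * δ / q := by
  rw [approxInterval, Real.volume_real_Ioo_of_le (by gcongr; linarith)]
  ring

lemma approxSet_subset (γ δ : ℝ) (A : ℤ) (B q : ℕ) :
    approxSet γ δ A B q ⊆ ⋃ a ∈ range q, approxInterval γ δ q a :=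
  Set.biUnion_mono (fun _ ha ↦ mem_coe.2 (mem_range.2 ha.1)) fun _ _ ↦ subset_rfl

lemma volume_approxSet_ne_top (q : ℕ) : volume (approxSet γ δ A B q) ≠ ⊤ :=
  measure_ne_top_of_subset (approxSet_subset γ δ A B q) <|
    measure_biUnion_ne_top (range q).finite_toSet fun a _ ↦ volume_approxInterval_ne_top q a

lemma volume_real_approxSet_le (hδ : 0 ≤ δ) (q : ℕ) :
    volume.real (approxSet γ δ A B q) ≤ 2 * δ := by
  refine (measureReal_le_card_mul (approxSet_subset γ δ A B q)
    (fun a _ ↦ volume_approxInterval_ne_top q a)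
    fun a _ ↦ (volume_real_approxInterval hδ q a).le).trans ?_
  rw [card_range]
  calc q * (2 * δ / q) = 2 * δ * (q / q) := by ring
    _ ≤ 2 * δ := mul_le_of_le_one_right (by positivity) (div_self_le_one _)

lemma abs_mul_sub_lt_of_mem_approxInterval (hdu : 0 < d * u) (huv : u < v) (hδ : δ' ≤ δ)
    {a b : ℕ} {x : ℝ} (ha : x ∈ approxInterval γ δ (d * u) a)
    (hb : x ∈ approxInterval γ δ' (d * v) b) :
    |v * (a + γ) - u * (b + γ)| < 2 * v * δ := by
  have huv' : (u : ℝ) ≤ v := by exact_mod_cast huv.le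
  have hv : (0 : ℝ) < v := by exact_mod_cast (Nat.zero_le u).trans_lt huv
  rw [mem_approxInterval_iff hdu] at ha
  rw [mem_approxInterval_iff (hdu.trans_le (by gcongr))] at hb
  push_cast at ha hb
  calc |v * (a + γ) - u * (b + γ)|
      = |u * (d * v * x - (b + γ)) - v * (d * u * x - (a + γ))| := by ring_nf
    _ ≤ u * |d * v * x - (b + γ)| + v * |d * u * x - (a + γ)| := by
        refine (abs_sub _ _).trans_eq ?_
        rw [abs_mul, abs_mul, Nat.abs_cast, Nat.abs_cast]
    _ ≤ v * δ + v * |d * u * x - (a + γ)| := by gcongr; exact hb.le.trans hδ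
    _ < v * δ + v * δ := by gcongr
    _ = 2 * v * δ := by ring

lemma card_abs_mul_sub_mul_sub_lt_le (huv : u.Coprime v) (hu : 0 < u) {W : Finset (ℕ × ℕ)}
    {x ε : ℝ} (hε : 0 ≤ ε) (hW : ∀ p ∈ W, p.1 < d * u ∧ |(v * p.1 - u * p.2 : ℝ) - x| < ε) :
    (#W : ℝ) ≤ d * (2 * ε + 2) := by
  have hcard : #W ≤ #(range d ×ˢ Icc ⌊x - ε⌋ ⌊x + ε⌋) := by
    refine card_le_card_of_injOn (fun p : ℕ × ℕ ↦ (p.1 / u, (v * p.1 - u * p.2 : ℤ))) ?_ ?_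
    · rintro ⟨a, b⟩ hab
      obtain ⟨ha, hab⟩ := hW _ hab
      obtain ⟨hl, hr⟩ := abs_lt.1 hab
      rw [mem_coe, mem_product, mem_range, mem_Icc, Int.floor_le_iff, Int.le_floor]
      push_cast
      exact ⟨(Nat.div_lt_iff_lt_mul hu).2 ha, by linarith, by linarith⟩
    · rintro ⟨a, b⟩ - ⟨a', b'⟩ - heq
      obtain ⟨hdiv, hlin⟩ := Prod.mk.inj heq
      have hlin' : (v : ℤ) * (a' - a) = u * (b' - b) := by linarith
      have hdvd : (u : ℤ) ∣ a' - a :=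
        (Nat.isCoprime_iff_coprime.2 huv).dvd_of_dvd_mul_left ⟨_, hlin'⟩
      have ha : a = a' := by
        rw [← Nat.div_add_mod a u, ← Nat.div_add_mod a' u, hdiv, Nat.modEq_iff_dvd.2 hdvd]
      have hb : (b : ℤ) = b' := by
        rw [ha, sub_self, mul_zero, zero_eq_mul, or_iff_right (by exact_mod_cast hu.ne')] at hlin'
        linarith
      rw [ha, Int.natCast_inj.1 hb]
  calc (#W : ℝ) ≤ d * #(Icc ⌊x - ε⌋ ⌊x + ε⌋) := by
        rw [card_product, card_range] at hcard; exact_mod_cast hcard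
    _ ≤ d * (x + ε - (x - ε) + 2) := by gcongr; exact card_Icc_floor_le (by linarith)
    _ = d * (2 * ε + 2) := by ring

lemma volume_real_approxSet_inter_le (hd : 0 < d) (hu : 0 < u) (huv : u < v)
    (hcop : u.Coprime v) (hδ' : 0 ≤ δ') (hδ : δ' ≤ δ) :
    volume.real (approxSet γ δ A B (d * u) ∩ approxSet γ δ' A' B' (d * v)) ≤
      8 * δ * δ' + 4 * δ' / v := by
  classical
  have hv : 0 < v := hu.trans huv
  let W : Finset (ℕ × ℕ) :=
    {p ∈ range (d * u) ×ˢ range (d * v) | |(v * p.1 - u * p.2 : ℝ) - (u - v) * γ| < 2 * v * δ}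
  have hcover : approxSet γ δ A B (d * u) ∩ approxSet γ δ' A' B' (d * v) ⊆
      ⋃ p ∈ W, approxInterval γ δ' (d * v) p.2 := by
    rintro x ⟨hx, hx'⟩
    obtain ⟨a, ha, hxa⟩ := Set.mem_iUnion₂.1 hx
    obtain ⟨b, hb, hxb⟩ := Set.mem_iUnion₂.1 hx'
    have hab := abs_mul_sub_lt_of_mem_approxInterval (Nat.mul_pos hd hu) huv hδ hxa hxb
    refine Set.mem_iUnion₂.2 ⟨(a, b), mem_filter.2 ⟨mk_mem_product (mem_range.2 ha.1)
      (mem_range.2 hb.1), ?_⟩, hxb⟩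
    convert hab using 2
    ring
  have hcard : (#W : ℝ) ≤ d * (2 * (2 * v * δ) + 2) :=
    card_abs_mul_sub_mul_sub_lt_le hcop hu (mul_nonneg (by positivity) (hδ'.trans hδ)) fun p hp ↦
      have hp := mem_filter.1 hp
      ⟨mem_range.1 (mem_product.1 hp.1).1, hp.2⟩
  calc volume.real (approxSet γ δ A B (d * u) ∩ approxSet γ δ' A' B' (d * v))
      ≤ #W * (2 * δ' / ((d * v : ℕ) : ℝ)) :=
        measureReal_le_card_mul hcover (fun p _ ↦ volume_approxInterval_ne_top _ _)
          fun p _ ↦ (volume_real_approxInterval hδ' _ _).le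
    _ ≤ d * (2 * (2 * v * δ) + 2) * (2 * δ' / ((d * v : ℕ) : ℝ)) := by gcongr
    _ = 8 * δ * δ' + 4 * δ' / v := by push_cast; field_simp; ring

lemma mul_eq_mul_of_abs_lt {a b : ℕ} (hB : 0 < B) (huv : u ≤ v)
    (hab : |v * (a + γ) - u * (b + γ)| < 2 * v * δ) (hδ : 4 * B * v * δ ≤ 1)
    (hη : 2 * v * |B * γ - A| ≤ 1) :
    (v * (a * B + A) : ℤ) = u * (b * B + A) := by
  have huv' : (u : ℝ) ≤ v := by exact_mod_cast huv
  have hvu : |(v : ℝ) - u| ≤ v := by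
    rw [abs_of_nonneg (sub_nonneg.2 huv')]
    exact sub_le_self _ (Nat.cast_nonneg u)
  have hlt : |(v * (a * B + A) - u * (b * B + A) : ℝ)| < 1 :=
    calc |(v * (a * B + A) - u * (b * B + A) : ℝ)|
        = |B * (v * (a + γ) - u * (b + γ)) - (v - u) * (B * γ - A)| := by ring_nf
      _ ≤ B * |v * (a + γ) - u * (b + γ)| + |(v : ℝ) - u| * |B * γ - A| := by
          refine (abs_sub _ _).trans_eq ?_
          rw [abs_mul, abs_mul, Nat.abs_cast]
      _ < B * (2 * v * δ) + v * |B * γ - A| :=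
          add_lt_add_of_lt_of_le (by gcongr) (by gcongr)
      _ ≤ 1 := by linarith
  exact sub_eq_zero.1 (Int.abs_lt_one_iff.1 (by exact_mod_cast hlt))

lemma eq_one_or_isResonant_of_inter_nonempty (hB : 0 < B) (hd : 0 < d) (hu : 0 < u) (huv : u < v)
    (hcop : u.Coprime v) (hδ : δ' ≤ δ)
    (hne : (approxSet γ δ A B (d * u) ∩ approxSet γ δ' A' B' (d * v)).Nonempty) :
    u = 1 ∨ IsResonant γ A B δ u v := by
  obtain ⟨x, hx, hx'⟩ := hne
  obtain ⟨a, ha, hxa⟩ := Set.mem_iUnion₂.1 hx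
  obtain ⟨b, -, hxb⟩ := Set.mem_iUnion₂.1 hx'
  have hab := abs_mul_sub_lt_of_mem_approxInterval (Nat.mul_pos hd hu) huv hδ hxa hxb
  refine or_iff_not_imp_right.2 fun hres ↦ ?_
  have hnear : ∃ n : ℤ, |v * γ - u * γ - n| < 2 * v * δ := by
    refine ⟨u * b - v * a, ?_⟩
    convert hab using 2
    push_cast
    ring
  rw [IsResonant, and_iff_right hnear, not_or, not_lt, not_lt] at hres
  have heq := mul_eq_mul_of_abs_lt hB huv.le hab hres.1 hres.2
  have hdvd : (u : ℤ) ∣ a * B + A :=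
    (Nat.isCoprime_iff_coprime.2 hcop).dvd_of_dvd_mul_left ⟨_, heq⟩
  have hunit : IsUnit (u : ℤ) :=
    ha.2.isUnit_of_dvd' hdvd ⟨d, by push_cast; ring⟩
  exact Nat.isUnit_iff.1 (Int.ofNat_isUnit.1 hunit)

end Overlap

lemma IsDirichletApprox.sum_div_le_of_isResonant {γ N : ℝ} {A : ℤ} {B : ℕ}
    (h : IsDirichletApprox γ N A B) {p : ℝ} (hp : 0 ≤ p) (hpN : p * N ^ 2 ≤ 1) {φ : ℕ → ℝ}
    (hφ0 : ∀ n, 0 ≤ φ n) (hφ : AntitoneOn φ (Set.Ici 1)) {c : ℝ}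
    (hc : ∀ n : ℕ, 1 ≤ n → φ n ≤ c / n) {u M : ℕ} (hu : 0 < u) (huM : u ≤ M) {T : Finset ℕ}
    (hT : T ⊆ Icc u M) (hres : ∀ v ∈ T, IsResonant γ A B p u v) :
    ∑ v ∈ T, φ v / v ≤ 1472 * p * ∑ n ∈ Icc 1 M, φ n + 80 * c / (N * u) := by
  have hN : 0 < N := zero_lt_one.trans_le (h.one_le.trans h.le)
  have hcard : ∀ R : ℕ, 1 ≤ R →
      #{v ∈ T | R ≤ v ∧ v < 2 * R} ≤ 736 * p * (R : ℝ) ^ 2 + 20 / N * R := fun R hR ↦ by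
    refine (h.card_resonant_le hp hpN (R := R) (by exact_mod_cast hR) (fun v hv ↦ ?_)
      fun v hv ↦ hres v (mem_of_mem_filter v hv)).trans_eq (by ring)
    obtain ⟨-, hRv, hvR⟩ := mem_filter.1 hv
    exact ⟨by exact_mod_cast hRv, by exact_mod_cast hvR.le⟩
  refine (sum_div_le_of_dyadic_card_le hφ0 hφ hu huM hT (by positivity) (by positivity) hc
    hcard).trans_eq ?_
  field_simp
  ring

/-- The measure of the overlap `A_q' ∩ A_r'`, again before intersecting with `[0, 1]`. -/
noncomputable def overlap (γ : ℝ) (ψ : ℕ → ℝ) (A : ℕ → ℤ) (B : ℕ → ℕ) (q r : ℕ) : ℝ :=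
  volume.real (approxSet γ (ψ q) (A q) (B q) q ∩ approxSet γ (ψ r) (A r) (B r) r)

section Assembly

variable {γ : ℝ} {ψ : ℕ → ℝ} {A : ℕ → ℤ} {B : ℕ → ℕ}

lemma overlap_comm (q r : ℕ) : overlap γ ψ A B q r = overlap γ ψ A B r q := by
  rw [overlap, Set.inter_comm, overlap]

variable (hψ0 : ∀ q, 0 ≤ ψ q)

include hψ0 in
lemma overlap_le (q r : ℕ) : overlap γ ψ A B q r ≤ 2 * ψ q :=
  (measureReal_mono Set.inter_subset_left (volume_approxSet_ne_top q)).trans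
    (volume_real_approxSet_le (hψ0 q) q)

variable (hψ : AntitoneOn ψ (Set.Ici 1))

include hψ0 hψ in
lemma overlap_mul_mul_le {d u v : ℕ} (hd : 0 < d) (hu : 0 < u) (huv : u < v)
    (hcop : u.Coprime v) :
    overlap γ ψ A B (d * u) (d * v) ≤ 8 * ψ (d * u) * ψ (d * v) + 4 * (ψ (d * v) / v) := by
  rw [← mul_div_assoc]
  have hdu := Nat.mul_pos hd hu
  have hduv : d * u ≤ d * v := by gcongr
  exact volume_real_approxSet_inter_le hd hu huv hcop (hψ0 _)
    (hψ (Set.mem_Ici.2 hdu) (Set.mem_Ici.2 (hdu.trans_le hduv)) hduv)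

variable (hAB : ∀ q : ℕ, 1 ≤ q → IsDirichletApprox γ √q (A q) (B q))

include hψ hAB in
lemma overlap_mul_mul_eq_zero {d u v : ℕ} (hd : 0 < d) (hu : 0 < u) (huv : u < v)
    (hcop : u.Coprime v)
    (hres : ¬ (u = 1 ∨ IsResonant γ (A (d * u)) (B (d * u)) (ψ (d * u)) u v)) :
    overlap γ ψ A B (d * u) (d * v) = 0 := by
  have hdu := Nat.mul_pos hd hu
  have hduv : d * u ≤ d * v := by gcongr
  rw [overlap, Set.not_nonempty_iff_eq_empty.1 fun hne ↦ hres <|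
    eq_one_or_isResonant_of_inter_nonempty (hAB _ hdu).pos hd hu huv hcop
      (hψ (Set.mem_Ici.2 hdu) (Set.mem_Ici.2 (hdu.trans_le hduv)) hduv) hne, measureReal_empty]

open Classical in
include hψ0 hψ hAB in
lemma sum_overlap_mul_mul_le {d u : ℕ} (hd : 0 < d) (hu : 0 < u) {s : Finset ℕ}
    (hs : ∀ v ∈ s, u < v ∧ u.Coprime v) :
    ∑ v ∈ s, overlap γ ψ A B (d * u) (d * v) ≤ 8 * ψ (d * u) * ∑ v ∈ s, ψ (d * v) +
      4 * ∑ v ∈ s with u = 1 ∨ IsResonant γ (A (d * u)) (B (d * u)) (ψ (d * u)) u v,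
        ψ (d * v) / v := by
  rw [mul_sum, mul_sum, sum_filter, ← sum_add_distrib]
  refine sum_le_sum fun v hv ↦ ?_
  obtain ⟨huv, hcop⟩ := hs v hv
  split_ifs with hres
  · exact overlap_mul_mul_le hψ0 hψ hd hu huv hcop
  · rw [overlap_mul_mul_eq_zero hψ hAB hd hu huv hcop hres, add_zero]
    exact mul_nonneg (mul_nonneg (by norm_num) (hψ0 _)) (hψ0 _)

variable (hψle : ∀ q : ℕ, 1 ≤ q → ψ q ≤ 1 / q)

include hψ0 hψ hAB hψle in
lemma sum_mul_div_le_of_isResonant {d u Q : ℕ} (hd : 0 < d) (hu : 0 < u) (huQ : u ≤ Q / d)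
    {T : Finset ℕ} (hT : T ⊆ Icc u (Q / d))
    (hres : ∀ v ∈ T, IsResonant γ (A (d * u)) (B (d * u)) (ψ (d * u)) u v) :
    ∑ v ∈ T, ψ (d * v) / v ≤ 1472 * ψ (d * u) * ((∑ n ∈ Icc 1 Q, ψ n) / d) +
      80 * (1 / (d * √d) * (1 / (u * √u))) := by
  have hdu := Nat.mul_pos hd hu
  have hpN : ψ (d * u) * √(d * u : ℕ) ^ 2 ≤ 1 := by
    rw [Real.sq_sqrt (Nat.cast_nonneg _), ← le_div_iff₀ (by exact_mod_cast hdu)]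
    exact hψle _ hdu
  have hmul : AntitoneOn (fun n ↦ ψ (d * n)) (Set.Ici 1) := fun m hm n _ hmn ↦
    have hdm := Nat.mul_pos hd (Set.mem_Ici.1 hm)
    have hdmn : d * m ≤ d * n := by gcongr
    hψ (Set.mem_Ici.2 hdm) (Set.mem_Ici.2 (hdm.trans_le hdmn)) hdmn
  have hle : ∀ n : ℕ, 1 ≤ n → ψ (d * n) ≤ 1 / d / n := fun n hn ↦ by
    rw [div_div]
    exact_mod_cast hψle _ (Nat.mul_pos hd hn)
  have hψdu := hψ0 (d * u)
  calc ∑ v ∈ T, ψ (d * v) / v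
      ≤ 1472 * ψ (d * u) * ∑ n ∈ Icc 1 (Q / d), ψ (d * n) +
          80 * (1 / d) / (√(d * u : ℕ) * u) :=
        (hAB _ hdu).sum_div_le_of_isResonant hψdu hpN (fun _ ↦ hψ0 _) hmul hle hu huQ hT hres
    _ = 1472 * ψ (d * u) * ∑ n ∈ Icc 1 (Q / d), ψ (d * n) +
          80 * (1 / (d * √d) * (1 / (u * √u))) := by
        rw [Nat.cast_mul, Real.sqrt_mul d.cast_nonneg]
        ring
    _ ≤ _ := by gcongr; exact sum_Icc_mul_le hψ0 hψ hd Q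

open Classical in
include hψ0 hψ hAB hψle in
lemma sum_filter_isResonant_div_le {d u Q : ℕ} (hd : 0 < d) (hu : 0 < u) (huQ : u ≤ Q / d)
    {s : Finset ℕ} (hs : s ⊆ Icc u (Q / d)) :
    ∑ v ∈ s with u = 1 ∨ IsResonant γ (A (d * u)) (B (d * u)) (ψ (d * u)) u v, ψ (d * v) / v ≤
      1472 * ψ (d * u) * ((∑ n ∈ Icc 1 Q, ψ n) / d) + 80 * (1 / (d * √d) * (1 / (u * √u))) +
        if u = 1 then ∑ v ∈ Icc 1 (Q / d), ψ (d * v) / v else 0 := by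
  have hψdu := hψ0 (d * u)
  have hS : 0 ≤ ∑ n ∈ Icc 1 Q, ψ n := sum_nonneg fun n _ ↦ hψ0 n
  by_cases hu1 : u = 1
  · rw [if_pos hu1]
    refine le_add_of_nonneg_of_le (by positivity) <| sum_le_sum_of_subset_of_nonneg
      ((filter_subset _ _).trans (hs.trans (Icc_subset_Icc_left hu))) fun v _ _ ↦
        div_nonneg (hψ0 _) v.cast_nonneg
  · simp only [hu1, false_or, if_false, add_zero]
    exact sum_mul_div_le_of_isResonant hψ0 hψ hAB hψle hd hu huQ ((filter_subset _ _).trans hs)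
      fun v hv ↦ (mem_filter.1 hv).2

include hψ0 hψ hAB hψle in
lemma sum_overlap_coprime_le {d u Q : ℕ} (hd : 0 < d) (hu : 0 < u) (huQ : u ≤ Q / d) :
    ∑ v ∈ Ioc u (Q / d) with u.Coprime v, overlap γ ψ A B (d * u) (d * v) ≤
      5896 * (∑ n ∈ Icc 1 Q, ψ n) * (ψ (d * u) / d) + 320 * (1 / (d * √d) * (1 / (u * √u))) +
        4 * if u = 1 then ∑ v ∈ Icc 1 (Q / d), ψ (d * v) / v else 0 := by
  have hs : {v ∈ Ioc u (Q / d) | u.Coprime v} ⊆ Icc u (Q / d) :=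
    (filter_subset _ _).trans Ioc_subset_Icc_self
  have hsum : ∑ v ∈ Ioc u (Q / d) with u.Coprime v, ψ (d * v) ≤ (∑ n ∈ Icc 1 Q, ψ n) / d :=
    (sum_le_sum_of_subset_of_nonneg (hs.trans (Icc_subset_Icc_left hu)) fun _ _ _ ↦ hψ0 _).trans
      (sum_Icc_mul_le hψ0 hψ hd Q)
  have hsplit := sum_overlap_mul_mul_le hψ0 hψ hAB hd hu (s := {v ∈ Ioc u (Q / d) | u.Coprime v})
    fun v hv ↦ have hv := mem_filter.1 hv; ⟨(mem_Ioc.1 hv.1).1, hv.2⟩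
  have hmain := mul_le_mul_of_nonneg_left hsum (hψ0 (d * u))
  have hres := sum_filter_isResonant_div_le hψ0 hψ hAB hψle hd hu huQ hs
  calc ∑ v ∈ Ioc u (Q / d) with u.Coprime v, overlap γ ψ A B (d * u) (d * v)
      ≤ 5896 * (ψ (d * u) * ((∑ n ∈ Icc 1 Q, ψ n) / d)) + 320 * (1 / (d * √d) * (1 / (u * √u))) +
          4 * if u = 1 then ∑ v ∈ Icc 1 (Q / d), ψ (d * v) / v else 0 := by linarith
    _ = _ := by ring

include hψ0 hψ hAB hψle in
lemma sum_sum_Ioc_overlap_le (Q : ℕ) :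
    ∑ q ∈ Icc 1 Q, ∑ r ∈ Ioc q Q, overlap γ ψ A B q r ≤
      320 * (∑' n : ℕ, 1 / (n * √n)) ^ 2 +
        4 * (∑' n : ℕ, 1 / (n : ℝ) ^ 2) * ∑ n ∈ Icc 1 Q, ψ n +
        5896 * (∑' n : ℕ, 1 / (n : ℝ) ^ 2) * (∑ n ∈ Icc 1 Q, ψ n) ^ 2 := by
  have hS : 0 ≤ ∑ n ∈ Icc 1 Q, ψ n := sum_nonneg fun n _ ↦ hψ0 n
  have hone : ∀ d ∈ Icc 1 Q, ∑ u ∈ Icc 1 (Q / d),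
      (if u = 1 then ∑ v ∈ Icc 1 (Q / d), ψ (d * v) / v else 0) =
        ∑ v ∈ Icc 1 (Q / d), ψ (d * v) / v := fun d hd ↦ by
    obtain ⟨hd, hdQ⟩ := mem_Icc.1 hd
    rw [sum_ite_eq', if_pos (mem_Icc.2 ⟨le_rfl, Nat.div_pos hdQ hd⟩)]
  rw [sum_Icc_sum_Ioc_eq_sum_coprime]
  calc ∑ d ∈ Icc 1 Q, ∑ u ∈ Icc 1 (Q / d), ∑ v ∈ Ioc u (Q / d) with u.Coprime v,
        overlap γ ψ A B (d * u) (d * v)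
      ≤ ∑ d ∈ Icc 1 Q, ∑ u ∈ Icc 1 (Q / d), (5896 * (∑ n ∈ Icc 1 Q, ψ n) * (ψ (d * u) / d) +
          320 * (1 / (d * √d) * (1 / (u * √u))) +
            4 * if u = 1 then ∑ v ∈ Icc 1 (Q / d), ψ (d * v) / v else 0) :=
        sum_le_sum fun d hd ↦ sum_le_sum fun u hu ↦ sum_overlap_coprime_le hψ0 hψ hAB hψle
          (mem_Icc.1 hd).1 (mem_Icc.1 hu).1 (mem_Icc.1 hu).2
    _ = 5896 * (∑ n ∈ Icc 1 Q, ψ n) * ∑ d ∈ Icc 1 Q, ∑ u ∈ Icc 1 (Q / d), ψ (d * u) / d +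
          320 * ∑ d ∈ Icc 1 Q, ∑ u ∈ Icc 1 (Q / d), 1 / (d * √d) * (1 / (u * √u)) +
            4 * ∑ d ∈ Icc 1 Q, ∑ v ∈ Icc 1 (Q / d), ψ (d * v) / v := by
        rw [← sum_congr rfl hone]
        simp only [sum_add_distrib, ← mul_sum]
    _ ≤ 5896 * (∑ n ∈ Icc 1 Q, ψ n) * ((∑' n : ℕ, 1 / (n : ℝ) ^ 2) * ∑ n ∈ Icc 1 Q, ψ n) +
          320 * (∑' n : ℕ, 1 / (n * √n)) ^ 2 +
            4 * ((∑' n : ℕ, 1 / (n : ℝ) ^ 2) * ∑ n ∈ Icc 1 Q, ψ n) := by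
        gcongr
        · exact sum_sum_Icc_mul_div_left_le hψ0 hψ Q
        · exact sum_sum_Icc_one_div_mul_sqrt_le Q
        · exact sum_sum_Icc_mul_div_right_le hψ0 hψ Q
    _ = _ := by ring

include hψ0 hψ hAB hψle in
lemma sum_sum_overlap_le (Q : ℕ) :
    ∑ q ∈ Icc 1 Q, ∑ r ∈ Icc 1 Q, overlap γ ψ A B q r ≤
      640 * (∑' n : ℕ, 1 / (n * √n)) ^ 2 +
        (8 * (∑' n : ℕ, 1 / (n : ℝ) ^ 2) + 2) * ∑ n ∈ Icc 1 Q, ψ n +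
        11792 * (∑' n : ℕ, 1 / (n : ℝ) ^ 2) * (∑ n ∈ Icc 1 Q, ψ n) ^ 2 := by
  have hdiag : ∑ q ∈ Icc 1 Q, overlap γ ψ A B q q ≤ 2 * ∑ n ∈ Icc 1 Q, ψ n := by
    rw [mul_sum]
    exact sum_le_sum fun q _ ↦ overlap_le hψ0 q q
  have hoff := sum_sum_Ioc_overlap_le hψ0 hψ hAB hψle Q
  rw [sum_sum_Icc_eq_of_symm overlap_comm]
  linarith

end Assembly

theorem stmt14_general (γ : ℝ) (A : ℕ → ℤ) (B : ℕ → ℕ)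
    (hAB : ∀ q : ℕ, 1 ≤ q → IsDirichletApprox γ √q (A q) (B q)) (ψ : ℕ → ℝ)
    (hψ0 : ∀ q, 0 ≤ ψ q) (hψle : ∀ q : ℕ, 1 ≤ q → ψ q ≤ 1 / q)
    (hψ : AntitoneOn ψ (Set.Ici 1)) {E : ℕ → Set ℝ}
    (hE : ∀ q, E q ⊆ approxSet γ (ψ q) (A q) (B q) q) :
    ∃ C > (0 : ℝ), ∀ Q : ℕ,
      ∑ q ∈ Icc 1 Q, ∑ r ∈ Icc 1 Q, volume.real (E q ∩ E r) ≤ C * (∑ q ∈ Icc 1 Q, ψ q) ^ 2 := by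
  have hoverlap : ∀ q r, volume.real (E q ∩ E r) ≤ overlap γ ψ A B q r := fun q r ↦
    measureReal_mono (Set.inter_subset_inter (hE q) (hE r))
      (measure_ne_top_of_subset Set.inter_subset_left (volume_approxSet_ne_top q))
  rcases (hψ0 1).eq_or_lt with hψ1 | hψ1
  · refine ⟨1, one_pos, fun Q ↦ (sum_nonpos fun q hq ↦ sum_nonpos fun r _ ↦ ?_).trans
      (by positivity)⟩
    have hq := (mem_Icc.1 hq).1
    have hψq : ψ q ≤ ψ 1 := hψ Set.self_mem_Ici hq hq
    linarith [hoverlap q r, overlap_le (γ := γ) (A := A) (B := B) hψ0 q r]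
  · have : 0 ≤ ∑' n : ℕ, 1 / (n : ℝ) ^ 2 := tsum_nonneg fun n ↦ by positivity
    refine ⟨640 * (∑' n : ℕ, 1 / (n * √n)) ^ 2 / ψ 1 ^ 2 +
      (8 * (∑' n : ℕ, 1 / (n : ℝ) ^ 2) + 2) / ψ 1 + 11792 * (∑' n : ℕ, 1 / (n : ℝ) ^ 2),
      by positivity, fun Q ↦ ?_⟩
    rcases Q.eq_zero_or_pos with rfl | hQ
    · simp
    calc ∑ q ∈ Icc 1 Q, ∑ r ∈ Icc 1 Q, volume.real (E q ∩ E r)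
        ≤ ∑ q ∈ Icc 1 Q, ∑ r ∈ Icc 1 Q, overlap γ ψ A B q r :=
          sum_le_sum fun q _ ↦ sum_le_sum fun r _ ↦ hoverlap q r
      _ ≤ _ := sum_sum_overlap_le hψ0 hψ hAB hψle Q
      _ ≤ _ := add_mul_add_mul_sq_le (by positivity) (by positivity) hψ1 <|
          single_le_sum (fun q _ ↦ hψ0 q) (mem_Icc.2 ⟨le_rfl, hQ⟩)

lemma biUnion_inter_Icc_subset_approxSet (γ δ : ℝ) (A B q : ℕ) :
    (⋃ a ∈ {a : ℕ | a < q ∧ Nat.gcd (a * B + A) q = 1},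
      Set.Ioo (((a : ℝ) + γ - δ) / q) (((a : ℝ) + γ + δ) / q)) ∩ Set.Icc 0 1 ⊆
        approxSet γ δ A B q := by
  refine Set.inter_subset_left.trans <| Set.biUnion_mono (fun a ha ↦ ?_) fun a _ ↦ subset_rfl
  exact ⟨ha.1, by exact_mod_cast Nat.isCoprime_iff_coprime.2 ha.2⟩

theorem stmt14 (γ : ℝ) (A B : ℕ → ℕ)
    (hAB : ∀ q : ℕ, 1 ≤ q → 0 < A q ∧ 0 < B q ∧ Nat.gcd (A q) (B q) = 1 ∧
      (B q : ℝ) ≤ Real.sqrt q ∧ |γ - (A q : ℝ) / B q| < 1 / (Real.sqrt q * B q))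
    (ψ : ℕ → ℝ) (hψ0 : ∀ q, 0 ≤ ψ q)
    (hψle : ∀ q : ℕ, 1 ≤ q → ψ q ≤ 1 / q)
    (hψdec : ∀ q r : ℕ, 1 ≤ q → q ≤ r → ψ r ≤ ψ q)
    (hdiv : ¬ Summable ψ)
    (A' : ℕ → Set ℝ)
    (hA' : ∀ q, A' q =
      (⋃ a ∈ {a : ℕ | a < q ∧ Nat.gcd (a * B q + A q) q = 1},
        Set.Ioo (((a : ℝ) + γ - ψ q) / q) (((a : ℝ) + γ + ψ q) / q)) ∩ Set.Icc 0 1) :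
    ∃ C > (0:ℝ), ∀ Q : ℕ,
      (∑ q ∈ Finset.Icc 1 Q, ∑ r ∈ Finset.Icc 1 Q, (volume (A' q ∩ A' r)).toReal)
        ≤ C * (∑ q ∈ Finset.Icc 1 Q, ψ q) ^ 2 := by
  exact stmt14_general γ (fun q ↦ A q) B
    (fun q hq ↦ let ⟨_, hB, hcop, hle, hlt⟩ := hAB q hq
      ⟨hB, Nat.isCoprime_iff_coprime.2 hcop, hle, by rwa [Int.cast_natCast]⟩)
    ψ hψ0 hψle (fun q hq r _ ↦ hψdec q r hq) fun q ↦
      hA' q ▸ biUnion_inter_Icc_subset_approxSet γ (ψ q) (A q) (B q) q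
end

section
/- Let γ∈ℝ and q∈ℕ, and let S(q) be as in the context. Then #S(q) ≥ φ(q), where φ denotes Euler's totient function. -/
/-!
In an Artinian ring every `b` has a complement `c`, in the sense that every prime contains exactly
one of `b` and `c`: the powers of `b` stabilise, so `b ^ n * (1 - b * y) = 0` for some `n` and `y`,
and `c = 1 - b * y` works. Then `b + c` is a unit, so `x ↦ x * (b + c) + a` permutes the ring, and
exactly as many `x` as there are units make `x * (b + c) + a` a unit. Modulo a prime not containing
`b`, the values `x * (b + c) + a` and `x * b + a` agree; modulo a prime containing `b`, the value
`x * b + a` is the constant `a`, which is nonzero since `a` and `b` are coprime. Hence all those `x`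
also make `x * b + a` a unit, and the bound is the case of the ring `ZMod q`.
-/

theorem isUnit_of_forall_notMem_isMaximal {R : Type*} [CommSemiring R] {x : R}
    (h : ∀ M : Ideal R, M.IsMaximal → x ∉ M) : IsUnit x := by
  by_contra hx
  obtain ⟨M, hM, hxM⟩ := exists_max_ideal_of_mem_nonunits hx
  exact h M hM hxM

section CommRing

variable {R : Type*} [CommRing R] {a b c x : R}

/-- `c` is a complement of `b` if every prime ideal contains exactly one of `b` and `c`, that is,
the basic open sets of `b` and `c` in the prime spectrum are complementary. Adding `c` turns `b`
into a unit without changing it modulo the maximal ideals that do not contain it. -/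
def IsSpectralCompl (b c : R) : Prop :=
  ∀ P : Ideal R, P.IsPrime → (c ∈ P ↔ b ∉ P)

theorem exists_isSpectralCompl [IsArtinianRing R] (b : R) : ∃ c, IsSpectralCompl b c := by
  obtain ⟨n, y, hy⟩ := IsArtinian.exists_pow_succ_smul_dvd b (1 : R)
  have hzero : b ^ n * (1 - b * y) = 0 := by
    simp only [smul_eq_mul, pow_succ] at hy
    linear_combination -hy
  refine ⟨1 - b * y, fun P hP => ⟨fun hc hb => ?_, fun hb => ?_⟩⟩
  · have hone : (1 : R) ∈ P := by simpa using P.add_mem hc (P.mul_mem_right y hb)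
    exact hP.one_notMem hone
  · have hprod : b ^ n * (1 - b * y) ∈ P := hzero ▸ P.zero_mem
    exact (hP.mem_or_mem hprod).resolve_left fun hbn => hb (hP.mem_of_pow_mem n hbn)

theorem IsSpectralCompl.isUnit_add (h : IsSpectralCompl b c) : IsUnit (b + c) := by
  refine isUnit_of_forall_notMem_isMaximal fun M hM hbc => ?_
  by_cases hb : b ∈ M
  · exact (h M hM.isPrime).1 ((M.add_mem_iff_right hb).1 hbc) hb
  · exact hb ((M.add_mem_iff_left ((h M hM.isPrime).2 hb)).1 hbc)

theorem IsSpectralCompl.isUnit_mul_add (h : IsSpectralCompl b c) (hab : IsCoprime a b)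
    (hx : IsUnit (x * (b + c) + a)) : IsUnit (x * b + a) := by
  refine isUnit_of_forall_notMem_isMaximal fun M hM hmem => ?_
  by_cases hb : b ∈ M
  · have ha : a ∈ M := (M.add_mem_iff_right (M.mul_mem_left x hb)).1 hmem
    obtain ⟨r, s, hrs⟩ := hab
    exact hM.isPrime.one_notMem
      (hrs ▸ M.add_mem (M.mul_mem_left r ha) (M.mul_mem_left s hb))
  · have hc : c ∈ M := (h M hM.isPrime).2 hb
    have hmem' : x * (b + c) + a ∈ M := by
      rw [show x * (b + c) + a = x * b + a + x * c by ring]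
      exact M.add_mem hmem (M.mul_mem_left x hc)
    exact hM.ne_top (M.eq_top_of_isUnit_mem hmem' hx)

theorem nonempty_units_embedding_isUnit_mul_add [IsArtinianRing R]
    (hab : IsCoprime a b) : Nonempty (Rˣ ↪ {x : R // IsUnit (x * b + a)}) := by
  obtain ⟨c, hc⟩ := exists_isSpectralCompl b
  obtain ⟨v, hv⟩ := hc.isUnit_add
  have hunit (u : Rˣ) : IsUnit ((u - a) * ↑v⁻¹ * b + a) :=
    hc.isUnit_mul_add hab (by simp [← hv])
  refine ⟨fun u => ⟨(u - a) * ↑v⁻¹, hunit u⟩, fun u w huw => ?_⟩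
  simpa [Units.ext_iff] using huw

end CommRing

section ZMod

variable {q : ℕ}

theorem isCoprime_natCast_zmod {m n : ℕ} (h : (m.gcd n).Coprime q) :
    IsCoprime (m : ZMod q) (n : ZMod q) := by
  obtain ⟨u, hu⟩ := (ZMod.isUnit_iff_coprime (m.gcd n) q).2 h
  have bezout : (m.gcd n : ZMod q) = m * (m.gcdA n : ZMod q) + n * (m.gcdB n : ZMod q) := by
    exact_mod_cast congrArg (Int.cast : ℤ → ZMod q) (Nat.gcd_eq_gcd_ab m n)
  refine ⟨↑u⁻¹ * (m.gcdA n : ZMod q), ↑u⁻¹ * (m.gcdB n : ZMod q), ?_⟩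
  linear_combination u.inv_mul + (↑u⁻¹ : ZMod q) * (-hu - bezout)

theorem card_filter_range_zmod [NeZero q] (p : ZMod q → Prop) [DecidablePred p] :
    ((Finset.range q).filter fun a : ℕ => p a).card = Nat.card {x : ZMod q // p x} := by
  rw [Nat.card_eq_fintype_card, Fintype.card_subtype]
  refine Finset.card_nbij' (fun a => (a : ZMod q)) ZMod.val ?maps ?maps_val ?left_inv ?right_inv
  case maps => intro a; simp
  case maps_val => intro x; simp [ZMod.val_lt]
  case left_inv => intro a; simp +contextual [ZMod.val_natCast, Nat.mod_eq_of_lt]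
  case right_inv => intro x; simp

end ZMod

theorem stmt15_general (q A B : ℕ) [NeZero q] (h : (A.gcd B).Coprime q) :
    q.totient ≤ ((Finset.range q).filter fun a => (a * B + A).gcd q = 1).card := by
  obtain ⟨f⟩ := nonempty_units_embedding_isUnit_mul_add (isCoprime_natCast_zmod h)
  calc q.totient = Nat.card (ZMod q)ˣ := by
        rw [Nat.card_eq_fintype_card, ZMod.card_units_eq_totient]
    _ ≤ Nat.card {x : ZMod q // IsUnit (x * B + A)} := Finite.card_le_of_embedding f
    _ = ((Finset.range q).filter fun a : ℕ => IsUnit ((a : ZMod q) * B + A)).card :=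
        (card_filter_range_zmod _).symm
    _ = ((Finset.range q).filter fun a => (a * B + A).gcd q = 1).card := by
        congr! 2 with a
        exact_mod_cast ZMod.isUnit_iff_coprime (a * B + A) q

theorem stmt15 (γ : ℝ) (q A B : ℕ) (hq : 1 ≤ q) (hA : 0 < A) (hB : 0 < B)
    (hAB : Nat.gcd A B = 1) (hBq : (B : ℝ) ≤ Real.sqrt q)
    (hγ : |γ - (A : ℝ) / B| < 1 / (Real.sqrt q * B)) :
    Nat.totient q ≤
      ((Finset.range q).filter (fun a => Nat.gcd (a * B + A) q = 1)).card := by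
  have : NeZero q := ⟨by omega⟩
  exact stmt15_general q A B (by simp [hAB])
end

section
/- Let γ∈ℝ and for each q∈ℕ let S(q) be as in the context. Then the finite sets (1/q)·S(q) equidistribute in [0,1]: for every nonempty interval I ⊆ [0,1], #{a ∈ S(q) : a/q ∈ I} / #S(q) → meas(I) as q → ∞. -/
open MeasureTheory Filter

open Finset Topology

/-! Write `ω` for the number of primes dividing `q`. The condition `gcd (a * B + A, q) = 1` excludes
one residue class of `a` modulo each prime `p ∣ q` with `p ∤ B`, and nothing else when
`gcd (A, B, q) = 1`. Excluding the primes one at a time (Legendre's sieve) shows that every interval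
of `L` integers contains `L * δ + O(2 ^ ω)` admissible `a`, where `δ = ∏ (1 - 1 / p) ≥ 2 ^ (-ω)`.
Hence the relative error is `O(4 ^ ω / q)`, which tends to zero. -/

section Interval

theorem volume_toReal_eq_of_Ioo_subset_of_subset_Icc {J : Set ℝ} {α β : ℝ} (hαβ : α ≤ β)
    (hl : Set.Ioo α β ⊆ J) (hu : J ⊆ Set.Icc α β) : (volume J).toReal = β - α := by
  have hJ : volume J = ENNReal.ofReal (β - α) :=
    le_antisymm (Real.volume_Icc ▸ measure_mono hu) (Real.volume_Ioo ▸ measure_mono hl)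
  rw [hJ, ENNReal.toReal_ofReal (sub_nonneg.2 hαβ)]

theorem abs_ncard_natCast_mem_sub_le {J : Set ℝ} {α β : ℝ} (hα : 0 ≤ α) (hαβ : α ≤ β)
    (hl : Set.Ioo α β ⊆ J) (hu : J ⊆ Set.Icc α β) :
    |({a : ℕ | (a : ℝ) ∈ J}.ncard : ℝ) - (β - α)| ≤ 1 := by
  have hβ : 0 ≤ β := hα.trans hαβ
  have lower : (Ico (⌊α⌋₊ + 1) ⌈β⌉₊ : Set ℕ) ⊆ {a : ℕ | (a : ℝ) ∈ J} := fun a ha ↦ by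
    rw [coe_Ico, Set.mem_Ico, Nat.succ_le_iff, Nat.floor_lt hα, Nat.lt_ceil] at ha
    exact hl ha
  have upper : {a : ℕ | (a : ℝ) ∈ J} ⊆ (Ico ⌈α⌉₊ (⌊β⌋₊ + 1) : Set ℕ) := fun a ha ↦ by
    rw [coe_Ico, Set.mem_Ico, Nat.lt_succ_iff, Nat.ceil_le, Nat.le_floor_iff hβ]
    exact hu ha
  have card_lower : ⌈β⌉₊ ≤ {a : ℕ | (a : ℝ) ∈ J}.ncard + (⌊α⌋₊ + 1) := by
    have := Set.ncard_le_ncard lower ((finite_toSet _).subset upper)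
    rwa [Set.ncard_coe_finset, Nat.card_Ico, tsub_le_iff_right] at this
  have card_upper : {a : ℕ | (a : ℝ) ∈ J}.ncard + ⌈α⌉₊ ≤ ⌊β⌋₊ + 1 := by
    have hle : ⌈α⌉₊ ≤ ⌊β⌋₊ + 1 := (Nat.ceil_mono hαβ).trans (Nat.ceil_le_floor_add_one β)
    have := Set.ncard_le_ncard upper (finite_toSet _)
    rwa [Set.ncard_coe_finset, Nat.card_Ico, Nat.le_sub_iff_add_le hle] at this
  rw [← Nat.cast_le (α := ℝ)] at card_lower card_upper
  push_cast at card_lower card_upper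
  rw [abs_le]
  constructor <;>
    linarith [Nat.floor_le hα, Nat.floor_le hβ, Nat.le_ceil α, Nat.le_ceil β]

theorem Ioo_sInf_sSup_subset_of_ordConnected {J : Set ℝ} (hJ : J.OrdConnected)
    (hb : BddBelow J) (ha : BddAbove J) : Set.Ioo (sInf J) (sSup J) ⊆ J := by
  rcases J.eq_empty_or_nonempty with rfl | hne
  · simp
  · exact IsConnected.Ioo_csInf_csSup_subset ⟨hne, hJ.isPreconnected⟩ hb ha

theorem abs_ncard_natCast_mem_sub_volume_le {J : Set ℝ} (hJ : J.OrdConnected)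
    (hJ₀ : J ⊆ Set.Ici 0) (hJb : BddAbove J) :
    |({a : ℕ | (a : ℝ) ∈ J}.ncard : ℝ) - (volume J).toReal| ≤ 1 := by
  have hb : BddBelow J := bddBelow_Ici.mono hJ₀
  have hle : sInf J ≤ sSup J := Real.sInf_le_sSup J hb hJb
  have hl := Ioo_sInf_sSup_subset_of_ordConnected hJ hb hJb
  have hu := subset_Icc_csInf_csSup hb hJb
  rw [volume_toReal_eq_of_Ioo_subset_of_subset_Icc hle hl hu]
  exact abs_ncard_natCast_mem_sub_le (Real.sInf_nonneg hJ₀) hle hl hu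

theorem abs_ncard_lt_and_div_mem_sub_volume_le {q : ℕ} (hq : q ≠ 0) {I : Set ℝ}
    (hI : I.OrdConnected) (hI₁ : I ⊆ Set.Icc 0 1) :
    |({a : ℕ | a < q ∧ (a : ℝ) / q ∈ I}.ncard : ℝ) - q * (volume I).toReal| ≤ 1 := by
  have hq₀ : (0 : ℝ) < q := Nat.cast_pos.2 (Nat.pos_of_ne_zero hq)
  set J : Set ℝ := (· * (q : ℝ)⁻¹) ⁻¹' (I ∩ Set.Iio 1) with hJ
  have hJ_conn : J.OrdConnected := (hI.inter Set.ordConnected_Iio).preimage_mono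
    (monotone_id.mul_const (inv_nonneg.2 hq₀.le))
  have hJ_nonneg : J ⊆ Set.Ici 0 := fun x hx ↦
    nonneg_of_mul_nonneg_left (hI₁ hx.1).1 (inv_pos.2 hq₀)
  have hJ_bdd : BddAbove J := ⟨q, fun x hx ↦ by
    simpa only [one_mul] using (mul_inv_le_iff₀ hq₀).1 (hI₁ hx.1).2⟩
  have hvol_inter : volume (I ∩ Set.Iio 1) = volume I :=
    calc volume (I ∩ Set.Iio 1) = volume (I ∩ Set.Iic 1) :=
          measure_congr ((ae_eq_refl I).inter Iio_ae_eq_Iic)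
      _ = volume I := by rw [Set.inter_eq_left.2 (hI₁.trans Set.Icc_subset_Iic_self)]
  have hvol : (volume J).toReal = q * (volume I).toReal := by
    rw [hJ, Real.volume_preimage_mul_right (inv_ne_zero hq₀.ne'), inv_inv, hvol_inter,
      ENNReal.toReal_mul, ENNReal.toReal_ofReal (abs_nonneg _), abs_of_pos hq₀]
  have hset : {a : ℕ | a < q ∧ (a : ℝ) / q ∈ I} = {a : ℕ | (a : ℝ) ∈ J} := by
    ext a
    simp only [Set.mem_ofPred_eq, hJ, Set.mem_preimage, Set.mem_inter_iff, Set.mem_Iio,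
      ← div_eq_mul_inv, div_lt_one hq₀, Nat.cast_lt, and_comm]
  rw [hset, ← hvol]
  exact abs_ncard_natCast_mem_sub_volume_le hJ_conn hJ_nonneg hJ_bdd

theorem exists_eq_Ico_of_ordConnected {X : Finset ℕ} (hX : (X : Set ℕ).OrdConnected) :
    ∃ m n, m ≤ n ∧ X = Ico m n := by
  rcases X.eq_empty_or_nonempty with rfl | hne
  · exact ⟨0, 0, le_rfl, by simp⟩
  · refine ⟨X.min' hne, X.max' hne + 1, (X.min'_le_max' hne).trans (Nat.le_succ _), ?_⟩
    ext a
    rw [mem_Ico, Nat.lt_succ_iff]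
    exact ⟨fun ha ↦ ⟨X.min'_le a ha, X.le_max' a ha⟩,
      fun ha ↦ hX.out (X.min'_mem hne) (X.max'_mem hne) ha⟩

end Interval

section Sieve

theorem card_filter_modEq_forall_not_modEq_eq_add (X : Finset ℕ) {p d : ℕ} {s : Finset ℕ}
    (hpd : d.Coprime p) (u : ℕ) (v : ℕ → ℕ) :
    #{a ∈ X | a ≡ u [MOD d] ∧ ∀ r ∈ s, ¬a ≡ v r [MOD r]} =
      #{a ∈ X | a ≡ Nat.chineseRemainder hpd u (v p) [MOD d * p] ∧ ∀ r ∈ s, ¬a ≡ v r [MOD r]} +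
        #{a ∈ X | a ≡ u [MOD d] ∧ ∀ r ∈ insert p s, ¬a ≡ v r [MOD r]} := by
  have crt (a : ℕ) : a ≡ Nat.chineseRemainder hpd u (v p) [MOD d * p] ↔
      a ≡ u [MOD d] ∧ a ≡ v p [MOD p] := by
    obtain ⟨w, hwd, hwp⟩ := Nat.chineseRemainder hpd u (v p)
    rw [← Nat.modEq_and_modEq_iff_modEq_mul hpd]
    exact and_congr ⟨(·.trans hwd), (·.trans hwd.symm)⟩ ⟨(·.trans hwp), (·.trans hwp.symm)⟩
  rw [← card_filter_add_card_filter_not (p := fun a ↦ a ≡ v p [MOD p]), filter_filter,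
    filter_filter]
  simp only [crt, forall_mem_insert]
  congr 3 <;> ext a <;> tauto

variable {X : Finset ℕ} (hX : (X : Set ℕ).OrdConnected)
include hX

theorem abs_card_filter_modEq_sub_le {d : ℕ} (hd : 0 < d) (u : ℕ) :
    |(#{a ∈ X | a ≡ u [MOD d]} : ℝ) - #X / d| ≤ 1 := by
  obtain ⟨m, n, hmn, rfl⟩ := exists_eq_Ico_of_ordConnected hX
  have hmono : ((m : ℚ) - u) / d ≤ (n - u) / d := by gcongr
  have hlen : ((n : ℚ) - u) / d - (m - u) / d = (n - m) / d := by ring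
  have hcard : (#{a ∈ Ico m n | a ≡ u [MOD d]} : ℤ) =
      ⌈((n : ℚ) - u) / d⌉ - ⌈((m : ℚ) - u) / d⌉ := by
    rw [Nat.Ico_filter_modEq_card m n hd, max_eq_left (sub_nonneg.2 (Int.ceil_mono hmono))]
  have hbound : |(#{a ∈ Ico m n | a ≡ u [MOD d]} : ℚ) - #(Ico m n) / d| ≤ 1 := by
    rw [← Int.cast_natCast (#{a ∈ Ico m n | a ≡ u [MOD d]}), hcard, Nat.card_Ico,
      Nat.cast_sub hmn, ← hlen, Int.cast_sub, abs_le]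
    constructor <;>
      linarith [Int.le_ceil (((n : ℚ) - u) / d), Int.ceil_lt_add_one (((n : ℚ) - u) / d),
        Int.le_ceil (((m : ℚ) - u) / d), Int.ceil_lt_add_one (((m : ℚ) - u) / d)]
  simpa using (Rat.cast_le (K := ℝ)).2 hbound

theorem abs_card_filter_modEq_forall_not_modEq_sub_le {s : Finset ℕ} (hs₀ : ∀ p ∈ s, 0 < p)
    (hs : (s : Set ℕ).Pairwise Nat.Coprime) {d : ℕ} (hd : 0 < d)
    (hds : ∀ p ∈ s, d.Coprime p) (u : ℕ) (v : ℕ → ℕ) :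
    |(#{a ∈ X | a ≡ u [MOD d] ∧ ∀ p ∈ s, ¬a ≡ v p [MOD p]} : ℝ) -
      #X / d * ∏ p ∈ s, (1 - 1 / (p : ℝ))| ≤ 2 ^ #s := by
  induction s using Finset.induction_on generalizing d u with
  | empty => simpa using abs_card_filter_modEq_sub_le hX hd u
  | insert p s hp ih =>
    rw [forall_mem_insert] at hs₀ hds
    rw [coe_insert, Set.pairwise_insert_of_symm_of_notMem hp] at hs
    obtain ⟨hp₀, hs₀⟩ := hs₀
    obtain ⟨hdp, hds⟩ := hds
    obtain ⟨hs, hps⟩ := hs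
    have sieved := ih hs₀ hs hd hds u
    have removed := ih hs₀ hs (Nat.mul_pos hd hp₀)
      (fun r hr ↦ (hds r hr).mul_left (hps r hr)) (Nat.chineseRemainder hdp u (v p))
    have hsplit := card_filter_modEq_forall_not_modEq_eq_add X (s := s) hdp u v
    rw [← Nat.cast_inj (R := ℝ), Nat.cast_add, ← sub_eq_iff_eq_add'] at hsplit
    rw [prod_insert hp, card_insert_of_notMem hp, ← hsplit]
    set Q := ∏ r ∈ s, (1 - 1 / (r : ℝ))
    have hmain : (#X : ℝ) / d * ((1 - 1 / p) * Q) = #X / d * Q - #X / (d * p : ℕ) * Q := by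
      push_cast
      field_simp
    rw [hmain, sub_sub_sub_comm, pow_succ, mul_two]
    exact (abs_sub _ _).trans (add_le_add sieved removed)

theorem abs_card_filter_forall_not_modEq_sub_le {s : Finset ℕ} (hs₀ : ∀ p ∈ s, 0 < p)
    (hs : (s : Set ℕ).Pairwise Nat.Coprime) (v : ℕ → ℕ) :
    |(#{a ∈ X | ∀ p ∈ s, ¬a ≡ v p [MOD p]} : ℝ) - #X * ∏ p ∈ s, (1 - 1 / (p : ℝ))| ≤
      2 ^ #s := by
  simpa [Nat.modEq_one] using abs_card_filter_modEq_forall_not_modEq_sub_le hX hs₀ hs one_pos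
    (fun p _ ↦ Nat.coprime_one_left p) 0 v

end Sieve

section LinearForm

theorem exists_dvd_mul_add_iff_modEq {d : ℕ} (hd : d ≠ 0) {B : ℤ} (hB : IsCoprime B d) (A : ℤ) :
    ∃ v : ℕ, ∀ a : ℕ, (d : ℤ) ∣ a * B + A ↔ a ≡ v [MOD d] := by
  have : NeZero d := ⟨hd⟩
  obtain ⟨u, w, huw⟩ := hB
  have hu : (u * B : ZMod d) = 1 := by
    simpa using congrArg (Int.cast : ℤ → ZMod d) huw
  refine ⟨(-(A * u) : ZMod d).val, fun a ↦ ?_⟩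
  rw [← ZMod.intCast_zmod_eq_zero_iff_dvd, ← ZMod.natCast_eq_natCast_iff, ZMod.natCast_zmod_val]
  push_cast
  exact ⟨fun h ↦ by linear_combination (u : ZMod d) * h - a * hu,
    fun h ↦ by linear_combination (B : ZMod d) * h - A * hu⟩

theorem int_gcd_natCast_eq_one_iff {q : ℕ} (hq : q ≠ 0) {x : ℤ} :
    Int.gcd x q = 1 ↔ ∀ p ∈ q.primeFactors, ¬(p : ℤ) ∣ x := by
  simp only [Int.gcd, Int.natAbs_natCast, Nat.eq_one_iff_not_exists_prime_dvd, Nat.dvd_gcd_iff,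
    Nat.mem_primeFactors_of_ne_zero hq, Int.natCast_dvd, and_imp, not_and']

/-- The primes dividing `q` modulo which the condition `gcd (a * B + A, q) = 1` constrains `a`,
provided that `A`, `B`, `q` have no common factor. -/
def sievePrimes (B : ℤ) (q : ℕ) : Finset ℕ :=
  {p ∈ q.primeFactors | ¬(p : ℤ) ∣ B}

theorem mem_sievePrimes {B : ℤ} {q p : ℕ} :
    p ∈ sievePrimes B q ↔ p ∈ q.primeFactors ∧ ¬(p : ℤ) ∣ B :=
  mem_filter

theorem prime_of_mem_sievePrimes {B : ℤ} {q p : ℕ} (hp : p ∈ sievePrimes B q) : p.Prime :=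
  Nat.prime_of_mem_primeFactors (mem_sievePrimes.1 hp).1

theorem card_sievePrimes_le (B : ℤ) (q : ℕ) : #(sievePrimes B q) ≤ #q.primeFactors :=
  card_filter_le _ _

theorem int_gcd_mul_add_eq_one_iff {q : ℕ} (hq : q ≠ 0) {A B : ℤ}
    (hAB : Int.gcd (Int.gcd A B) q = 1) (a : ℤ) :
    Int.gcd (a * B + A) q = 1 ↔ ∀ p ∈ sievePrimes B q, ¬(p : ℤ) ∣ a * B + A := by
  rw [int_gcd_natCast_eq_one_iff hq] at hAB ⊢
  simp only [mem_sievePrimes, and_imp]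
  refine forall₂_congr fun p hp ↦ ⟨fun h _ ↦ h, fun h hdvd ↦ ?_⟩
  by_cases hB : (p : ℤ) ∣ B
  · exact hAB p hp (Int.dvd_coe_gcd ((dvd_add_right (hB.mul_left a)).1 hdvd) hB)
  · exact h hB hdvd

theorem exists_int_gcd_mul_add_eq_one_iff {q : ℕ} (hq : q ≠ 0) {A B : ℤ}
    (hAB : Int.gcd (Int.gcd A B) q = 1) :
    ∃ v : ℕ → ℕ, ∀ a : ℕ, Int.gcd (a * B + A) q = 1 ↔
      ∀ p ∈ sievePrimes B q, ¬a ≡ v p [MOD p] := by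
  have hclass (p : ℕ) : ∃ v : ℕ, p ∈ sievePrimes B q →
      ∀ a : ℕ, (p : ℤ) ∣ a * B + A ↔ a ≡ v [MOD p] := by
    by_cases hp : p ∈ sievePrimes B q
    · have hprime := prime_of_mem_sievePrimes hp
      have hcop : IsCoprime B p :=
        ((Nat.prime_iff_prime_int.1 hprime).coprime_iff_not_dvd.2
          (mem_sievePrimes.1 hp).2).symm
      obtain ⟨v, hv⟩ := exists_dvd_mul_add_iff_modEq hprime.ne_zero hcop A
      exact ⟨v, fun _ ↦ hv⟩
    · exact ⟨0, fun h ↦ absurd h hp⟩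
  choose v hv using hclass
  refine ⟨v, fun a ↦ ?_⟩
  rw [int_gcd_mul_add_eq_one_iff hq hAB]
  exact forall₂_congr fun p hp ↦ not_congr (hv p hp a)

/-- The density among all `a` of those with `a * B + A` coprime to `q`. It does not depend on `A`
as long as `A`, `B`, `q` have no common factor. -/
noncomputable def coprimeDensity (B : ℤ) (q : ℕ) : ℝ :=
  ∏ p ∈ sievePrimes B q, (1 - 1 / (p : ℝ))

theorem coprimeDensity_le_one (B : ℤ) (q : ℕ) : coprimeDensity B q ≤ 1 :=
  prod_le_one (fun p _ ↦ sub_nonneg.2 (one_div (p : ℝ) ▸ Nat.cast_inv_le_one p))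
    fun p _ ↦ sub_le_self 1 (by positivity)

theorem half_pow_le_coprimeDensity (B : ℤ) (q : ℕ) :
    (1 / 2 : ℝ) ^ #q.primeFactors ≤ coprimeDensity B q := by
  calc (1 / 2 : ℝ) ^ #q.primeFactors
      ≤ (1 / 2) ^ #(sievePrimes B q) :=
        pow_le_pow_of_le_one (by norm_num) (by norm_num) (card_sievePrimes_le B q)
    _ = ∏ p ∈ sievePrimes B q, (1 / 2 : ℝ) := (prod_const _).symm
    _ ≤ coprimeDensity B q := by
        refine prod_le_prod (fun _ _ ↦ by norm_num) fun p hp ↦ ?_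
        have hp₂ : (2 : ℝ) ≤ p :=
          Nat.ofNat_le_cast.2 (prime_of_mem_sievePrimes hp).two_le
        linarith [one_div_le_one_div_of_le two_pos hp₂]

theorem coprimeDensity_pos (B : ℤ) (q : ℕ) : 0 < coprimeDensity B q :=
  lt_of_lt_of_le (by positivity) (half_pow_le_coprimeDensity B q)

theorem abs_card_filter_int_gcd_sub_le {X : Finset ℕ} (hX : (X : Set ℕ).OrdConnected) {q : ℕ}
    (hq : q ≠ 0) {A B : ℤ} (hAB : Int.gcd (Int.gcd A B) q = 1) :
    |(#{a ∈ X | Int.gcd ((a : ℕ) * B + A) q = 1} : ℝ) - #X * coprimeDensity B q| ≤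
      2 ^ #q.primeFactors := by
  obtain ⟨v, hv⟩ := exists_int_gcd_mul_add_eq_one_iff hq hAB
  have hcop : (sievePrimes B q : Set ℕ).Pairwise Nat.Coprime :=
    fun p hp r hr ↦
      (Nat.coprime_primes (prime_of_mem_sievePrimes hp) (prime_of_mem_sievePrimes hr)).2
  simp only [hv]
  exact (abs_card_filter_forall_not_modEq_sub_le hX
    (fun p hp ↦ (prime_of_mem_sievePrimes hp).pos) hcop v).trans
      (pow_le_pow_right₀ one_le_two (card_sievePrimes_le B q))

end LinearForm

section PrimeFactors

theorem pow_card_primeFactors_le {c q : ℕ} (hc : 0 < c) (hq : q ≠ 0) :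
    c ^ #q.primeFactors ≤ c ^ c * q := by
  have hsmall : c ^ #{p ∈ q.primeFactors | p < c} ≤ c ^ c := by
    refine Nat.pow_le_pow_right hc ?_
    calc #{p ∈ q.primeFactors | p < c} ≤ #(range c) :=
          card_le_card fun p hp ↦ mem_range.2 (mem_filter.1 hp).2
      _ = c := card_range c
  have hlarge : c ^ #{p ∈ q.primeFactors | ¬p < c} ≤ q := by
    calc c ^ #{p ∈ q.primeFactors | ¬p < c}
        ≤ ∏ p ∈ q.primeFactors with ¬p < c, p :=
          pow_card_le_prod _ _ _ fun p hp ↦ not_lt.1 (mem_filter.1 hp).2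
      _ ≤ ∏ p ∈ q.primeFactors, p :=
          prod_le_prod_of_subset_of_one_le' (filter_subset _ _) fun p hp _ ↦
            (Nat.prime_of_mem_primeFactors hp).one_le
      _ ≤ q := Nat.le_of_dvd (Nat.pos_of_ne_zero hq) (Nat.prod_primeFactors_dvd q)
  rw [← card_filter_add_card_filter_not (s := q.primeFactors) (p := (· < c)), pow_add]
  exact Nat.mul_le_mul hsmall hlarge

theorem tendsto_pow_card_primeFactors_div_atTop {c : ℕ} (hc : 0 < c) :
    Tendsto (fun q : ℕ ↦ (c : ℝ) ^ #q.primeFactors / q) atTop (𝓝 0) := by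
  -- The bound for `c ^ 2` in place of `c` gains a factor `q` after squaring.
  have hsq : Tendsto (fun q : ℕ ↦ ((c : ℝ) ^ #q.primeFactors / q) ^ 2) atTop (𝓝 0) := by
    refine squeeze_zero' (.of_forall fun q ↦ by positivity) ?_
      (tendsto_const_div_atTop_nhds_zero_nat (((c ^ 2) ^ c ^ 2 : ℕ) : ℝ))
    filter_upwards [eventually_ne_atTop 0] with q hq
    have hpow : ((c : ℝ) ^ #q.primeFactors) ^ 2 ≤ ((c ^ 2) ^ c ^ 2 : ℕ) * q := by
      rw [pow_right_comm]
      exact_mod_cast pow_card_primeFactors_le (pow_pos hc 2) hq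
    calc ((c : ℝ) ^ #q.primeFactors / q) ^ 2
        ≤ ((c ^ 2) ^ c ^ 2 : ℕ) * (q : ℝ) / (q : ℝ) ^ 2 := by rw [div_pow]; gcongr
      _ = ((c ^ 2) ^ c ^ 2 : ℕ) / (q : ℝ) := by field_simp
  refine (hsq.sqrt.congr fun q ↦ Real.sqrt_sq (by positivity)).trans_eq ?_
  rw [Real.sqrt_zero]

end PrimeFactors

section Equidistribution

theorem abs_ncard_int_gcd_and_div_mem_sub_le {q : ℕ} (hq : q ≠ 0) {A B : ℤ}
    (hAB : Int.gcd (Int.gcd A B) q = 1) {I : Set ℝ} (hI : I.OrdConnected)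
    (hI₁ : I ⊆ Set.Icc 0 1) :
    |({a : ℕ | a < q ∧ Int.gcd (a * B + A) q = 1 ∧ (a : ℝ) / q ∈ I}.ncard : ℝ) -
      (volume I).toReal * (q * coprimeDensity B q)| ≤ 2 * 2 ^ #q.primeFactors := by
  classical
  set X : Finset ℕ := {a ∈ range q | ((a : ℕ) : ℝ) / q ∈ I} with hX
  have hX_coe : (X : Set ℕ) = {a : ℕ | a < q ∧ (a : ℝ) / q ∈ I} := by
    ext a
    simp [hX]
  have hX_conn : (X : Set ℕ).OrdConnected := by
    rw [hX_coe]
    refine Set.OrdConnected.inter Set.ordConnected_Iio (hI.preimage_mono fun a b hab ↦ ?_)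
    exact div_le_div_of_nonneg_right (Nat.cast_le.2 hab) q.cast_nonneg
  have hX_card : |(#X : ℝ) - q * (volume I).toReal| ≤ 1 := by
    rw [← Set.ncard_coe_finset, hX_coe]
    exact abs_ncard_lt_and_div_mem_sub_volume_le hq hI hI₁
  have hset : {a : ℕ | a < q ∧ Int.gcd (a * B + A) q = 1 ∧ (a : ℝ) / q ∈ I} =
      ({a ∈ X | Int.gcd ((a : ℕ) * B + A) q = 1} : Finset ℕ) := by
    ext a
    simp only [hX, Set.mem_ofPred_eq, coe_filter, mem_filter, mem_range]
    tauto
  have hsieve := abs_card_filter_int_gcd_sub_le hX_conn hq hAB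
  have hlength : |(#X - q * (volume I).toReal) * coprimeDensity B q| ≤ 1 := by
    rw [abs_mul, abs_of_pos (coprimeDensity_pos B q)]
    exact mul_le_one₀ hX_card (coprimeDensity_pos B q).le (coprimeDensity_le_one B q)
  have hone : (1 : ℝ) ≤ 2 ^ #q.primeFactors := one_le_pow₀ one_le_two
  rw [hset, Set.ncard_coe_finset]
  rw [abs_le] at hsieve hlength ⊢
  constructor <;> linarith

theorem abs_ncard_int_gcd_and_div_mem_div_sub_volume_le {q : ℕ} (hq : q ≠ 0) {A B : ℤ}
    (hAB : Int.gcd (Int.gcd A B) q = 1) {I : Set ℝ} (hI : I.OrdConnected)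
    (hI₁ : I ⊆ Set.Icc 0 1) :
    |({a : ℕ | a < q ∧ Int.gcd (a * B + A) q = 1 ∧ (a : ℝ) / q ∈ I}.ncard : ℝ) /
      (q * coprimeDensity B q) - (volume I).toReal| ≤ 2 * (4 ^ #q.primeFactors / q) := by
  have hq₀ : (0 : ℝ) < q := Nat.cast_pos.2 (Nat.pos_of_ne_zero hq)
  have hmain : 0 < q * coprimeDensity B q := mul_pos hq₀ (coprimeDensity_pos B q)
  rw [div_sub' hmain.ne', abs_div, abs_of_pos hmain, div_le_iff₀ hmain,
    mul_comm (_ * _) (volume I).toReal]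
  calc _ ≤ 2 * 2 ^ #q.primeFactors := abs_ncard_int_gcd_and_div_mem_sub_le hq hAB hI hI₁
    _ = 2 * (4 ^ #q.primeFactors / q) * (q * (1 / 2) ^ #q.primeFactors) := by
        field_simp
        rw [← mul_pow]
        norm_num
    _ ≤ 2 * (4 ^ #q.primeFactors / q) * (q * coprimeDensity B q) := by
        gcongr
        exact half_pow_le_coprimeDensity B q

theorem tendsto_ncard_int_gcd_and_div_mem_div {A B : ℕ → ℤ}
    (hAB : ∀ᶠ q : ℕ in atTop, Int.gcd (Int.gcd (A q) (B q)) q = 1) {I : Set ℝ}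
    (hI : I.OrdConnected) (hI₁ : I ⊆ Set.Icc 0 1) :
    Tendsto (fun q : ℕ ↦
      ({a : ℕ | a < q ∧ Int.gcd (a * B q + A q) q = 1 ∧ (a : ℝ) / q ∈ I}.ncard : ℝ) /
        (q * coprimeDensity (B q) q)) atTop (𝓝 (volume I).toReal) := by
  have herror : Tendsto (fun q : ℕ ↦ 2 * ((4 : ℝ) ^ #q.primeFactors / q)) atTop (𝓝 0) := by
    simpa using (tendsto_pow_card_primeFactors_div_atTop four_pos).const_mul 2
  rw [tendsto_iff_dist_tendsto_zero]
  refine squeeze_zero' (.of_forall fun _ ↦ dist_nonneg) ?_ herror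
  filter_upwards [hAB, eventually_ne_atTop 0] with q hABq hq
  exact abs_ncard_int_gcd_and_div_mem_div_sub_volume_le hq hABq hI hI₁

theorem setOf_int_gcd_and_div_mem_Icc (A B : ℤ) (q : ℕ) :
    {a : ℕ | a < q ∧ Int.gcd (a * B + A) q = 1 ∧ (a : ℝ) / q ∈ Set.Icc 0 1} =
      {a : ℕ | a < q ∧ Int.gcd (a * B + A) q = 1} := by
  ext a
  refine ⟨fun h ↦ ⟨h.1, h.2.1⟩, fun h ↦ ⟨h.1, h.2, by positivity, ?_⟩⟩
  exact div_le_one_of_le₀ (Nat.cast_le.2 h.1.le) q.cast_nonneg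

theorem stmt16_general {A B : ℕ → ℤ}
    (hAB : ∀ᶠ q : ℕ in atTop, Int.gcd (Int.gcd (A q) (B q)) q = 1) {I : Set ℝ}
    (hI : I.OrdConnected) (hI₁ : I ⊆ Set.Icc 0 1) :
    Tendsto (fun q : ℕ ↦
      ({a : ℕ | a < q ∧ Int.gcd (a * B q + A q) q = 1 ∧ (a : ℝ) / q ∈ I}.ncard : ℝ) /
        {a : ℕ | a < q ∧ Int.gcd (a * B q + A q) q = 1}.ncard) atTop (𝓝 (volume I).toReal) := by
  have hnum := tendsto_ncard_int_gcd_and_div_mem_div hAB hI hI₁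
  have hden := tendsto_ncard_int_gcd_and_div_mem_div hAB Set.ordConnected_Icc subset_rfl
  have hvol : (volume (Set.Icc (0 : ℝ) 1)).toReal = 1 := by simp
  simp only [setOf_int_gcd_and_div_mem_Icc, hvol] at hden
  rw [← div_one (volume I).toReal]
  refine (hnum.div hden one_ne_zero).congr' ?_
  filter_upwards [eventually_ne_atTop 0] with q hq
  exact div_div_div_cancel_right₀
    (mul_ne_zero (Nat.cast_ne_zero.2 hq) (coprimeDensity_pos (B q) q).ne') _ _

end Equidistribution

theorem stmt16 (γ : ℝ) (A B : ℕ → ℕ)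
    (hAB : ∀ q : ℕ, 1 ≤ q → 0 < A q ∧ 0 < B q ∧ Nat.gcd (A q) (B q) = 1 ∧
      (B q : ℝ) ≤ Real.sqrt q ∧ |γ - (A q : ℝ) / B q| < 1 / (Real.sqrt q * B q))
    (I : Set ℝ) (hIsub : I ⊆ Set.Icc 0 1) (hIconn : I.OrdConnected)
    (hIne : I.Nonempty) :
    Tendsto (fun q : ℕ =>
      (Set.ncard {a : ℕ | a < q ∧ Nat.gcd (a * B q + A q) q = 1 ∧ (a : ℝ) / q ∈ I} : ℝ) /
        (Set.ncard {a : ℕ | a < q ∧ Nat.gcd (a * B q + A q) q = 1} : ℝ))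
      atTop (nhds (volume I).toReal) := by
  have hcop : ∀ᶠ q : ℕ in atTop, Int.gcd (Int.gcd (A q) (B q)) q = 1 :=
    (eventually_ge_atTop 1).mono fun q hq ↦ by simp [(hAB q hq).2.2.1]
  exact_mod_cast stmt16_general hcop hIconn hIsub
end

section
/- Let ψ:ℕ→ℝ≥0 be decreasing with ∑_{q=1}^∞ ψ(q) = ∞, and let γ=(γ_q)_{q≥1} be a sequence of real numbers for which there exist γ₀∈ℝ and C>0 such that |γ_q − γ₀| ≤ C·ψ(q) for all q. Then meas(W(ψ,γ)) = 1. -/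
open MeasureTheory

/-- The set of `α ∈ [0,1]` with `‖qα - γ_q‖ < ψ q` for infinitely many `q ≥ 1`. -/
def WSet (ψ : ℕ → ℝ) (γ : ℕ → ℝ) : Set ℝ :=
  {α | α ∈ Set.Icc (0:ℝ) 1 ∧
    {q : ℕ | 1 ≤ q ∧ distNearestInt (q * α - γ q) < ψ q}.Infinite}

/-!
Since `|γ q - γ₀| ≤ C * ψ q`, the condition `‖qα - γ₀‖ < ψ q` implies `‖qα - γ q‖ < (C + 1) * ψ q`,
and by Cassels' lemma multiplying the radii of a limsup of shrinking neighbourhoods by a constant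
changes it only by a null set. So it is enough to treat the constant sequence `γ₀`.

For the constant sequence, take `N` large. By Dirichlet's theorem, apart from a small set of `α`
close to a rational with denominator at most `N / 8`, every `α` is close to a rational `s` with
denominator between `N / 8` and `N`. Since the numerator and denominator of `s` are coprime, the
multiples `j * s` run through all residues modulo one, so some `n ∈ (N, 2N]` puts `α` within
`9 / N ^ 2` of a point `(γ₀ + m) / n`. Hence a `9 / N ^ 2`-separated family of such points fills a
fixed proportion of any given ball. Along the scales `N = M * 32 ^ k` these families are
quasi-independent, and their shrunken neighbourhoods have divergent total measure because `ψ` is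
monotone. So for every `Q` the neighbourhoods of radius `ψ q / q` with `q ≥ Q` together cover a
fixed proportion of every ball, and Lebesgue's density theorem gives full measure.
-/

open Filter Metric Set
open scoped ENNReal Topology

section Metric

variable {α : Type*} [PseudoMetricSpace α]

theorem ball_inter_thickening_subset (x : α) (r δ : ℝ) (s : Set α) :
    ball x r ∩ thickening δ s ⊆ thickening δ (s ∩ ball x (r + δ)) := by
  rintro a ⟨hax, has⟩
  obtain ⟨y, hy, hay⟩ := mem_thickening_iff.1 has
  refine mem_thickening_iff.2 ⟨y, ⟨hy, ?_⟩, hay⟩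
  rw [mem_ball] at hax ⊢
  linarith [dist_triangle_left y x a]

theorem thickening_subset_ball {x : α} {ρ : ℝ} {s : Set α} (hs : s ⊆ ball x ρ) (δ : ℝ) :
    thickening δ s ⊆ ball x (δ + ρ) := by
  rw [← thickening_singleton] at hs ⊢
  exact (thickening_subset_of_subset δ hs).trans (thickening_thickening_subset δ ρ {x})

theorem exists_pairwiseDisjoint_ball_subset_thickening {s : Set α} (hs : s.Finite)
    {δ : ℝ} (hδ : 0 < δ) :
    ∃ X : Finset α, ↑X ⊆ s ∧ (X : Set α).PairwiseDisjoint (ball · δ) ∧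
      s ⊆ thickening (2 * δ) (X : Set α) := by
  obtain ⟨u, hus, hdisj, hcover⟩ := Vitali.exists_disjoint_subfamily_covering_enlargement
    (ball · δ) s (fun _ => δ) 2 one_lt_two (fun _ _ => hδ.le) δ (fun _ _ => le_rfl)
    (fun y _ => ⟨y, mem_ball_self hδ⟩)
  lift u to Finset α using hs.subset hus
  refine ⟨u, hus, hdisj, fun a ha => ?_⟩
  obtain ⟨y, hy, hne, -⟩ := hcover a ha
  refine mem_thickening_iff.2 ⟨y, hy, ?_⟩
  linarith [dist_lt_add_of_nonempty_ball_inter_ball hne]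

end Metric

section Measure

theorem ae_mem_of_frequently_le_density {α : Type*} [MetricSpace α] [MeasurableSpace α]
    [BorelSpace α] [SecondCountableTopology α] [HasBesicovitchCovering α]
    (μ : Measure α) [IsLocallyFiniteMeasure μ] {s : Set α} (hs : MeasurableSet s)
    {c : ℝ≥0∞} (hc : 0 < c)
    (h : ∀ x, ∃ᶠ r in 𝓝[>] (0 : ℝ), c ≤ μ (s ∩ closedBall x r) / μ (closedBall x r)) :
    ∀ᵐ x ∂μ, x ∈ s := by
  filter_upwards [Besicovitch.ae_tendsto_measure_inter_div_of_measurableSet μ hs] with x hx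
  by_contra hxs
  rw [indicator_of_notMem hxs] at hx
  obtain ⟨r, hle, hlt⟩ := ((h x).and_eventually (hx.eventually_lt_const hc)).exists
  exact hle.not_gt hlt

theorem ae_mem_of_forall_mul_le_volumeReal_ball_inter {s : Set ℝ} (hs : MeasurableSet s) {c : ℝ}
    (hc : 0 < c) (h : ∀ x r, 0 < r → c * r ≤ volume.real (ball x r ∩ s)) :
    ∀ᵐ x, x ∈ s := by
  refine ae_mem_of_frequently_le_density volume hs (ENNReal.ofReal_pos.2 (half_pos hc)) fun x =>
    Eventually.frequently ?_
  filter_upwards [self_mem_nhdsWithin] with r (hr : 0 < r)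
  have hfin : volume (s ∩ closedBall x r) ≠ ∞ :=
    measure_ne_top_of_subset inter_subset_right measure_closedBall_lt_top.ne
  have hdensity : c / 2 * (2 * r) ≤ volume.real (s ∩ closedBall x r) := by
    calc c / 2 * (2 * r) = c * r := by ring
      _ ≤ volume.real (ball x r ∩ s) := h x r hr
      _ ≤ volume.real (s ∩ closedBall x r) := by
          refine measureReal_mono ?_ hfin
          rw [inter_comm]
          gcongr
          exact ball_subset_closedBall
  rw [Real.volume_closedBall, ENNReal.le_div_iff_mul_le (by simp [hr]) (.inl ENNReal.ofReal_ne_top),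
    ← ENNReal.ofReal_mul (half_pos hc).le]
  exact (ENNReal.ofReal_le_iff_le_toReal hfin).2 hdensity

variable {α : Type*} [MeasurableSpace α] {μ : Measure α} {A : ℕ → Set α}

theorem measureReal_biUnion_range_add_le (hA : ∀ n, MeasurableSet (A n))
    (hfin : ∀ n, μ (A n) ≠ ∞) (n : ℕ) :
    μ.real (⋃ k ∈ Finset.range n, A k) + μ.real (A n) ≤
      μ.real (⋃ k ∈ Finset.range (n + 1), A k) + ∑ k ∈ Finset.range n, μ.real (A n ∩ A k) := by
  set U := ⋃ k ∈ Finset.range n, A k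
  have hUfin : μ U ≠ ∞ :=
    (measure_biUnion_lt_top (Finset.finite_toSet _) fun k _ => (hfin k).lt_top).ne
  have hsucc : ⋃ k ∈ Finset.range (n + 1), A k = A n ∪ U := by
    rw [Finset.range_add_one, Finset.set_biUnion_insert]
  have hinter : μ.real (A n ∩ U) ≤ ∑ k ∈ Finset.range n, μ.real (A n ∩ A k) := by
    rw [inter_iUnion₂]
    exact measureReal_biUnion_finset_le _ _
  rw [hsucc]
  linarith [measureReal_union_add_inter' (hA n) (hfin n) hUfin]

theorem min_sum_range_mul_le_measureReal_biUnion_range (hA : ∀ n, MeasurableSet (A n))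
    (hfin : ∀ n, μ (A n) ≠ ∞) {t : ℕ → ℝ} (ht : ∀ n, 0 ≤ t n) {b c : ℝ} (hb : 0 < b) (hc : 0 ≤ c)
    (hlower : ∀ n, c * t n ≤ μ.real (A n))
    (hinter : ∀ n, ∑ k ∈ Finset.range n, μ.real (A n ∩ A k) ≤
      t n * (b * ∑ k ∈ Finset.range n, t k + c / 4)) (n : ℕ) :
    min (∑ k ∈ Finset.range n, t k) (c / (4 * b)) * (c / 2) ≤
      μ.real (⋃ k ∈ Finset.range n, A k) := by
  induction n with
  | zero =>
    rw [Finset.sum_range_zero, min_eq_left (by positivity), zero_mul]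
    exact measureReal_nonneg
  | succ n ih =>
    set T := ∑ k ∈ Finset.range n, t k
    rw [Finset.sum_range_succ]
    rcases le_total T (c / (4 * b)) with hT | hT
    · have hoverlap : t n * (b * T + c / 4) ≤ t n * (c / 2) := by
        have hbT : b * T ≤ c / 4 := by
          rw [le_div_iff₀ (by positivity)] at hT
          linarith
        refine mul_le_mul_of_nonneg_left ?_ (ht n)
        linarith
      rw [min_eq_left hT] at ih
      calc min (T + t n) (c / (4 * b)) * (c / 2) ≤ (T + t n) * (c / 2) := by
            gcongr
            exact min_le_left _ _
        _ ≤ _ := by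
            linarith [measureReal_biUnion_range_add_le hA hfin n, hlower n, hinter n]
    · rw [min_eq_right hT] at ih
      calc min (T + t n) (c / (4 * b)) * (c / 2) ≤ c / (4 * b) * (c / 2) := by
            gcongr
            exact min_le_right _ _
        _ ≤ μ.real (⋃ k ∈ Finset.range n, A k) := ih
        _ ≤ _ := measureReal_mono (biUnion_subset_biUnion_left (by simp))
            (measure_biUnion_lt_top (Finset.finite_toSet _) fun k _ => (hfin k).lt_top).ne

theorem exists_le_measureReal_biUnion_range (hA : ∀ n, MeasurableSet (A n))
    (hfin : ∀ n, μ (A n) ≠ ∞) {t : ℕ → ℝ} (ht : ∀ n, 0 ≤ t n) (hdiv : ¬ Summable t)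
    {b c : ℝ} (hb : 0 < b) (hc : 0 ≤ c) (hlower : ∀ n, c * t n ≤ μ.real (A n))
    (hinter : ∀ n, ∑ k ∈ Finset.range n, μ.real (A n ∩ A k) ≤
      t n * (b * ∑ k ∈ Finset.range n, t k + c / 4)) :
    ∃ n, c ^ 2 / (8 * b) ≤ μ.real (⋃ k ∈ Finset.range n, A k) := by
  obtain ⟨n, hn⟩ := (((not_summable_iff_tendsto_nat_atTop_of_nonneg ht).1
    hdiv).eventually_ge_atTop (c / (4 * b))).exists
  refine ⟨n, le_of_eq_of_le ?_
    (min_sum_range_mul_le_measureReal_biUnion_range hA hfin ht hb hc hlower hinter n)⟩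
  rw [min_eq_right hn]
  field_simp
  ring

theorem ae_frequently_mem_thickening_mul_iff {α : Type*} [PseudoMetricSpace α]
    [SecondCountableTopology α] [MeasurableSpace α] [BorelSpace α] (μ : Measure α)
    [IsLocallyFiniteMeasure μ] [IsUnifLocDoublingMeasure μ] (s : ℕ → Set α) {M : ℝ} (hM : 0 < M)
    {r : ℕ → ℝ} (hr : Tendsto r atTop (𝓝 0)) :
    ∀ᵐ a ∂μ, (∃ᶠ i in atTop, a ∈ thickening (M * r i) (s i)) ↔
      ∃ᶠ i in atTop, a ∈ thickening (r i) (s i) := by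
  filter_upwards [(blimsup_thickening_mul_ae_eq μ (fun _ => True) s hM r hr).mem_iff] with a ha
  simpa only [blimsup_true, mem_limsup_iff_frequently_mem] using ha

end Measure

section Intervals

variable {X : Finset ℝ} {δ ρ t z : ℝ}

theorem volume_thickening_finset_ne_top (X : Finset ℝ) (ρ : ℝ) :
    volume (thickening ρ (X : Set ℝ)) ≠ ∞ :=
  X.finite_toSet.isBounded.thickening.measure_lt_top.ne

theorem volumeReal_thickening_finset_le (X : Finset ℝ) (hρ : 0 ≤ ρ) :
    volume.real (thickening ρ (X : Set ℝ)) ≤ X.card * (2 * ρ) := by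
  calc volume.real (thickening ρ (X : Set ℝ)) = volume.real (⋃ y ∈ X, ball y ρ) := by
        rw [thickening_eq_biUnion_ball]
        rfl
    _ ≤ ∑ y ∈ X, volume.real (ball y ρ) := measureReal_biUnion_finset_le _ _
    _ = X.card * (2 * ρ) := by simp [Real.volume_real_ball hρ]

theorem volumeReal_thickening_finset (hρ : 0 ≤ ρ)
    (hdisj : (X : Set ℝ).PairwiseDisjoint (ball · ρ)) :
    volume.real (thickening ρ (X : Set ℝ)) = X.card * (2 * ρ) := by
  calc volume.real (thickening ρ (X : Set ℝ)) = volume.real (⋃ y ∈ X, ball y ρ) := by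
        rw [thickening_eq_biUnion_ball]
        rfl
    _ = ∑ y ∈ X, volume.real (ball y ρ) :=
        measureReal_biUnion_finset hdisj fun _ _ => measurableSet_ball
    _ = X.card * (2 * ρ) := by simp [Real.volume_real_ball hρ]

theorem card_mul_le_of_pairwiseDisjoint_ball (hδ : 0 ≤ δ) (hρ : 0 ≤ ρ)
    (hdisj : (X : Set ℝ).PairwiseDisjoint (ball · δ)) (hX : (X : Set ℝ) ⊆ ball z ρ) :
    X.card * δ ≤ ρ + δ := by
  have hvol := measureReal_mono (μ := volume) (thickening_subset_ball hX δ) measure_ball_lt_top.ne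
  rw [volumeReal_thickening_finset hδ hdisj, Real.volume_real_ball (by positivity)] at hvol
  linarith

theorem volumeReal_thickening_inter_ball_le (hδ : 0 ≤ δ) (ht0 : 0 ≤ t) (ht1 : t ≤ 1) (hρ : 0 ≤ ρ)
    (hdisj : (X : Set ℝ).PairwiseDisjoint (ball · δ)) (z : ℝ) :
    volume.real (thickening (t * δ) (X : Set ℝ) ∩ ball z ρ) ≤ 2 * t * (ρ + 2 * δ) := by
  classical
  set Y := X.filter (· ∈ ball z (ρ + δ))
  have hYX : (Y : Set ℝ) = ↑X ∩ ball z (ρ + δ) := by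
    ext
    simp [Y]
  have hcard : Y.card * δ ≤ ρ + δ + δ :=
    card_mul_le_of_pairwiseDisjoint_ball (z := z) hδ (by positivity)
      (hdisj.subset (hYX ▸ inter_subset_left)) (hYX ▸ inter_subset_right)
  have hsub : thickening (t * δ) (X : Set ℝ) ∩ ball z ρ ⊆ thickening (t * δ) (Y : Set ℝ) := by
    rw [inter_comm, hYX]
    refine (ball_inter_thickening_subset z ρ (t * δ) X).trans (thickening_subset_of_subset _ ?_)
    gcongr
    exact mul_le_of_le_one_left hδ ht1
  calc volume.real (thickening (t * δ) (X : Set ℝ) ∩ ball z ρ)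
      ≤ volume.real (thickening (t * δ) (Y : Set ℝ)) :=
        measureReal_mono hsub (volume_thickening_finset_ne_top _ _)
    _ ≤ Y.card * (2 * (t * δ)) := volumeReal_thickening_finset_le Y (by positivity)
    _ = 2 * t * (Y.card * δ) := by ring
    _ ≤ 2 * t * (ρ + 2 * δ) := by
        gcongr
        linarith

theorem volumeReal_thickening_inter_thickening_le (hδ : 0 ≤ δ) (ht0 : 0 ≤ t) (ht1 : t ≤ 1)
    (hρ : 0 ≤ ρ) (hdisj : (X : Set ℝ).PairwiseDisjoint (ball · δ)) (Y : Finset ℝ) :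
    volume.real (thickening (t * δ) (X : Set ℝ) ∩ thickening ρ (Y : Set ℝ)) ≤
      Y.card * (2 * t * (ρ + 2 * δ)) := by
  calc volume.real (thickening (t * δ) (X : Set ℝ) ∩ thickening ρ (Y : Set ℝ))
      = volume.real (⋃ z ∈ Y, thickening (t * δ) (X : Set ℝ) ∩ ball z ρ) := by
        rw [← inter_iUnion₂, thickening_eq_biUnion_ball (E := (Y : Set ℝ))]
        rfl
    _ ≤ ∑ z ∈ Y, volume.real (thickening (t * δ) (X : Set ℝ) ∩ ball z ρ) :=
        measureReal_biUnion_finset_le _ _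
    _ ≤ ∑ _z ∈ Y, 2 * t * (ρ + 2 * δ) :=
        Finset.sum_le_sum fun z _ => volumeReal_thickening_inter_ball_le hδ ht0 ht1 hρ hdisj z
    _ = Y.card * (2 * t * (ρ + 2 * δ)) := by rw [Finset.sum_const, nsmul_eq_mul]

theorem sum_range_volumeReal_thickening_inter_le {X : ℕ → Finset ℝ} {δ t : ℕ → ℝ} {a L : ℝ}
    (hL : 0 ≤ L) (hδ : ∀ n, 0 < δ n) (ht0 : ∀ n, 0 ≤ t n) (ht1 : ∀ n, t n ≤ 1)
    (hdisj : ∀ n, (X n : Set ℝ).PairwiseDisjoint (ball · (δ n)))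
    (hupper : ∀ n, (X n).card * δ n ≤ L)
    (hratio : ∀ n, ∑ k ∈ Finset.range n, δ n / δ k ≤ a) (n : ℕ) :
    ∑ k ∈ Finset.range n, volume.real (thickening (t n * δ n) (X n : Set ℝ) ∩
      thickening (t k * δ k) (X k : Set ℝ)) ≤
        t n * (2 * L * ∑ k ∈ Finset.range n, t k + 4 * L * a) := by
  have hδn := hδ n
  have htn := ht0 n
  have hpair : ∀ k, volume.real (thickening (t n * δ n) (X n : Set ℝ) ∩
      thickening (t k * δ k) (X k : Set ℝ)) ≤ 2 * t n * L * (t k + 2 * (δ n / δ k)) := by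
    intro k
    have htk := ht0 k
    have hδk := hδ k
    calc _ ≤ (X k).card * (2 * t n * (t k * δ k + 2 * δ n)) :=
          volumeReal_thickening_inter_thickening_le hδn.le htn (ht1 n) (by positivity)
            (hdisj n) (X k)
      _ = 2 * t n * ((X k).card * δ k) * (t k + 2 * (δ n / δ k)) := by field_simp
      _ ≤ _ := by
          gcongr
          exact hupper k
  calc _ ≤ ∑ k ∈ Finset.range n, 2 * t n * L * (t k + 2 * (δ n / δ k)) :=
        Finset.sum_le_sum fun k _ => hpair k
    _ = t n * (2 * L * ∑ k ∈ Finset.range n, t k +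
          4 * L * ∑ k ∈ Finset.range n, δ n / δ k) := by
        rw [← Finset.mul_sum, Finset.sum_add_distrib, ← Finset.mul_sum]
        ring
    _ ≤ t n * (2 * L * ∑ k ∈ Finset.range n, t k + 4 * L * a) := by
        gcongr
        exact hratio n

theorem exists_le_volumeReal_biUnion_thickening {X : ℕ → Finset ℝ} {δ t : ℕ → ℝ} {c L : ℝ}
    (hc : 0 ≤ c) (hL : 0 < L) (hδ : ∀ n, 0 < δ n) (ht0 : ∀ n, 0 ≤ t n) (ht1 : ∀ n, t n ≤ 1)
    (hdiv : ¬ Summable t)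
    (hdisj : ∀ n, (X n : Set ℝ).PairwiseDisjoint (ball · (δ n)))
    (hlower : ∀ n, c * L ≤ (X n).card * δ n) (hupper : ∀ n, (X n).card * δ n ≤ L)
    (hratio : ∀ n, ∑ k ∈ Finset.range n, δ n / δ k ≤ c / 8) :
    ∃ n, c ^ 2 * L / 4 ≤
      volume.real (⋃ k ∈ Finset.range n, thickening (t k * δ k) (X k : Set ℝ)) := by
  have hmeasure : ∀ n, 2 * c * L * t n ≤
      volume.real (thickening (t n * δ n) (X n : Set ℝ)) := by
    intro n
    have hdisj' : (X n : Set ℝ).PairwiseDisjoint (ball · (t n * δ n)) :=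
      (hdisj n).mono fun y => ball_subset_ball (mul_le_of_le_one_left (hδ n).le (ht1 n))
    rw [volumeReal_thickening_finset (mul_nonneg (ht0 n) (hδ n).le) hdisj']
    linarith [mul_le_mul_of_nonneg_left (hlower n) (ht0 n)]
  obtain ⟨n, hn⟩ := exists_le_measureReal_biUnion_range (b := 2 * L) (c := 2 * c * L)
    (fun n => isOpen_thickening.measurableSet) (fun n => volume_thickening_finset_ne_top (X n) _)
    ht0 hdiv (by positivity) (by positivity) hmeasure fun n =>
      (sum_range_volumeReal_thickening_inter_le hL.le hδ ht0 ht1 hdisj hupper hratio n).trans_eq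
        (by ring)
  refine ⟨n, le_of_eq_of_le ?_ hn⟩
  field_simp
  ring

theorem exists_pairwiseDisjoint_ball_of_volumeReal_sdiff_le {F : Set ℝ} {x r : ℝ} (hδ : 0 < δ)
    (hδr : 2 * δ ≤ r) (hfin : (F ∩ ball x (r + δ)).Finite)
    (hF : volume.real (ball x r \ thickening δ F) ≤ r) :
    ∃ X : Finset ℝ, ↑X ⊆ F ∧ (X : Set ℝ).PairwiseDisjoint (ball · δ) ∧
      thickening δ (X : Set ℝ) ⊆ ball x (2 * r) ∧ r / 6 ≤ X.card * δ ∧ X.card * δ ≤ 2 * r := by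
  obtain ⟨X, hX, hdisj, hcover⟩ := exists_pairwiseDisjoint_ball_subset_thickening hfin hδ
  have hr : 0 < r := by linarith
  have hXball : (X : Set ℝ) ⊆ ball x (r + δ) := hX.trans inter_subset_right
  refine ⟨X, hX.trans inter_subset_left, hdisj,
    (thickening_subset_ball hXball δ).trans (ball_subset_ball (by linarith)), ?_, ?_⟩
  · have hsub : ball x r ⊆ ball x r \ thickening δ F ∪ thickening (δ + 2 * δ) (X : Set ℝ) := by
      rw [← sdiff_subset_iff, sdiff_sdiff_right_self]
      calc ball x r ∩ thickening δ F ⊆ thickening δ (F ∩ ball x (r + δ)) :=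
            ball_inter_thickening_subset x r δ F
        _ ⊆ thickening δ (thickening (2 * δ) X) := thickening_subset_of_subset δ hcover
        _ ⊆ thickening (δ + 2 * δ) X := thickening_thickening_subset _ _ _
    have hvol : 2 * r ≤ r + X.card * (2 * (δ + 2 * δ)) := by
      calc 2 * r = volume.real (ball x r) := (Real.volume_real_ball hr.le).symm
        _ ≤ volume.real (ball x r \ thickening δ F ∪ thickening (δ + 2 * δ) (X : Set ℝ)) :=
          measureReal_mono hsub (measure_union_ne_top
            (measure_ne_top_of_subset sdiff_subset measure_ball_lt_top.ne)
            (volume_thickening_finset_ne_top X _))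
        _ ≤ _ := measureReal_union_le _ _
        _ ≤ _ := add_le_add hF (volumeReal_thickening_finset_le X (by positivity))
    linarith
  · linarith [card_mul_le_of_pairwiseDisjoint_ball hδ.le (by positivity) hdisj hXball]

end Intervals

section Series

theorem sum_range_div_le_of_succ_le {δ : ℕ → ℝ} {a : ℝ} (hδ : ∀ n, 0 < δ n) (ha : a < 1)
    (hsucc : ∀ n, δ (n + 1) ≤ a * δ n) (n : ℕ) :
    ∑ k ∈ Finset.range n, δ n / δ k ≤ a / (1 - a) := by
  have ha0 : 0 < a := pos_of_mul_pos_left ((hδ 1).trans_le (hsucc 0)) (hδ 0).le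
  have h1a : 0 < 1 - a := sub_pos.2 ha
  induction n with
  | zero => simp only [Finset.range_zero, Finset.sum_empty]; positivity
  | succ n ih =>
    have hn := hδ n
    calc ∑ k ∈ Finset.range (n + 1), δ (n + 1) / δ k
        = δ (n + 1) / δ n * (∑ k ∈ Finset.range n, δ n / δ k + 1) := by
          rw [Finset.sum_range_succ, mul_add, mul_one, Finset.mul_sum]
          congr 1
          refine Finset.sum_congr rfl fun k _ => ?_
          field_simp
      _ ≤ a * (a / (1 - a) + 1) := by
          have : 0 ≤ ∑ k ∈ Finset.range n, δ n / δ k :=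
            Finset.sum_nonneg fun k _ => (div_pos hn (hδ k)).le
          gcongr
          rw [div_le_iff₀ hn]
          exact hsucc n
      _ = a / (1 - a) := by
          field_simp
          ring

theorem summable_of_summable_min {f : ℕ → ℝ} {c : ℝ} (hc : 0 < c)
    (h : Summable fun n => min c (f n)) : Summable f := by
  refine h.congr_atTop ?_
  filter_upwards [h.tendsto_atTop_zero.eventually_lt_const hc] with n hn
  exact min_eq_right ((min_lt_iff.1 hn).resolve_left (lt_irrefl c)).le

theorem summable_pow_mul_iff {ψ : ℕ → ℝ} (hψ0 : ∀ q, 0 ≤ ψ q) (hψ : AntitoneOn ψ (Ici 1))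
    {a b : ℕ} (ha : 0 < a) (hb : 1 < b) :
    (Summable fun k : ℕ => (b : ℝ) ^ k * ψ (a * b ^ k)) ↔ Summable ψ := by
  have hstrict : StrictMono fun k => a * b ^ k :=
    (pow_right_strictMono₀ hb).const_mul ha
  rw [← summable_schlomilch_iff_of_nonneg (C := b) (u := fun k => a * b ^ k) hψ0
    (fun m n hm hmn => hψ hm (hm.trans_le hmn) hmn) (fun k => by positivity) hstrict (by lia)
    (fun k => le_of_eq ?_)]
  · have hgap : (a : ℝ) * (b - 1) ≠ 0 :=
      mul_ne_zero (by positivity) (sub_ne_zero.2 (by exact_mod_cast hb.ne'))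
    rw [← summable_mul_left_iff hgap]
    refine summable_congr fun k => ?_
    push_cast
    ring
  · simp only [smul_eq_mul, pow_succ, Nat.mul_sub]
    congr 1 <;> ring

theorem not_summable_min_mul_pow {ψ : ℕ → ℝ} (hψ0 : ∀ q, 0 ≤ ψ q) (hψ : AntitoneOn ψ (Ici 1))
    (hdiv : ¬ Summable ψ) {a b : ℕ} (ha : 0 < a) (hb : 1 < b) {c : ℝ} (hc : c ≠ 0) :
    ¬ Summable fun k : ℕ => min 1 (c * ((b : ℝ) ^ k * ψ (a * b ^ k))) := fun h =>
  hdiv ((summable_pow_mul_iff hψ0 hψ ha hb).1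
    ((summable_mul_left_iff hc).1 (summable_of_summable_min one_pos h)))

end Series

section Fractions

/-- The points `(γ + m) / q` with `m` an integer, which for `0 < q` are the zeros of
`α ↦ ‖qα - γ‖`. -/
def shiftedFractions (γ : ℝ) (q : ℕ) : Set ℝ :=
  range fun m : ℤ => (γ + m) / q

/-- The points `(γ + m) / n` with `m` an integer and `N < n ≤ 2N`: all the approximants whose
denominator lies in one dyadic block. -/
def dyadicShiftedFractions (γ : ℝ) (N : ℕ) : Set ℝ :=
  ⋃ n ∈ Finset.Ioc N (2 * N), shiftedFractions γ n

variable {q : ℕ} {γ γ' α ε ρ x r : ℝ}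

theorem mem_thickening_shiftedFractions (hq : 0 < q) :
    α ∈ thickening (ε / q) (shiftedFractions γ q) ↔ ∃ m : ℤ, |q * α - γ - m| < ε := by
  have hq' : (0 : ℝ) < q := by exact_mod_cast hq
  have hdist (m : ℤ) : dist α ((γ + m) / q) = |q * α - γ - m| / q := by
    rw [Real.dist_eq, ← abs_of_pos hq', ← abs_div, abs_of_pos hq']
    congr 1
    field_simp
    ring
  simp only [mem_thickening_iff, shiftedFractions, exists_range_iff, hdist,
    div_lt_div_iff_of_pos_right hq']

theorem distNearestInt_lt_iff : distNearestInt x < ε ↔ ∃ m : ℤ, |x - m| < ε :=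
  ⟨fun h => ⟨round x, h⟩, fun ⟨m, hm⟩ => (round_le x m).trans_lt hm⟩

theorem distNearestInt_mul_sub_lt_iff (hq : 0 < q) :
    distNearestInt (q * α - γ) < ε ↔ α ∈ thickening (ε / q) (shiftedFractions γ q) := by
  rw [distNearestInt_lt_iff, mem_thickening_shiftedFractions hq]

theorem thickening_shiftedFractions_subset (hq : 0 < q) {C : ℝ} (hγ : |γ - γ'| ≤ C * ε) :
    thickening (ε / q) (shiftedFractions γ q) ⊆
      thickening ((C + 1) * (ε / q)) (shiftedFractions γ' q) := by
  intro α hα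
  obtain ⟨m, hm⟩ := (mem_thickening_shiftedFractions hq).1 hα
  rw [← mul_div_assoc, mem_thickening_shiftedFractions hq]
  refine ⟨m, ?_⟩
  calc |q * α - γ' - m| = |(q * α - γ - m) + (γ - γ')| := by congr 1; ring
    _ ≤ |q * α - γ - m| + |γ - γ'| := abs_add_le _ _
    _ < (C + 1) * ε := by linarith

theorem exists_finset_shiftedFractions_inter_ball_subset (γ x : ℝ) (hr : 0 ≤ r) (hq : 0 < q) :
    ∃ X : Finset ℝ, shiftedFractions γ q ∩ ball x r ⊆ X ∧ (X.card : ℝ) ≤ 2 * q * r + 1 := by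
  classical
  set P := Finset.Icc ⌈q * (x - r) - γ⌉ ⌊q * (x + r) - γ⌋
  refine ⟨P.image fun m : ℤ => (γ + m) / q, ?_, ?_⟩
  · rintro _ ⟨⟨m, rfl⟩, hm⟩
    have hq' : (0 : ℝ) < q := by exact_mod_cast hq
    rw [Real.ball_eq_Ioo, mem_Ioo, lt_div_iff₀' hq', div_lt_iff₀' hq'] at hm
    refine Finset.mem_coe.2 (Finset.mem_image_of_mem _ (Finset.mem_Icc.2 ⟨?_, ?_⟩))
    · exact Int.ceil_le.2 (by linarith)
    · exact Int.le_floor.2 (by linarith)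
  · have hcard : (P.card : ℝ) ≤ 2 * q * r + 1 := by
      have hnonneg : 0 ≤ 2 * q * r + 1 := by positivity
      have hlower := Int.le_ceil (q * (x - r) - γ)
      have hupper := Int.floor_le (q * (x + r) - γ)
      rw [Int.card_Icc, ← Int.cast_natCast (R := ℝ), Int.toNat_eq_max, Int.cast_max]
      refine max_le ?_ (by exact_mod_cast hnonneg)
      push_cast
      linarith
    exact le_trans (by exact_mod_cast Finset.card_image_le) hcard

theorem volumeReal_ball_inter_thickening_shiftedFractions_le (γ x : ℝ) (hr : 0 ≤ r) (hρ : 0 ≤ ρ)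
    (hq : 0 < q) :
    volume.real (ball x r ∩ thickening ρ (shiftedFractions γ q)) ≤
      (2 * q * (r + ρ) + 1) * (2 * ρ) := by
  obtain ⟨X, hX, hcard⟩ :=
    exists_finset_shiftedFractions_inter_ball_subset γ x (add_nonneg hr hρ) hq
  calc volume.real (ball x r ∩ thickening ρ (shiftedFractions γ q))
      ≤ volume.real (thickening ρ (X : Set ℝ)) :=
        measureReal_mono ((ball_inter_thickening_subset x r ρ _).trans
          (thickening_subset_of_subset ρ hX)) (volume_thickening_finset_ne_top X ρ)
    _ ≤ X.card * (2 * ρ) := volumeReal_thickening_finset_le X hρ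
    _ ≤ (2 * q * (r + ρ) + 1) * (2 * ρ) := by gcongr

theorem finite_shiftedFractions_inter_ball (γ x r : ℝ) (hq : 0 < q) :
    (shiftedFractions γ q ∩ ball x r).Finite := by
  rcases le_total 0 r with hr | hr
  · obtain ⟨X, hX, -⟩ := exists_finset_shiftedFractions_inter_ball_subset γ x hr hq
    exact X.finite_toSet.subset hX
  · simp only [ball_eq_empty.2 hr, inter_empty, finite_empty]

theorem finite_dyadicShiftedFractions_inter_ball (γ x r : ℝ) (N : ℕ) :
    (dyadicShiftedFractions γ N ∩ ball x r).Finite := by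
  rw [dyadicShiftedFractions, iUnion₂_inter]
  refine (Finset.finite_toSet _).biUnion fun n hn => finite_shiftedFractions_inter_ball γ x r ?_
  exact Nat.zero_lt_of_lt (Finset.mem_Ioc.1 hn).1

theorem thickening_dyadicShiftedFractions_subset {ψ : ℕ → ℝ} (hψ0 : ∀ q, 0 ≤ ψ q)
    (hψ : AntitoneOn ψ (Ici 1)) (γ : ℝ) (N : ℕ) :
    thickening (ψ (2 * N) / (2 * N)) (dyadicShiftedFractions γ N) ⊆
      ⋃ q ∈ Ici N, thickening (ψ q / q) (shiftedFractions γ q) := by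
  simp only [dyadicShiftedFractions, thickening_iUnion]
  refine iUnion₂_subset fun n hn => ?_
  obtain ⟨hNn, hn2⟩ := Finset.mem_Ioc.1 hn
  refine Subset.trans (thickening_mono ?_ _) (subset_biUnion_of_mem
    (u := fun q => thickening (ψ q / q) (shiftedFractions γ q)) (mem_Ici.2 hNn.le))
  have hn0 : 1 ≤ n := Nat.one_le_of_lt hNn
  have hψn : ψ (2 * N) ≤ ψ n := hψ hn0 (hn0.trans hn2) hn2
  have hn2' : (n : ℝ) ≤ 2 * N := by exact_mod_cast hn2
  have := hψ0 n
  gcongr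

theorem exists_natCast_mul_rat_eq (s : ℚ) (a : ℤ) :
    ∃ j ∈ Finset.Icc 1 s.den, ∃ m : ℤ, (j : ℚ) * s = m + a / s.den := by
  have hden : (0 : ℤ) < s.den := by exact_mod_cast s.pos
  obtain ⟨u, v, huv⟩ := s.isCoprime_num_den
  obtain ⟨j, hj⟩ := Int.eq_ofNat_of_zero_le (Int.emod_nonneg (a * u - 1) hden.ne')
  have hlt := Int.emod_lt_of_pos (a * u - 1) hden
  have hdiv := Int.emod_add_mul_ediv (a * u - 1) s.den
  set w := (a * u - 1) / (s.den : ℤ)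
  have hkey : ((j : ℤ) + 1) * s.num = (-a * v - w * s.num) * s.den + a := by
    linear_combination s.num * (hdiv - hj) + a * huv
  refine ⟨j + 1, Finset.mem_Icc.2 ⟨by lia, by lia⟩, -a * v - w * s.num, ?_⟩
  have hden' : (s.den : ℚ) ≠ 0 := by exact_mod_cast s.den_nz
  rw [← mul_left_inj' hden', mul_assoc, Rat.mul_den_eq_num, add_mul, div_mul_cancel₀ _ hden']
  exact_mod_cast hkey

theorem exists_abs_add_natCast_mul_rat_sub_le (s : ℚ) (y : ℝ) :
    ∃ j ∈ Finset.Icc 1 s.den, ∃ m : ℤ, |y + j * s - m| ≤ 1 / s.den := by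
  have : (0 : ℝ) < s.den := by exact_mod_cast s.pos
  obtain ⟨j, hj, m, hm⟩ := exists_natCast_mul_rat_eq s (-⌊s.den * y⌋)
  refine ⟨j, hj, m, ?_⟩
  have hm' : (j : ℝ) * s = m - ⌊s.den * y⌋ / s.den := by
    rw [sub_eq_add_neg, ← neg_div]
    exact_mod_cast congrArg (Rat.cast (K := ℝ)) hm
  have hfract : y + j * s - m = Int.fract (s.den * y) / s.den := by
    rw [hm', Int.fract]
    field_simp
    ring
  rw [hfract, abs_of_nonneg (by positivity)]
  gcongr
  exact (Int.fract_lt_one _).le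

theorem mem_thickening_dyadicShiftedFractions (γ : ℝ) {s : ℚ} {N K : ℕ}
    (hs : |α - s| ≤ 1 / ((N + 1) * s.den)) (hden : s.den ≤ N) (hN : N ≤ K * s.den) :
    α ∈ thickening ((K + 1) / N ^ 2) (dyadicShiftedFractions γ N) := by
  obtain ⟨j, hj, m, hm⟩ := exists_abs_add_natCast_mul_rat_sub_le s (N * α - γ)
  rw [Finset.mem_Icc] at hj
  have hden0 : (0 : ℝ) < s.den := by exact_mod_cast s.pos
  have hN0 : (0 : ℝ) < N := by exact_mod_cast s.pos.trans_le hden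
  have hjden : (j : ℝ) ≤ s.den := by exact_mod_cast hj.2
  have hKden : 1 / (s.den : ℝ) ≤ K / N := by
    rw [div_le_div_iff₀ hden0 hN0, one_mul]
    exact_mod_cast hN
  have hdrift : |j * (α - s)| < 1 / N := by
    calc |j * (α - s)| = j * |α - s| := by rw [abs_mul, Nat.abs_cast]
      _ ≤ s.den * (1 / ((N + 1) * s.den)) := by gcongr
      _ = 1 / (N + 1) := by field_simp
      _ < 1 / N := by gcongr; linarith
  have happrox : ∃ m : ℤ, |(N + j : ℕ) * α - γ - m| < (K + 1) / N := by
    refine ⟨m, ?_⟩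
    calc |(N + j : ℕ) * α - γ - m| = |(N * α - γ + j * s - m) + j * (α - s)| := by
          push_cast
          congr 1
          ring
      _ ≤ |N * α - γ + j * s - m| + |j * (α - s)| := abs_add_le _ _
      _ < K / N + 1 / N := by linarith
      _ = (K + 1) / N := by ring
  have hmem := (mem_thickening_shiftedFractions (by lia)).2 happrox
  refine thickening_mono ?_ _ (thickening_subset_of_subset _ (subset_biUnion_of_mem
    (u := fun n => shiftedFractions γ n) (Finset.mem_Ioc.2 ⟨by lia, by lia⟩)) hmem)
  rw [div_div, sq]
  gcongr
  exact_mod_cast Nat.le_add_right N j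

theorem ball_sdiff_thickening_dyadicShiftedFractions_subset (γ x r : ℝ) {N K : ℕ} (hN : 0 < N)
    (hK : 0 < K) :
    ball x r \ thickening ((K + 1) / N ^ 2) (dyadicShiftedFractions γ N) ⊆
      ⋃ q ∈ Finset.Icc 1 (N / K), ball x r ∩ thickening ((N : ℝ)⁻¹ / q) (shiftedFractions 0 q) := by
  rintro α ⟨hα, hfar⟩
  obtain ⟨s, hs, hden⟩ := Real.exists_rat_abs_sub_le_and_den_le α hN
  have : (0 : ℝ) < s.den := by exact_mod_cast s.pos
  have hsmall : s.den ≤ N / K := by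
    by_contra! hlarge
    rw [Nat.div_lt_iff_lt_mul hK] at hlarge
    exact hfar (mem_thickening_dyadicShiftedFractions γ hs hden (by lia))
  refine mem_iUnion₂.2 ⟨s.den, Finset.mem_Icc.2 ⟨s.pos, hsmall⟩, hα, ?_⟩
  refine (mem_thickening_shiftedFractions s.pos).2 ⟨s.num, ?_⟩
  calc |s.den * α - 0 - s.num| = s.den * |α - s| := by
        rw [← Nat.abs_cast, ← abs_mul, Nat.abs_cast, Rat.cast_def]
        congr 1
        field_simp
        ring
    _ ≤ s.den * (1 / ((N + 1) * s.den)) := by gcongr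
    _ = ((N : ℝ) + 1)⁻¹ := by field_simp
    _ < (N : ℝ)⁻¹ := by gcongr; linarith

theorem volumeReal_ball_inter_thickening_inv_div_shiftedFractions_le (γ x : ℝ) (hr : 0 ≤ r) (N : ℕ)
    (hq : 0 < q) :
    volume.real (ball x r ∩ thickening ((N : ℝ)⁻¹ / q) (shiftedFractions γ q)) ≤
      4 * r * (N : ℝ)⁻¹ + 6 * ((N : ℝ)⁻¹ * (q : ℝ)⁻¹) := by
  have hN1 : (N : ℝ)⁻¹ ≤ 1 := Nat.cast_inv_le_one N
  calc _ ≤ (2 * q * (r + (N : ℝ)⁻¹ / q) + 1) * (2 * ((N : ℝ)⁻¹ / q)) :=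
        volumeReal_ball_inter_thickening_shiftedFractions_le γ x hr (by positivity) hq
    _ = 4 * r * (N : ℝ)⁻¹ + (4 * (N : ℝ)⁻¹ + 2) * ((N : ℝ)⁻¹ * (q : ℝ)⁻¹) := by
        field_simp
        ring
    _ ≤ _ := by
        gcongr
        linarith

theorem volumeReal_ball_sdiff_thickening_dyadicShiftedFractions_le (γ x : ℝ) (hr : 0 ≤ r) {N : ℕ}
    (hN : 0 < N) :
    volume.real (ball x r \ thickening (9 / N ^ 2) (dyadicShiftedFractions γ N)) ≤
      r / 2 + 6 * ((N : ℝ)⁻¹ * ∑ q ∈ Finset.range N, (q : ℝ)⁻¹) := by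
  -- Denominators up to `N / K` contribute about `4 * r / K`, so `K = 8` leaves room for `r / 2`.
  have hsub := ball_sdiff_thickening_dyadicShiftedFractions_subset γ x r hN (K := 8) (by norm_num)
  norm_num only at hsub
  calc _ ≤ volume.real (⋃ q ∈ Finset.Icc 1 (N / 8),
          ball x r ∩ thickening ((N : ℝ)⁻¹ / q) (shiftedFractions 0 q)) :=
        measureReal_mono hsub (measure_ne_top_of_subset
          (iUnion₂_subset fun _ _ => inter_subset_left) measure_ball_lt_top.ne)
    _ ≤ ∑ q ∈ Finset.Icc 1 (N / 8), (4 * r * (N : ℝ)⁻¹ + 6 * ((N : ℝ)⁻¹ * (q : ℝ)⁻¹)) :=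
        (measureReal_biUnion_finset_le _ _).trans (Finset.sum_le_sum fun q hq =>
          volumeReal_ball_inter_thickening_inv_div_shiftedFractions_le 0 x hr N
            (Finset.mem_Icc.1 hq).1)
    _ = 4 * r * ((N / 8 : ℕ) * (N : ℝ)⁻¹) +
          6 * ((N : ℝ)⁻¹ * ∑ q ∈ Finset.Icc 1 (N / 8), (q : ℝ)⁻¹) := by
        simp only [Finset.sum_add_distrib, Finset.sum_const, Nat.card_Icc, ← Finset.mul_sum]
        rw [nsmul_eq_mul, Nat.add_sub_cancel]
        ring
    _ ≤ 4 * r * (1 / 8) + 6 * ((N : ℝ)⁻¹ * ∑ q ∈ Finset.range N, (q : ℝ)⁻¹) := by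
        gcongr
        · rw [← div_eq_mul_inv, div_le_iff₀ (by exact_mod_cast hN), one_div_mul_eq_div]
          exact_mod_cast Nat.cast_div_le
        · intro q hq
          rw [Finset.mem_Icc] at hq
          exact Finset.mem_range.2 (by lia)
    _ = _ := by ring

theorem eventually_volumeReal_ball_sdiff_thickening_dyadicShiftedFractions_le (γ x : ℝ)
    (hr : 0 < r) :
    ∀ᶠ N : ℕ in atTop,
      volume.real (ball x r \ thickening (9 / N ^ 2) (dyadicShiftedFractions γ N)) ≤ r := by
  have hcesaro := (tendsto_inv_atTop_nhds_zero_nat (𝕜 := ℝ)).cesaro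
  filter_upwards [hcesaro.eventually_lt_const (show 0 < r / 12 by positivity),
    eventually_gt_atTop 0] with N hmean hN
  linarith [volumeReal_ball_sdiff_thickening_dyadicShiftedFractions_le γ x hr.le hN]

theorem eventually_exists_pairwiseDisjoint_ball_dyadicShiftedFractions (γ x : ℝ) (hr : 0 < r) :
    ∀ᶠ N : ℕ in atTop, ∃ X : Finset ℝ, ↑X ⊆ dyadicShiftedFractions γ N ∧
      (X : Set ℝ).PairwiseDisjoint (ball · (9 / N ^ 2)) ∧
      thickening (9 / N ^ 2) (X : Set ℝ) ⊆ ball x (2 * r) ∧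
      r / 6 ≤ X.card * (9 / N ^ 2) ∧ X.card * (9 / N ^ 2) ≤ 2 * r := by
  have hδ : Tendsto (fun N : ℕ => 2 * (9 / (N : ℝ) ^ 2)) atTop (𝓝 0) := by
    simpa only [mul_zero] using (tendsto_const_div_pow (9 : ℝ) 2 two_ne_zero).const_mul 2
  filter_upwards [eventually_volumeReal_ball_sdiff_thickening_dyadicShiftedFractions_le γ x hr,
    hδ.eventually_le_const hr, eventually_gt_atTop 0] with N hvol hsmall hN
  exact exists_pairwiseDisjoint_ball_of_volumeReal_sdiff_le (by positivity) hsmall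
    (finite_dyadicShiftedFractions_inter_ball γ x _ N) hvol

end Fractions

section Khintchine

variable {ψ : ℕ → ℝ}

theorem min_one_mul_div_sq_le {N : ℕ} (hN : 0 < N) :
    min 1 (N * ψ (2 * N) / 18) * (9 / N ^ 2) ≤ ψ (2 * N) / (2 * N) := by
  have : (0 : ℝ) < N := by exact_mod_cast hN
  calc min 1 (N * ψ (2 * N) / 18) * (9 / N ^ 2) ≤ N * ψ (2 * N) / 18 * (9 / N ^ 2) := by
        gcongr
        exact min_le_right _ _
    _ = ψ (2 * N) / (2 * N) := by
        field_simp
        ring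

theorem sum_range_div_natCast_sq_le {N : ℕ → ℕ} (hN0 : ∀ k, 0 < N k)
    (hN : ∀ k, N (k + 1) = 32 * N k) {c : ℝ} (hc : 0 < c) (n : ℕ) :
    ∑ k ∈ Finset.range n, c / (N n : ℝ) ^ 2 / (c / (N k : ℝ) ^ 2) ≤ 1 / 1023 := by
  have hN0' : ∀ k, (0 : ℝ) < N k := fun k => by exact_mod_cast hN0 k
  have hratio := sum_range_div_le_of_succ_le (δ := fun k => c / (N k : ℝ) ^ 2) (a := 1 / 1024)
    (fun k => div_pos hc (pow_pos (hN0' k) 2)) (by norm_num) (fun k => ?_) n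
  · exact hratio.trans_eq (by norm_num)
  · have := hN0' k
    rw [hN]
    push_cast
    field_simp
    norm_num

theorem div_le_volumeReal_ball_inter_biUnion_thickening (hψ0 : ∀ q, 0 ≤ ψ q)
    (hψ : AntitoneOn ψ (Ici 1)) (hdiv : ¬ Summable ψ) (γ x : ℝ) {r : ℝ} (hr : 0 < r) (N₀ : ℕ) :
    r / 288 ≤ volume.real
      (ball x (2 * r) ∩ ⋃ q ∈ Ici N₀, thickening (ψ q / q) (shiftedFractions γ q)) := by
  obtain ⟨N₁, hN₁⟩ := eventually_atTop.1
    (eventually_exists_pairwiseDisjoint_ball_dyadicShiftedFractions γ x hr)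
  obtain ⟨M, hM0, hMN₀, hMN₁⟩ : ∃ M, 0 < M ∧ N₀ ≤ M ∧ N₁ ≤ M :=
    ⟨N₀ + N₁ + 1, by lia, by lia, by lia⟩
  -- Any ratio `R` with `1 / (R ^ 2 - 1) ≤ 1 / 96` would do: `X k` fills the proportion `1 / 12`.
  set N : ℕ → ℕ := fun k => M * 32 ^ k
  have hMN : ∀ k, M ≤ N k := fun k => Nat.le_mul_of_pos_right M (by positivity)
  have hN0 : ∀ k, 0 < N k := fun k => hM0.trans_le (hMN k)
  choose X hXsub hXdisj hXball hXlower hXupper using fun k => hN₁ (N k) (hMN₁.trans (hMN k))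
  set δ : ℕ → ℝ := fun k => 9 / (N k : ℝ) ^ 2
  have hδ : ∀ k, 0 < δ k := fun k => by have := hN0 k; positivity
  set t : ℕ → ℝ := fun k => min 1 (N k * ψ (2 * N k) / 18)
  have ht0 : ∀ k, 0 ≤ t k := fun k => by have := hψ0 (2 * N k); positivity
  have ht1 : ∀ k, t k ≤ 1 := fun k => min_le_left _ _
  have htdiv : ¬ Summable t := by
    convert not_summable_min_mul_pow hψ0 hψ hdiv (a := 2 * M) (b := 32) (c := M / 18)
      (by positivity) (by norm_num) (by positivity) using 4 with k
    simp only [N, ← mul_assoc]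
    push_cast
    ring
  obtain ⟨n, hn⟩ := exists_le_volumeReal_biUnion_thickening (c := 1 / 12) (L := 2 * r)
    (by norm_num) (by positivity) hδ ht0 ht1 htdiv hXdisj (fun k => by linarith [hXlower k])
    hXupper fun n => (sum_range_div_natCast_sq_le hN0 (fun k => by ring) (by norm_num) n).trans
      (by norm_num)
  refine (le_of_eq_of_le (by ring) hn).trans (measureReal_mono (iUnion₂_subset fun k _ =>
    subset_inter ?_ ?_) (measure_ne_top_of_subset inter_subset_left measure_ball_lt_top.ne))
  · exact (thickening_mono (mul_le_of_le_one_left (hδ k).le (ht1 k)) _).trans (hXball k)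
  · calc thickening (t k * δ k) (X k : Set ℝ)
        ⊆ thickening (ψ (2 * N k) / (2 * N k)) (dyadicShiftedFractions γ (N k)) :=
          (thickening_mono (min_one_mul_div_sq_le (hN0 k)) _).trans
            (thickening_subset_of_subset _ (hXsub k))
      _ ⊆ ⋃ q ∈ Ici (N k), thickening (ψ q / q) (shiftedFractions γ q) :=
          thickening_dyadicShiftedFractions_subset hψ0 hψ γ (N k)
      _ ⊆ _ := biUnion_subset_biUnion_left (Ici_subset_Ici.2 (hMN₀.trans (hMN k)))

theorem ae_frequently_mem_thickening_shiftedFractions (hψ0 : ∀ q, 0 ≤ ψ q)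
    (hψ : AntitoneOn ψ (Ici 1)) (hdiv : ¬ Summable ψ) (γ : ℝ) :
    ∀ᵐ α, ∃ᶠ q in atTop, α ∈ thickening (ψ q / q) (shiftedFractions γ q) := by
  have htail : ∀ N₀ : ℕ, ∀ᵐ α, α ∈ ⋃ q ∈ Ici N₀, thickening (ψ q / q) (shiftedFractions γ q) := by
    intro N₀
    refine ae_mem_of_forall_mul_le_volumeReal_ball_inter
      (isOpen_biUnion fun _ _ => isOpen_thickening).measurableSet (c := 1 / 576) (by norm_num)
      fun x r hr => ?_
    have hlocal := div_le_volumeReal_ball_inter_biUnion_thickening hψ0 hψ hdiv γ x (half_pos hr) N₀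
    rw [mul_div_cancel₀ r two_ne_zero] at hlocal
    linarith
  filter_upwards [ae_all_iff.2 htail] with α hα
  refine frequently_atTop.2 fun N₀ => ?_
  simpa only [mem_iUnion, mem_Ici, exists_prop] using hα N₀

theorem tendsto_div_natCast_atTop_nhds_zero (hψ0 : ∀ q, 0 ≤ ψ q) (hψ : AntitoneOn ψ (Ici 1)) :
    Tendsto (fun q : ℕ => ψ q / q) atTop (𝓝 0) := by
  refine squeeze_zero' (.of_forall fun q => div_nonneg (hψ0 q) q.cast_nonneg) ?_
    (tendsto_const_div_atTop_nhds_zero_nat (ψ 1))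
  filter_upwards [eventually_ge_atTop 1] with q hq
  gcongr
  exact hψ self_mem_Ici hq hq

theorem ae_frequently_mem_thickening_shiftedFractions_of_abs_sub_le (hψ0 : ∀ q, 0 ≤ ψ q)
    (hψ : AntitoneOn ψ (Ici 1)) (hdiv : ¬ Summable ψ) {γ : ℕ → ℝ} {γ₀ C : ℝ} (hC : 0 < C)
    (hγ : ∀ q, 1 ≤ q → |γ q - γ₀| ≤ C * ψ q) :
    ∀ᵐ α, ∃ᶠ q in atTop, α ∈ thickening (ψ q / q) (shiftedFractions (γ q) q) := by
  filter_upwards [ae_frequently_mem_thickening_shiftedFractions hψ0 hψ hdiv γ₀,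
    ae_frequently_mem_thickening_mul_iff volume (fun q => shiftedFractions (γ q) q)
      (add_pos hC one_pos) (tendsto_div_natCast_atTop_nhds_zero hψ0 hψ)] with α hα hscale
  refine hscale.1 ((hα.and_eventually (eventually_ge_atTop 1)).mono fun q ⟨hq, hq1⟩ => ?_)
  exact thickening_shiftedFractions_subset hq1 (abs_sub_comm (γ q) γ₀ ▸ hγ q hq1) hq

theorem mem_WSet_iff_frequently {γ : ℕ → ℝ} {α : ℝ} :
    α ∈ WSet ψ γ ↔ α ∈ Icc 0 1 ∧
      ∃ᶠ q in atTop, α ∈ thickening (ψ q / q) (shiftedFractions (γ q) q) := by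
  rw [WSet, mem_ofPred_eq, ← Nat.frequently_atTop_iff_infinite]
  refine and_congr_right fun _ => frequently_congr ?_
  filter_upwards [eventually_ge_atTop 1] with q hq
  rw [and_iff_right hq, distNearestInt_mul_sub_lt_iff hq]

end Khintchine

theorem stmt17 (ψ : ℕ → ℝ) (hψ0 : ∀ q, 0 ≤ ψ q)
    (hψdec : ∀ q r : ℕ, 1 ≤ q → q ≤ r → ψ r ≤ ψ q)
    (hdiv : ¬ Summable ψ)
    (γ : ℕ → ℝ) (γ₀ : ℝ) (C : ℝ) (hC : 0 < C)
    (hγ : ∀ q : ℕ, 1 ≤ q → |γ q - γ₀| ≤ C * ψ q) :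
    volume (WSet ψ γ) = 1 := by
  have hψ : AntitoneOn ψ (Ici 1) := fun q hq r _ hqr => hψdec q r hq hqr
  have hW : WSet ψ γ =ᵐ[volume] Icc (0 : ℝ) 1 := by
    filter_upwards [ae_frequently_mem_thickening_shiftedFractions_of_abs_sub_le
      hψ0 hψ hdiv hC hγ] with α hα
    exact propext (mem_WSet_iff_frequently.trans (and_iff_left hα))
  rw [measure_congr hW, Real.volume_Icc, sub_zero, ENNReal.ofReal_one]
end
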